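/- Let ψ be the (σ,λ)-GFF on V_N. Let β > 0 and ρ ∈ (0,λ_1). For every s ∈ ℕ and every family of functions h : V_N^s → ℝ with sup_N ‖h‖_∞ < ∞, writing v = (v^1,...,v^s), one has lim_{N→∞} |E𝒢_{β,N}^{×s}[h(v)] − E𝒢_{β,N,ρ}^{×s}[h(v)]| = 0, where 𝒢_{β,N,ρ} is the Gibbs measure restricted to A_{N,ρ}. -/

import Mathlib

open Filter
open scoped Classical

noncomputable section GFFCommon

/-- Vertices of `ℤ²`. -/
abbrev Vtx : Type := ℤ × ℤ

/-- Sample space: a real-valued field indexed by the vertices of `ℤ²`. -/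
abbrev FieldSp : Type := Vtx → ℝ

/-- The box `V_N = {0,1,…,N}²`. -/
def VN (N : ℕ) : Finset Vtx := Finset.Icc (0, 0) ((N : ℤ), (N : ℤ))

/-- The boundary `∂B` of a finite box `B ⊆ ℤ²`:
vertices of `B` having a (Euclidean distance 1) neighbour outside `B`. -/
def bdry (B : Finset Vtx) : Finset Vtx :=
  B.filter fun v =>
    ¬((v.1 + 1, v.2) ∈ B ∧ (v.1 - 1, v.2) ∈ B ∧ (v.1, v.2 + 1) ∈ B ∧ (v.1, v.2 - 1) ∈ B)

/-- The interior `B° = B ∖ ∂B`. -/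
def intr (B : Finset Vtx) : Finset Vtx := B \ bdry B

/-- The neighbourhood `[v]_λ` of `v` in `V_N`. -/
def nbhd (N : ℕ) (lam : ℝ) (v : Vtx) : Finset Vtx :=
  if lam = 0 then VN N
  else if lam = 1 then {v}
  else (VN N).filter fun w =>
    |(w.1 : ℝ) - (v.1 : ℝ)| ≤ (N : ℝ) ^ ((1 : ℝ) - lam) / 2 ∧
    |(w.2 : ℝ) - (v.2 : ℝ)| ≤ (N : ℝ) ^ ((1 : ℝ) - lam) / 2

/-- The σ-algebra `F_{∂[v]_λ ∪ [v]_λ^c}`, generated by the field variables on the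
boundary of `[v]_λ` and those outside of it. -/
def scaleAlg (N : ℕ) (lam : ℝ) (v : Vtx) : MeasurableSpace FieldSp :=
  ⨆ w ∈ {w : Vtx | w ∈ VN N ∧ w ∉ intr (nbhd N lam v)},
    MeasurableSpace.comap (fun ω : FieldSp => ω w) inferInstance

/-- `G` is the Green function of simple random walk killed on `∂B`, normalized by `π/2`:
it vanishes unless both arguments are in `B°`, and in `B°` it satisfies the
first-step (discrete Poisson equation) characterization
`G(x,y) = (1/4)·Σ_{x'∼x} G(x',y) + (π/2)·1_{x=y}`. -/
def IsGreenFn (B : Finset Vtx) (G : Vtx → Vtx → ℝ) : Prop :=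
  (∀ x y : Vtx, x ∉ intr B ∨ y ∉ intr B → G x y = 0) ∧
  ∀ y ∈ intr B, ∀ x ∈ intr B,
    G x y = (G (x.1 + 1, x.2) y + G (x.1 - 1, x.2) y
        + G (x.1, x.2 + 1) y + G (x.1, x.2 - 1) y) / 4
      + (Real.pi / 2) * (if x = y then 1 else 0)

/-- `P` is the law (on the canonical space `FieldSp`) of the Gaussian free field on `V_N`:
a centered Gaussian field with covariance the Green function `G_{V_N}`. -/
def IsGFF (N : ℕ) (P : MeasureTheory.Measure FieldSp) : Prop :=
  MeasureTheory.IsProbabilityMeasure P ∧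
  ∃ G : Vtx → Vtx → ℝ, IsGreenFn (VN N) G ∧
    ∀ c : Vtx → ℝ,
      P.map (fun ω => ∑ v ∈ VN N, c v * ω v) =
        ProbabilityTheory.gaussianReal 0 (Real.toNNReal (∑ v ∈ VN N, ∑ w ∈ VN N, c v * c w * G v w))

open MeasureTheory in
/-- `φ_v(λ) = E[φ_v | F_{∂[v]_λ ∪ [v]_λ^c}]`. -/
def phiScale (N : ℕ) (P : MeasureTheory.Measure FieldSp) (v : Vtx) (lam : ℝ) : FieldSp → ℝ :=
  P[fun ω : FieldSp => ω v | scaleAlg N lam v]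

/-- Admissible parameters `(σ,λ)`: `σ_1,…,σ_M > 0` and `0 = λ_0 < λ_1 < … < λ_M = 1`. -/
def ScaleParams (M : ℕ) (sigv lamv : ℕ → ℝ) : Prop :=
  1 ≤ M ∧ (∀ i ∈ Finset.Icc 1 M, 0 < sigv i) ∧
  lamv 0 = 0 ∧ lamv M = 1 ∧ ∀ i, i < M → lamv i < lamv (i + 1)

/-- The `(σ,λ)`-GFF: `ψ_v = Σ_{i=1}^M σ_i (φ_v(λ_i) − φ_v(λ_{i−1}))`. -/
def psiFld (N M : ℕ) (sigv lamv : ℕ → ℝ) (P : MeasureTheory.Measure FieldSp) (v : Vtx) : FieldSp → ℝ :=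
  fun ω => ∑ i ∈ Finset.Icc 1 M, sigv i * (phiScale N P v (lamv i) ω - phiScale N P v (lamv (i - 1)) ω)

open MeasureTheory in
/-- `ψ_v(λ) = E[ψ_v | F_{∂[v]_λ ∪ [v]_λ^c}]`. -/
def psiScale (N M : ℕ) (sigv lamv : ℕ → ℝ) (P : MeasureTheory.Measure FieldSp) (v : Vtx) (lam : ℝ) :
    FieldSp → ℝ :=
  P[psiFld N M sigv lamv P v | scaleAlg N lam v]

/-- The increment `ψ_v(λ,λ') = ψ_v(λ') − ψ_v(λ)`. -/
def psiInc (N M : ℕ) (sigv lamv : ℕ → ℝ) (P : MeasureTheory.Measure FieldSp) (v : Vtx) (lam lam' : ℝ) :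
    FieldSp → ℝ :=
  fun ω => psiScale N M sigv lamv P v lam' ω - psiScale N M sigv lamv P v lam ω

/-- The step function `σ(s) = σ_1 1_{{0}}(s) + Σ_{i=1}^M σ_i 1_{(λ_{i−1},λ_i]}(s)`. -/
def stepFn (M : ℕ) (sigv lamv : ℕ → ℝ) (s : ℝ) : ℝ :=
  (if s = 0 then sigv 1 else 0) +
  ∑ i ∈ Finset.Icc 1 M, if lamv (i - 1) < s ∧ s ≤ lamv i then sigv i else 0

/-- `𝒥_f(s) = ∫_0^s f(r) dr`. -/
def Jint (f : ℝ → ℝ) (s : ℝ) : ℝ := ∫ r in (0:ℝ)..s, f r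

/-- `𝒥_f(s₁,s₂) = ∫_{s₁}^{s₂} f(r) dr`. -/
def Jint2 (f : ℝ → ℝ) (s₁ s₂ : ℝ) : ℝ := ∫ r in s₁..s₂, f r

/-- The speed function `𝒥_{σ²}`. -/
def Jsig2 (M : ℕ) (sigv lamv : ℕ → ℝ) (s : ℝ) : ℝ := Jint (fun r => (stepFn M sigv lamv r) ^ 2) s

/-- The normalized speed function `𝒥̄_{σ²} = 𝒥_{σ²}/𝒥_{σ²}(1)`. -/
def JsigBar (M : ℕ) (sigv lamv : ℕ → ℝ) (s : ℝ) : ℝ := Jsig2 M sigv lamv s / Jsig2 M sigv lamv 1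

/-- The concave hull on `[0,1]` of a function `f`, i.e. the pointwise infimum over all
concave functions dominating `f` on `[0,1]`. -/
def concaveHull (f : ℝ → ℝ) (s : ℝ) : ℝ :=
  sInf {y | ∃ g : ℝ → ℝ, ConcaveOn ℝ (Set.Icc (0:ℝ) 1) g ∧
    (∀ t ∈ Set.Icc (0:ℝ) 1, f t ≤ g t) ∧ y = g s}

/-- The effective parameters: jump scales `0 = λ⁰ < … < λ^m = 1`, values
`σ̄_1 > … > σ̄_m > 0`, and the left-continuous non-increasing step function `σ̄`
such that `∫_0^s σ̄²` is the concavification of `𝒥_{σ²}`. -/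
def EffParams (M : ℕ) (sigv lamv : ℕ → ℝ) (m : ℕ) (sigb lamb : ℕ → ℝ) (sigbar : ℝ → ℝ) : Prop :=
  1 ≤ m ∧ m ≤ M ∧ lamb 0 = 0 ∧ lamb m = 1 ∧ (∀ j, j < m → lamb j < lamb (j + 1)) ∧
  (∀ l, 1 ≤ l → l < m → sigb (l + 1) < sigb l) ∧ (∀ l ∈ Finset.Icc 1 m, 0 < sigb l) ∧
  sigbar 0 = sigb 1 ∧
  (∀ l ∈ Finset.Icc 1 m, ∀ s : ℝ, lamb (l - 1) < s → s ≤ lamb l → sigbar s = sigb l) ∧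
  (∀ s : ℝ, 0 < s → s ≤ 1 →
    concaveHull (Jsig2 M sigv lamv) s = ∫ r in (0:ℝ)..s, (sigbar r) ^ 2)

/-- `γ* = 𝒥_{σ²/σ̄}(1)`. -/
def gammaStar (M : ℕ) (sigv lamv : ℕ → ℝ) (sigbar : ℝ → ℝ) : ℝ :=
  ∫ s in (0:ℝ)..1, (stepFn M sigv lamv s) ^ 2 / sigbar s

/-- The critical levels `γ^l = ∫_0^1 σ²(s)/σ̄(s ∧ λ^l) ds`, `γ⁰ = 0`. -/
def gammaL (M : ℕ) (sigv lamv : ℕ → ℝ) (lamb : ℕ → ℝ) (sigbar : ℝ → ℝ) (l : ℕ) : ℝ :=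
  if l = 0 then 0 else ∫ s in (0:ℝ)..1, (stepFn M sigv lamv s) ^ 2 / sigbar (min s (lamb l))

/-- `EntE` is the entropy function `𝓔` of the model. -/
def IsEntropy (M : ℕ) (sigv lamv : ℕ → ℝ) (m : ℕ) (lamb : ℕ → ℝ) (sigbar : ℝ → ℝ)
    (EntE : ℝ → ℝ) : Prop :=
  EntE 0 = 1 ∧
  ∀ l ∈ Finset.Icc 1 m, ∀ γ : ℝ,
    gammaL M sigv lamv lamb sigbar (l - 1) < γ → γ ≤ gammaL M sigv lamv lamb sigbar l →
      EntE γ = (1 - lamb (l - 1)) -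
        (γ - ∫ s in (0:ℝ)..(lamb (l - 1)), (stepFn M sigv lamv s) ^ 2 / sigbar s) ^ 2 /
          Jint2 (fun r => (stepFn M sigv lamv r) ^ 2) (lamb (l - 1)) 1

/-- The limiting free energy of the `REM(σ)` model. -/
def fREM (σ β : ℝ) : ℝ :=
  if (2 / σ) < β then 2 * (β / (2 / σ)) else 1 + (β / (2 / σ)) ^ 2

/-- The index `l_β`. -/
def lbeta (m : ℕ) (sigb : ℕ → ℝ) (β : ℝ) : ℕ :=
  if β ≤ 2 / sigb m then sInf {l : ℕ | 1 ≤ l ∧ β ≤ 2 / sigb l} else m + 1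

/-- The limiting free energy `f^ψ(β)`, written with the `l_β` split. -/
def fpsiLim (m : ℕ) (sigb lamb : ℕ → ℝ) (β : ℝ) : ℝ :=
  (∑ j ∈ Finset.Icc 1 (lbeta m sigb β - 1), (2 * β / (2 / sigb j)) * (lamb j - lamb (j - 1))) +
  ∑ j ∈ Finset.Icc (lbeta m sigb β) m, (1 + β ^ 2 / (2 / sigb j) ^ 2) * (lamb j - lamb (j - 1))

/-- The set `ℬ` of non-critical inverse temperatures. -/
def critSet (m : ℕ) (sigb : ℕ → ℝ) : Set ℝ :=
  {β | 0 < β ∧ ∀ j ∈ Finset.Icc 1 m, β ≠ 2 / sigb j}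

/-- The partition function `Z_N^ψ(β)`. -/
def ZN (N M : ℕ) (sigv lamv : ℕ → ℝ) (P : MeasureTheory.Measure FieldSp) (β : ℝ) (ω : FieldSp) : ℝ :=
  ∑ v ∈ VN N, Real.exp (β * psiFld N M sigv lamv P v ω)

/-- The free energy `f_N^ψ(β)` on `V_N`. -/
def freeEnergy (N M : ℕ) (sigv lamv : ℕ → ℝ) (P : MeasureTheory.Measure FieldSp) (β : ℝ) (ω : FieldSp) : ℝ :=
  (Real.log ((N : ℝ) ^ 2))⁻¹ * Real.log (ZN N M sigv lamv P β ω)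

/-- The set `A_{N,ρ}` of points at distance at least `N^{1−ρ}` from `ℤ² ∖ V_N`. -/
def AN (N : ℕ) (ρ : ℝ) : Finset Vtx :=
  (VN N).filter fun v => ∀ z : Vtx, z ∉ VN N →
    (N : ℝ) ^ ((1 : ℝ) - ρ) ≤ Real.sqrt (((v.1 : ℝ) - (z.1 : ℝ)) ^ 2 + ((v.2 : ℝ) - (z.2 : ℝ)) ^ 2)

/-- The restricted partition function `Z_{N,ρ}^ψ(β)`. -/
def ZNres (N M : ℕ) (sigv lamv : ℕ → ℝ) (P : MeasureTheory.Measure FieldSp) (β ρ : ℝ) (ω : FieldSp) : ℝ :=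
  ∑ v ∈ AN N ρ, Real.exp (β * psiFld N M sigv lamv P v ω)

/-- The free energy `f_{N,ρ}^ψ(β)` on `A_{N,ρ}`. -/
def freeEnergyRes (N M : ℕ) (sigv lamv : ℕ → ℝ) (P : MeasureTheory.Measure FieldSp) (β ρ : ℝ)
    (ω : FieldSp) : ℝ :=
  (Real.log ((N : ℝ) ^ 2))⁻¹ * Real.log (ZNres N M sigv lamv P β ρ ω)

/-- The Gibbs weight `𝒢_{β,N}({v})`. -/
def gibbsW (N M : ℕ) (sigv lamv : ℕ → ℝ) (P : MeasureTheory.Measure FieldSp) (β : ℝ) (v : Vtx)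
    (ω : FieldSp) : ℝ :=
  Real.exp (β * psiFld N M sigv lamv P v ω) / ZN N M sigv lamv P β ω

/-- The restricted Gibbs weight `𝒢_{β,N,ρ}({v})`. -/
def gibbsWres (N M : ℕ) (sigv lamv : ℕ → ℝ) (P : MeasureTheory.Measure FieldSp) (β ρ : ℝ) (v : Vtx)
    (ω : FieldSp) : ℝ :=
  Real.exp (β * psiFld N M sigv lamv P v ω) / ZNres N M sigv lamv P β ρ ω

/-- `E𝒢_{β,N}^{×s}[F]`: the mean over the disorder of the `s`-fold Gibbs average of `F`. -/
def gibbsExp (N M : ℕ) (sigv lamv : ℕ → ℝ) (P : MeasureTheory.Measure FieldSp) (β : ℝ) (s : ℕ)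
    (F : (Fin s → Vtx) → ℝ) : ℝ :=
  ∫ ω, (∑ vv ∈ Fintype.piFinset (fun _ : Fin s => VN N),
    (∏ i, gibbsW N M sigv lamv P β (vv i) ω) * F vv) ∂P

/-- `E𝒢_{β,N,ρ}^{×s}[F]`, with an `ω`-dependent integrand allowed. -/
def gibbsExpRes (N M : ℕ) (sigv lamv : ℕ → ℝ) (P : MeasureTheory.Measure FieldSp) (β ρ : ℝ) (s : ℕ)
    (F : (Fin s → Vtx) → FieldSp → ℝ) : ℝ :=
  ∫ ω, (∑ vv ∈ Fintype.piFinset (fun _ : Fin s => AN N ρ),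
    (∏ i, gibbsWres N M sigv lamv P β ρ (vv i) ω) * F vv ω) ∂P

/-- `E𝒢_{β,N}^{×s}[F]`, with an `ω`-dependent integrand allowed. -/
def gibbsExpW (N M : ℕ) (sigv lamv : ℕ → ℝ) (P : MeasureTheory.Measure FieldSp) (β : ℝ) (s : ℕ)
    (F : (Fin s → Vtx) → FieldSp → ℝ) : ℝ :=
  ∫ ω, (∑ vv ∈ Fintype.piFinset (fun _ : Fin s => VN N),
    (∏ i, gibbsW N M sigv lamv P β (vv i) ω) * F vv ω) ∂P

/-- The covariance `E[ψ_v ψ_{v'}]`. -/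
def psiCov (N M : ℕ) (sigv lamv : ℕ → ℝ) (P : MeasureTheory.Measure FieldSp) (v v' : Vtx) : ℝ :=
  ∫ ω, psiFld N M sigv lamv P v ω * psiFld N M sigv lamv P v' ω ∂P

/-- `C₀` is a constant witnessing the uniform variance upper bound
`max_{v∈V_N} E[ψ_v²] ≤ 𝒥_{σ²}(1) log N + C₀` for `N` large. -/
def IsVarBound (M : ℕ) (sigv lamv : ℕ → ℝ) (P : ℕ → MeasureTheory.Measure FieldSp) (C₀ : ℝ) : Prop :=
  0 < C₀ ∧ ∃ N₀ : ℕ, ∀ N ≥ N₀, ∀ v ∈ VN N,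
    psiCov N M sigv lamv (P N) v v ≤ Jsig2 M sigv lamv 1 * Real.log N + C₀

/-- The overlap `q^N(v,v')`. -/
def overlapQ (N M : ℕ) (sigv lamv : ℕ → ℝ) (P : MeasureTheory.Measure FieldSp) (C₀ : ℝ) (v v' : Vtx) : ℝ :=
  psiCov N M sigv lamv P v v' / (Jsig2 M sigv lamv 1 * Real.log N + C₀)

/-- Convergence in probability to a constant, for a sequence of random variables on a
sequence of probability spaces. -/
def TendstoInProb (P : ℕ → MeasureTheory.Measure FieldSp) (X : ℕ → FieldSp → ℝ) (c : ℝ) : Prop :=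
  ∀ ε : ℝ, 0 < ε → Tendsto (fun N => P N {ω | ε < |X N ω - c|}) atTop (nhds 0)

/-- Convergence in `L^p` to a constant. -/
def TendstoLp (P : ℕ → MeasureTheory.Measure FieldSp) (X : ℕ → FieldSp → ℝ) (p c : ℝ) : Prop :=
  Tendsto (fun N => ∫ ω, |X N ω - c| ^ p ∂(P N)) atTop (nhds 0)

/-- The branching scale `b_N(v,v')`. -/
def bScale (N : ℕ) (v v' : Vtx) : ℝ :=
  sSup {lam : ℝ | lam ∈ Set.Icc (0:ℝ) 1 ∧ ((nbhd N lam v) ∩ (nbhd N lam v')).Nonempty}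

end GFFCommon


noncomputable section PotTheory

/-- discrete Laplacian `I - P`. -/
def lap (f : Vtx → ℝ) (x : Vtx) : ℝ :=
  f x - (f (x.1 + 1, x.2) + f (x.1 - 1, x.2) + f (x.1, x.2 + 1) + f (x.1, x.2 - 1)) / 4

/-- nearest neighbours -/
def nb (x y : Vtx) : Prop :=
  y = (x.1 + 1, x.2) ∨ y = (x.1 - 1, x.2) ∨ y = (x.1, x.2 + 1) ∨ y = (x.1, x.2 - 1)

lemma maxp (S : Finset Vtx) (f : Vtx → ℝ) (c : ℝ) (hl : ∀ x ∈ S, lap f x ≤ 0)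
    (hb : ∀ x ∈ S, ∀ y, nb x y → y ∉ S → f y ≤ c) : ∀ x ∈ S, f x ≤ c := by
  intro x hx
  by_contra hcx
  push Not at hcx
  obtain ⟨a, haS, ha⟩ := S.exists_max_image f ⟨x, hx⟩
  have hS' : (S.filter (fun z => f z = f a)).Nonempty := ⟨a, by simp [haS]⟩
  obtain ⟨b, hb', hbm⟩ := (S.filter (fun z => f z = f a)).exists_max_image (fun z => z.1) hS'
  rw [Finset.mem_filter] at hb'
  obtain ⟨hbS, hfb⟩ := hb'
  have hca : c < f a := lt_of_lt_of_le hcx (ha x hx)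
  have hle : ∀ y, nb b y → f y ≤ f a := by
    intro y hy
    by_cases hyS : y ∈ S
    · exact ha y hyS
    · exact (hb b hbS y hy hyS).trans hca.le
  have h1 : f (b.1 + 1, b.2) < f a := by
    by_cases hyS : ((b.1 + 1, b.2) : Vtx) ∈ S
    · refine lt_of_le_of_ne (ha _ hyS) ?_
      intro he
      have := hbm (b.1 + 1, b.2) (by simp [hyS, he])
      simp at this
    · exact lt_of_le_of_lt (hb b hbS _ (Or.inl rfl) hyS) hca
  have h2 := hle (b.1 - 1, b.2) (Or.inr (Or.inl rfl))
  have h3 := hle (b.1, b.2 + 1) (Or.inr (Or.inr (Or.inl rfl)))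
  have h4 := hle (b.1, b.2 - 1) (Or.inr (Or.inr (Or.inr rfl)))
  have h5 := hl b hbS
  unfold lap at h5
  rw [hfb] at h5
  linarith

lemma lap_sub (f g : Vtx → ℝ) (x : Vtx) : lap (fun z => f z - g z) x = lap f x - lap g x := by
  unfold lap; ring

lemma lap_zero_unique (S : Finset Vtx) (f : Vtx → ℝ) (hl : ∀ x ∈ S, lap f x = 0)
    (h0 : ∀ x, x ∉ S → f x = 0) : ∀ x, f x = 0 := by
  intro x
  by_cases hx : x ∈ S
  · have h1 := maxp S f 0 (fun x hx => (hl x hx).le) (fun _ _ y _ hy => (h0 y hy).le) x hx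
    have h2 := maxp S (fun z => 0 - f z) 0
      (fun x hx => by
        have := hl x hx
        unfold lap at this ⊢
        linarith) (fun _ _ y _ hy => by simp [h0 y hy]) x hx
    linarith
  · exact h0 x hx

/-- extension by zero -/
def ext0 (S : Finset Vtx) (f : S → ℝ) (x : Vtx) : ℝ := if h : x ∈ S then f ⟨x, h⟩ else 0

def lapLin (S : Finset Vtx) : (S → ℝ) →ₗ[ℝ] (S → ℝ) where
  toFun f := fun x => lap (ext0 S f) x
  map_add' f g := by
    funext x
    have : ∀ z, ext0 S (f + g) z = ext0 S f z + ext0 S g z := by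
      intro z; unfold ext0; split_ifs <;> simp
    simp only [lap, this, Pi.add_apply]; ring
  map_smul' c f := by
    funext x
    have : ∀ z, ext0 S (c • f) z = c * ext0 S f z := by
      intro z; unfold ext0; split_ifs <;> simp
    simp only [lap, this, Pi.smul_apply, smul_eq_mul, RingHom.id_apply]; ring

lemma lapLin_surj (S : Finset Vtx) : Function.Surjective (lapLin S) := by
  rw [← LinearMap.injective_iff_surjective, ← LinearMap.ker_eq_bot, LinearMap.ker_eq_bot']
  intro f hf
  have h := lap_zero_unique S (ext0 S f)
    (fun x hx => by have := congrFun hf ⟨x, hx⟩; simpa [lapLin] using this)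
    (fun x hx => by simp [ext0, hx])
  funext x
  have := h x
  simpa [ext0] using this

lemma exists_gr (S : Finset Vtx) : ∃ G : Vtx → Vtx → ℝ,
    (∀ x y : Vtx, x ∉ S ∨ y ∉ S → G x y = 0) ∧
    ∀ y ∈ S, ∀ x ∈ S, lap (fun z => G z y) x = if x = y then Real.pi / 2 else 0 := by
  choose g hg using lapLin_surj S
  refine ⟨fun x y => if y ∈ S then ext0 S (g (fun z => if (z : Vtx) = y then Real.pi / 2 else 0)) x
    else 0, ?_, ?_⟩
  · rintro x y (h | h) <;> simp [ext0, h]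
  · intro y hy x hx
    simp only [hy, if_true]
    have := congrFun (hg (fun z => if (z : Vtx) = y then Real.pi / 2 else 0)) ⟨x, hx⟩
    simpa [lapLin] using this

/-- Green function with interior set `S`. -/
def gr (S : Finset Vtx) : Vtx → Vtx → ℝ := (exists_gr S).choose

lemma gr_zero_l (S : Finset Vtx) {x : Vtx} (y : Vtx) (h : x ∉ S) : gr S x y = 0 :=
  (exists_gr S).choose_spec.1 x y (Or.inl h)
lemma gr_zero_r (S : Finset Vtx) (x : Vtx) {y : Vtx} (h : y ∉ S) : gr S x y = 0 :=
  (exists_gr S).choose_spec.1 x y (Or.inr h)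
lemma gr_lap (S : Finset Vtx) {x y : Vtx} (hy : y ∈ S) (hx : x ∈ S) :
    lap (fun z => gr S z y) x = if x = y then Real.pi / 2 else 0 :=
  (exists_gr S).choose_spec.2 y hy x hx

lemma gr_unique (S : Finset Vtx) (G : Vtx → Vtx → ℝ)
    (h0 : ∀ x y : Vtx, x ∉ S ∨ y ∉ S → G x y = 0)
    (h1 : ∀ y ∈ S, ∀ x ∈ S, lap (fun z => G z y) x = if x = y then Real.pi / 2 else 0) :
    G = gr S := by
  funext x y
  by_cases hy : y ∈ S
  · have := lap_zero_unique S (fun z => G z y - gr S z y)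
      (fun x hx => by rw [lap_sub, h1 y hy x hx, gr_lap S hy hx, sub_self])
      (fun x hx => by simp [h0 x y (Or.inl hx), gr_zero_l S y hx]) x
    linarith
  · rw [h0 x y (Or.inr hy), gr_zero_r S x hy]

/-- summation by parts -/
lemma sum_shift (S W : Finset Vtx) (f g : Vtx → ℝ) (h0 : ∀ x, x ∉ S → f x = 0) (a b : ℤ)
    (hW : ∀ x ∈ S, ((x.1 - a, x.2 - b) : Vtx) ∈ W) :
    ∑ w ∈ W, f (w.1 + a, w.2 + b) * g w = ∑ w ∈ S, f w * g (w.1 - a, w.2 - b) := by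
  have h1 : ∑ w ∈ S, f w * g (w.1 - a, w.2 - b)
      = ∑ w ∈ S.image (fun x : Vtx => ((x.1 - a, x.2 - b) : Vtx)),
        f (w.1 + a, w.2 + b) * g w := by
    rw [Finset.sum_image]
    · simp
    · rintro ⟨x1, x2⟩ _ ⟨y1, y2⟩ _ h
      simp at h
      ext <;> simp [h]
  rw [h1]
  symm
  apply Finset.sum_subset
  · intro w hw
    rw [Finset.mem_image] at hw
    obtain ⟨x, hx, rfl⟩ := hw
    exact hW x hx
  · intro w _ hw
    rw [h0, zero_mul]
    intro hc
    exact hw (Finset.mem_image.2 ⟨_, hc, by simp⟩)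

lemma lap_adj (S W : Finset Vtx) (f g : Vtx → ℝ) (h0 : ∀ x, x ∉ S → f x = 0)
    (hSW : S ⊆ W) (hW : ∀ x ∈ S, ∀ y, nb x y → y ∈ W) :
    ∑ w ∈ W, lap f w * g w = ∑ w ∈ S, f w * lap g w := by
  have e1 := sum_shift S W f g h0 1 0 (fun x hx => hW x hx _ (by right; left; simp))
  have e2 := sum_shift S W f g h0 (-1) 0 (fun x hx => hW x hx _ (by left; simp))
  have e3 := sum_shift S W f g h0 0 1 (fun x hx => hW x hx _ (by right; right; right; simp))
  have e4 := sum_shift S W f g h0 0 (-1) (fun x hx => hW x hx _ (by right; right; left; simp))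
  have e0 : ∑ w ∈ W, f w * g w = ∑ w ∈ S, f w * g w :=
    (Finset.sum_subset hSW (fun x _ hx => by simp [h0 x hx])).symm
  simp only [add_zero, sub_zero, sub_neg_eq_add, ← sub_eq_add_neg] at e1 e2 e3 e4
  have l1 : ∑ w ∈ W, lap f w * g w = ∑ w ∈ W, f w * g w
      - (∑ w ∈ W, f (w.1 + 1, w.2) * g w + ∑ w ∈ W, f (w.1 - 1, w.2) * g w
        + ∑ w ∈ W, f (w.1, w.2 + 1) * g w + ∑ w ∈ W, f (w.1, w.2 - 1) * g w) / 4 := by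
    rw [← Finset.sum_add_distrib, ← Finset.sum_add_distrib, ← Finset.sum_add_distrib,
      Finset.sum_div, ← Finset.sum_sub_distrib]
    exact Finset.sum_congr rfl (fun w _ => by unfold lap; ring)
  have l2 : ∑ w ∈ S, f w * lap g w = ∑ w ∈ S, f w * g w
      - (∑ w ∈ S, f w * g (w.1 - 1, w.2) + ∑ w ∈ S, f w * g (w.1 + 1, w.2)
        + ∑ w ∈ S, f w * g (w.1, w.2 - 1) + ∑ w ∈ S, f w * g (w.1, w.2 + 1)) / 4 := by
    rw [← Finset.sum_add_distrib, ← Finset.sum_add_distrib, ← Finset.sum_add_distrib,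
      Finset.sum_div, ← Finset.sum_sub_distrib]
    exact Finset.sum_congr rfl (fun w _ => by unfold lap; ring)
  rw [l1, l2, e0, e1, e2, e3, e4]

/-- neighbourhood closure of a finite set -/
def cl (S : Finset Vtx) : Finset Vtx :=
  S ∪ S.image (fun x => (x.1 + 1, x.2)) ∪ S.image (fun x => (x.1 - 1, x.2))
    ∪ S.image (fun x => (x.1, x.2 + 1)) ∪ S.image (fun x => (x.1, x.2 - 1))

lemma mem_cl_self (S : Finset Vtx) : S ⊆ cl S := by
  intro x hx; simp only [cl, Finset.mem_union]; tauto

lemma mem_cl_nb (S : Finset Vtx) {x y : Vtx} (hx : x ∈ S) (h : nb x y) : y ∈ cl S := by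
  simp only [cl, Finset.mem_union, Finset.mem_image]
  rcases h with h | h | h | h
  · exact Or.inl (Or.inl (Or.inl (Or.inr ⟨x, hx, h.symm⟩)))
  · exact Or.inl (Or.inl (Or.inr ⟨x, hx, h.symm⟩))
  · exact Or.inl (Or.inr ⟨x, hx, h.symm⟩)
  · exact Or.inr ⟨x, hx, h.symm⟩

lemma lap_selfadj (S : Finset Vtx) (f g : Vtx → ℝ) (hf : ∀ x, x ∉ S → f x = 0)
    (hg : ∀ x, x ∉ S → g x = 0) :
    ∑ w ∈ S, lap f w * g w = ∑ w ∈ S, f w * lap g w := by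
  rw [← lap_adj S (cl S) f g hf (mem_cl_self S) (fun x hx y h => mem_cl_nb S hx h)]
  exact Finset.sum_subset (mem_cl_self S) (fun x _ hx => by simp [hg x hx])

lemma gr_symm (S : Finset Vtx) (x y : Vtx) : gr S x y = gr S y x := by
  by_cases hx : x ∈ S
  swap
  · rw [gr_zero_l S y hx, gr_zero_r S y hx]
  by_cases hy : y ∈ S
  swap
  · rw [gr_zero_l S x hy, gr_zero_r S x hy]
  have h := lap_selfadj S (fun z => gr S z x) (fun z => gr S z y)
    (fun z hz => gr_zero_l S x hz) (fun z hz => gr_zero_l S y hz)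
  have e1 : ∑ w ∈ S, lap (fun z => gr S z x) w * gr S w y = Real.pi / 2 * gr S x y := by
    rw [Finset.sum_congr rfl (fun w hw => by rw [gr_lap S hx hw])]
    simp [hx]
  have e2 : ∑ w ∈ S, gr S w x * lap (fun z => gr S z y) w = gr S y x * (Real.pi / 2) := by
    rw [Finset.sum_congr rfl (fun w hw => by rw [gr_lap S hy hw])]
    simp [hy]
  rw [e1, e2] at h
  have := Real.pi_pos
  nlinarith

lemma gr_lap' (S : Finset Vtx) (v : Vtx) {w : Vtx} (hw : w ∈ S) :
    lap (gr S v) w = if w = v then Real.pi / 2 else 0 := by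
  by_cases hv : v ∈ S
  · rw [← gr_lap S hv hw]
    congr 1
    funext z
    exact gr_symm S v z
  · have h1 : gr S v = fun _ => 0 := funext fun z => gr_zero_l S z hv
    rw [h1, if_neg (by rintro rfl; exact hv hw)]
    simp [lap]

/-- translation -/
def tr (t : Vtx) (S : Finset Vtx) : Finset Vtx := S.image (fun x => ((x.1 + t.1, x.2 + t.2) : Vtx))

lemma mem_tr (t : Vtx) (S : Finset Vtx) (x : Vtx) :
    x ∈ tr t S ↔ ((x.1 - t.1, x.2 - t.2) : Vtx) ∈ S := by
  simp only [tr, Finset.mem_image]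
  constructor
  · rintro ⟨y, hy, rfl⟩; simpa using hy
  · intro h; exact ⟨_, h, by simp⟩

lemma gr_tr (t : Vtx) (S : Finset Vtx) (x y : Vtx) :
    gr (tr t S) (x.1 + t.1, x.2 + t.2) (y.1 + t.1, y.2 + t.2) = gr S x y := by
  have := gr_unique S (fun x y => gr (tr t S) (x.1 + t.1, x.2 + t.2) (y.1 + t.1, y.2 + t.2)) ?_ ?_
  · exact congrFun (congrFun this x) y
  · rintro x y (h | h)
    · exact gr_zero_l _ _ (by rw [mem_tr]; simpa using h)
    · exact gr_zero_r _ _ (by rw [mem_tr]; simpa using h)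
  · intro y hy x hx
    have h := gr_lap (tr t S) (x := (x.1 + t.1, x.2 + t.2)) (y := (y.1 + t.1, y.2 + t.2))
      (by rw [mem_tr]; simpa using hy) (by rw [mem_tr]; simpa using hx)
    have e : (((x.1 + t.1, x.2 + t.2) : Vtx) = (y.1 + t.1, y.2 + t.2)) ↔ x = y := by
      simp [Prod.ext_iff]
    simp only [e] at h
    rw [← h]
    unfold lap
    simp only
    ring_nf

end PotTheory


noncomputable section GreenEst

lemma four_log (a b c d : ℝ) (ha : 0 < a) (hb : 0 < b) (hc : 0 < c) (hd : 0 < d) :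
    Real.log a + Real.log b + Real.log c + Real.log d = Real.log ((a * b) * (c * d)) := by
  rw [Real.log_mul (by positivity) (by positivity), Real.log_mul ha.ne' hb.ne',
    Real.log_mul hc.ne' hd.ne']; ring

lemma logA (x y : ℝ) : 4 * Real.log (x^2+y^2+1/2) ≤ Real.log ((x+1)^2+y^2+1/2)
    + Real.log ((x-1)^2+y^2+1/2) + Real.log (x^2+(y+1)^2+1/2) + Real.log (x^2+(y-1)^2+1/2) := by
  rw [four_log _ _ _ _ (by positivity) (by positivity) (by positivity) (by positivity)]
  have : 4 * Real.log (x^2+y^2+1/2) = Real.log ((x^2+y^2+1/2)^4) := by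
    rw [Real.log_pow]; norm_num
  rw [this]
  apply Real.log_le_log (by positivity)
  nlinarith [sq_nonneg (x*y), sq_nonneg x, sq_nonneg y]

lemma logB (x y : ℝ) (h : 4 ≤ x^2+y^2) :
    (Real.log ((x+1)^2+y^2) - 1/((x+1)^2+y^2))
    + (Real.log ((x-1)^2+y^2) - 1/((x-1)^2+y^2)) + (Real.log (x^2+(y+1)^2) - 1/(x^2+(y+1)^2))
    + (Real.log (x^2+(y-1)^2) - 1/(x^2+(y-1)^2))
    ≤ 4 * (Real.log (x^2+y^2) - 1/(x^2+y^2)) := by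
  obtain ⟨n, hn⟩ : ∃ n, n = x^2+y^2 := ⟨_, rfl⟩
  rw [← hn] at h
  have e1 : (x+1)^2+y^2 = n+1+2*x := by rw [hn]; ring
  have e2 : (x-1)^2+y^2 = n+1-2*x := by rw [hn]; ring
  have e3 : x^2+(y+1)^2 = n+1+2*y := by rw [hn]; ring
  have e4 : x^2+(y-1)^2 = n+1-2*y := by rw [hn]; ring
  rw [e1, e2, e3, e4, ← hn]
  have hx2 : x^2 ≤ n := by nlinarith [sq_nonneg y]
  have hy2 : y^2 ≤ n := by nlinarith [sq_nonneg x]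
  have ax : |2*x| < n+1 := abs_lt_of_sq_lt_sq (by nlinarith) (by linarith)
  have ay : |2*y| < n+1 := abs_lt_of_sq_lt_sq (by nlinarith) (by linarith)
  rw [abs_lt] at ax ay
  have p1 : 0 < n+1+2*x := by linarith
  have p2 : 0 < n+1-2*x := by linarith
  have p3 : 0 < n+1+2*y := by linarith
  have p4 : 0 < n+1-2*y := by linarith
  have hL := four_log _ _ _ _ p1 p2 p3 p4
  have hn0 : 0 < n := by linarith
  have hL2 : Real.log ((n+1+2*x)*(n+1-2*x)*((n+1+2*y)*(n+1-2*y))) ≤ 4 * Real.log n + 2/n^2 := by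
    have h1 : (n+1+2*x)*(n+1-2*x)*((n+1+2*y)*(n+1-2*y)) ≤ (n^2+1)^2 := by
      have h2 : (n+1+2*x)*(n+1-2*x)*((n+1+2*y)*(n+1-2*y)) = (n+1)^4 - 4*(n+1)^2*n+16*(x^2*y^2) := by
        rw [hn]; ring
      have h3 : 4*(x^2*y^2) ≤ n^2 := by rw [hn]; nlinarith [sq_nonneg (x^2-y^2)]
      rw [h2]; nlinarith
    calc _ ≤ Real.log ((n^2+1)^2) := Real.log_le_log (by positivity) h1
      _ = 2 * Real.log (n^2 * (1+1/n^2)) := by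
        rw [Real.log_pow]; congr 2; field_simp
      _ = 2 * (2 * Real.log n + Real.log (1+1/n^2)) := by
        rw [Real.log_mul (by positivity) (by positivity), Real.log_pow]; norm_num
      _ ≤ _ := by
        have := Real.log_le_sub_one_of_pos (show 0 < 1+1/n^2 by positivity)
        have e : 2/n^2 = 2*(1/n^2) := by ring
        rw [e]; linarith
  have hI : 4 * ((n+1)/(n^2+1)) ≤ 1/(n+1+2*x)+1/(n+1-2*x)+1/(n+1+2*y)+1/(n+1-2*y) := by
    have q1 : 1/(n+1+2*x)+1/(n+1-2*x) = 2*(n+1)/((n+1)^2-4*x^2) := by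
      have : (n+1)^2-4*x^2 = (n+1+2*x)*(n+1-2*x) := by ring
      rw [this]; field_simp; ring
    have q2 : 1/(n+1+2*y)+1/(n+1-2*y) = 2*(n+1)/((n+1)^2-4*y^2) := by
      have : (n+1)^2-4*y^2 = (n+1+2*y)*(n+1-2*y) := by ring
      rw [this]; field_simp; ring
    have pa : 0 < (n+1)^2-4*x^2 := by nlinarith [mul_pos p1 p2]
    have pb : 0 < (n+1)^2-4*y^2 := by nlinarith [mul_pos p3 p4]
    have q3 : 2/(n^2+1) ≤ 1/((n+1)^2-4*x^2)+1/((n+1)^2-4*y^2) := by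
      have hs : n^2+1 = (((n+1)^2-4*x^2)+((n+1)^2-4*y^2))/2 := by rw [hn]; ring
      rw [hs]
      generalize (n+1)^2-4*x^2 = a at *
      generalize (n+1)^2-4*y^2 = b at *
      rw [div_add_div _ _ pa.ne' pb.ne', div_le_div_iff₀ (by linarith) (by positivity)]
      nlinarith [sq_nonneg (a-b)]
    have := mul_le_mul_of_nonneg_left q3 (show 0 ≤ 2*(n+1) by linarith)
    calc 4 * ((n+1)/(n^2+1)) = 2*(n+1)*(2/(n^2+1)) := by ring
      _ ≤ _ := this
      _ = (1/(n+1+2*x)+1/(n+1-2*x)) + (1/(n+1+2*y)+1/(n+1-2*y)) := by rw [q1, q2]; ring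
      _ = _ := by ring
  have hF : 2/n^2 ≤ 4*((n+1)/(n^2+1)) - 4*(1/n) := by
    have : 4*((n+1)/(n^2+1)) - 4*(1/n) = 4*(n-1)/(n*(n^2+1)) := by field_simp; ring
    rw [this, div_le_div_iff₀ (by positivity) (by positivity)]
    have : 0 ≤ n * (n^2-2*n-1) := mul_nonneg hn0.le (by nlinarith)
    nlinarith
  linarith

/-- squared distance -/
def dsq (x y : Vtx) : ℝ := ((x.1:ℝ)-y.1)^2+((x.2:ℝ)-y.2)^2

/-- comparison function -/
def usup (v vs x : Vtx) : ℝ :=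
  2 * (Real.log (dsq x vs) - 1/(dsq x vs) + 3/2 - Real.log (dsq x v + 1/2))

lemma lap_usup (v vs x : Vtx) (h : 4 ≤ dsq x vs) : 0 ≤ lap (usup v vs) x := by
  have hA := logA ((x.1:ℝ)-v.1) ((x.2:ℝ)-v.2)
  have hB := logB ((x.1:ℝ)-vs.1) ((x.2:ℝ)-vs.2) h
  unfold lap usup dsq
  push_cast
  have r1 : ∀ a b : ℤ, (a:ℝ)+1-b = (a:ℝ)-b+1 := fun a b => by ring
  have r2 : ∀ a b : ℤ, (a:ℝ)-1-b = (a:ℝ)-b-1 := fun a b => by ring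
  simp only [r1, r2]
  linarith

lemma lap_usup_v (v vs : Vtx) (h : 4 ≤ dsq v vs) : Real.pi/2 ≤ lap (usup v vs) v := by
  have hB := logB ((v.1:ℝ)-vs.1) ((v.2:ℝ)-vs.2) h
  have h3 : Real.log (3/2) - Real.log (1/2) = Real.log 3 := by
    rw [← Real.log_div (by norm_num) (by norm_num)]; norm_num
  have h3' : 1 ≤ Real.log 3 := by
    rw [Real.le_log_iff_exp_le (by norm_num)]
    exact (Real.exp_one_lt_d9.le).trans (by norm_num)
  have hpi := Real.pi_lt_four
  unfold lap usup dsq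
  push_cast
  have r1 : ∀ a b : ℤ, (a:ℝ)+1-b = (a:ℝ)-b+1 := fun a b => by ring
  have r2 : ∀ a b : ℤ, (a:ℝ)-1-b = (a:ℝ)-b-1 := fun a b => by ring
  simp only [r1, r2, sub_self]
  have e : ((0:ℝ)^2+0^2+1/2) = 1/2 := by norm_num
  have e1 : ((0+1:ℝ)^2+0^2+1/2) = 3/2 := by norm_num
  have e2 : ((0-1:ℝ)^2+0^2+1/2) = 3/2 := by norm_num
  have e3 : ((0:ℝ)^2+(0+1)^2+1/2) = 3/2 := by norm_num
  have e4 : ((0:ℝ)^2+(0-1)^2+1/2) = 3/2 := by norm_num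
  rw [e, e1, e2, e3, e4]
  linarith

lemma usup_nonneg (v vs x : Vtx) (h1 : 1 ≤ dsq x vs) (h : dsq x v ≤ dsq x vs) :
    0 ≤ usup v vs x := by
  unfold usup
  have h0 : 0 ≤ dsq x v := by unfold dsq; positivity
  have a1 : Real.log (dsq x v + 1/2) ≤ Real.log (dsq x vs) + 1/2 := by
    have : Real.log (dsq x v + 1/2) ≤ Real.log (dsq x vs * (3/2)) :=
      Real.log_le_log (by linarith) (by linarith)
    rw [Real.log_mul (by linarith) (by norm_num)] at this
    have := Real.log_le_sub_one_of_pos (show (0:ℝ) < 3/2 by norm_num)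
    linarith
  have a2 : 1/dsq x vs ≤ 1 := by rw [div_le_one (by linarith)]; exact h1
  linarith

lemma gr_le_usup (S : Finset Vtx) (v vs : Vtx) (hv : v ∈ S) (h4 : ∀ x ∈ S, 4 ≤ dsq x vs)
    (hn : ∀ x ∈ S, ∀ y, nb x y → 1 ≤ dsq y vs ∧ dsq y v ≤ dsq y vs) :
    ∀ x ∈ S, gr S x v ≤ usup v vs x := by
  intro x hx
  have := maxp S (fun z => gr S z v - usup v vs z) 0 ?_ ?_ x hx
  · linarith
  · intro x hx
    rw [lap_sub, gr_lap S hv hx]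
    split_ifs with hxv
    · subst hxv; linarith [lap_usup_v x vs (h4 x hx)]
    · linarith [lap_usup v vs x (h4 x hx)]
  · intro x hx y hy hyS
    rw [gr_zero_l S v hyS]
    have := hn x hx y hy
    linarith [usup_nonneg v vs y this.1 this.2]

/-- interior of the box -/
def DN (N : ℕ) : Finset Vtx := intr (VN N)

lemma mem_VN (N : ℕ) (x : Vtx) : x ∈ VN N ↔ 0 ≤ x.1 ∧ x.1 ≤ N ∧ 0 ≤ x.2 ∧ x.2 ≤ N := by
  unfold VN
  rw [Finset.mem_Icc, Prod.le_def, Prod.le_def]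
  tauto

lemma mem_DN (N : ℕ) (x : Vtx) : x ∈ DN N ↔ 1 ≤ x.1 ∧ x.1 < N ∧ 1 ≤ x.2 ∧ x.2 < N := by
  unfold DN intr bdry
  simp only [Finset.mem_sdiff, Finset.mem_filter, mem_VN]
  omega

/-- depth -/
def dep (N : ℕ) (v : Vtx) : ℤ := min (min v.1 (N - v.1)) (min v.2 (N - v.2))

lemma DN_nb (N : ℕ) {x y : Vtx} (hx : x ∈ DN N) (h : nb x y) : y ∈ VN N := by
  rw [mem_DN] at hx
  rw [mem_VN]
  rcases h with rfl | rfl | rfl | rfl <;> simp only <;> omega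

lemma exists_refl (N : ℕ) (v : Vtx) (hv : v ∈ DN N) : ∃ vs : Vtx,
    (∀ x ∈ DN N, 4 ≤ dsq x vs) ∧ (∀ y ∈ VN N, 1 ≤ dsq y vs ∧ dsq y v ≤ dsq y vs) ∧
    dsq v vs = 4 * (dep N v : ℝ)^2 := by
  have hd : dep N v = v.1 ∨ dep N v = N - v.1 ∨ dep N v = v.2 ∨ dep N v = N - v.2 := by
    unfold dep; omega
  rw [mem_DN] at hv
  obtain ⟨h1, h2, h3, h4⟩ := hv
  have c1 : (1:ℝ) ≤ v.1 := by exact_mod_cast h1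
  have c2 : (v.1:ℝ) + 1 ≤ N := by exact_mod_cast h2
  have c3 : (1:ℝ) ≤ v.2 := by exact_mod_cast h3
  have c4 : (v.2:ℝ) + 1 ≤ N := by exact_mod_cast h4
  have key : ∀ vs : Vtx, (∀ x ∈ DN N, 4 ≤ dsq x vs) → (∀ y ∈ VN N, 1 ≤ dsq y vs ∧ dsq y v ≤ dsq y vs) →
    dsq v vs = 4 * (dep N v : ℝ)^2 → ∃ vs : Vtx,
    (∀ x ∈ DN N, 4 ≤ dsq x vs) ∧ (∀ y ∈ VN N, 1 ≤ dsq y vs ∧ dsq y v ≤ dsq y vs) ∧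
    dsq v vs = 4 * (dep N v : ℝ)^2 := fun vs a b c => ⟨vs, a, b, c⟩
  have cD : ∀ x ∈ DN N, (1:ℝ) ≤ x.1 ∧ (x.1:ℝ)+1 ≤ N ∧ (1:ℝ) ≤ x.2 ∧ (x.2:ℝ)+1 ≤ N := by
    intro x hx; rw [mem_DN] at hx
    obtain ⟨h1, h2, h3, h4⟩ := hx
    exact ⟨by exact_mod_cast h1, by exact_mod_cast h2, by exact_mod_cast h3, by exact_mod_cast h4⟩
  have cV : ∀ x ∈ VN N, (0:ℝ) ≤ x.1 ∧ (x.1:ℝ) ≤ N ∧ (0:ℝ) ≤ x.2 ∧ (x.2:ℝ) ≤ N := by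
    intro x hx; rw [mem_VN] at hx
    obtain ⟨h1, h2, h3, h4⟩ := hx
    exact ⟨by exact_mod_cast h1, by exact_mod_cast h2, by exact_mod_cast h3, by exact_mod_cast h4⟩
  rcases hd with hd | hd | hd | hd <;> rw [hd]
  · refine ⟨(-v.1, v.2), fun x hx => ?_, fun y hy => ⟨?_, ?_⟩, ?_⟩ <;> unfold dsq <;> push_cast
    · obtain ⟨a, b, c, d⟩ := cD x hx; nlinarith [sq_nonneg ((x.2:ℝ)-v.2)]
    · obtain ⟨a, b, c, d⟩ := cV y hy; nlinarith [sq_nonneg ((y.2:ℝ)-v.2)]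
    · obtain ⟨a, b, c, d⟩ := cV y hy; nlinarith
    · ring
  · refine ⟨(2*N-v.1, v.2), fun x hx => ?_, fun y hy => ⟨?_, ?_⟩, ?_⟩ <;> unfold dsq <;> push_cast
    · obtain ⟨a, b, c, d⟩ := cD x hx; nlinarith [sq_nonneg ((x.2:ℝ)-v.2)]
    · obtain ⟨a, b, c, d⟩ := cV y hy; nlinarith [sq_nonneg ((y.2:ℝ)-v.2)]
    · obtain ⟨a, b, c, d⟩ := cV y hy; nlinarith
    · ring
  · refine ⟨(v.1, -v.2), fun x hx => ?_, fun y hy => ⟨?_, ?_⟩, ?_⟩ <;> unfold dsq <;> push_cast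
    · obtain ⟨a, b, c, d⟩ := cD x hx; nlinarith [sq_nonneg ((x.1:ℝ)-v.1)]
    · obtain ⟨a, b, c, d⟩ := cV y hy; nlinarith [sq_nonneg ((y.1:ℝ)-v.1)]
    · obtain ⟨a, b, c, d⟩ := cV y hy; nlinarith
    · ring
  · refine ⟨(v.1, 2*N-v.2), fun x hx => ?_, fun y hy => ⟨?_, ?_⟩, ?_⟩ <;> unfold dsq <;> push_cast
    · obtain ⟨a, b, c, d⟩ := cD x hx; nlinarith [sq_nonneg ((x.1:ℝ)-v.1)]
    · obtain ⟨a, b, c, d⟩ := cV y hy; nlinarith [sq_nonneg ((y.1:ℝ)-v.1)]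
    · obtain ⟨a, b, c, d⟩ := cV y hy; nlinarith
    · ring

lemma gr_diag_le (N : ℕ) (hN : 1 ≤ N) (v : Vtx) : gr (DN N) v v ≤ 4 * Real.log N + 8 := by
  have hN' : (1:ℝ) ≤ N := by exact_mod_cast hN
  have hlog : 0 ≤ Real.log N := Real.log_nonneg hN'
  by_cases hv : v ∈ DN N
  swap
  · rw [gr_zero_l _ _ hv]; positivity
  obtain ⟨vs, h4, hV, hd⟩ := exists_refl N v hv
  refine (gr_le_usup (DN N) v vs hv h4 (fun x hx y h => hV y (DN_nb N hx h)) v hv).trans ?_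
  have e0 : dsq v v = 0 := by unfold dsq; ring
  have hp : 4 ≤ dsq v vs := h4 v hv
  have hdN : (0:ℝ) ≤ dep N v ∧ (dep N v:ℝ) ≤ N := by
    rw [mem_DN] at hv
    constructor
    · have : 0 ≤ dep N v := by unfold dep; omega
      exact_mod_cast this
    · have : dep N v ≤ N := by unfold dep; omega
      exact_mod_cast this
  unfold usup
  rw [e0]
  have : Real.log (dsq v vs) ≤ 2 * Real.log 2 + 2 * Real.log N := by
    have h1 : Real.log (dsq v vs) ≤ Real.log ((2*N)^2) := by
      apply Real.log_le_log (by linarith)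
      rw [hd]; nlinarith
    rw [Real.log_pow, Real.log_mul (by norm_num) (by linarith)] at h1
    push_cast at h1; linarith
  have h2 : Real.log (0+1/2) = - Real.log 2 := by
    rw [zero_add, one_div, Real.log_inv]
  have h3 : 0 < 1/dsq v vs := by positivity
  have := Real.log_two_lt_d9
  rw [h2]; linarith

lemma gr_far_le (N : ℕ) (v x : Vtx) (hv : v ∈ DN N) (hx : x ∈ DN N) (m : ℤ) (hm : 1 ≤ m)
    (hd : dep N v < 8 * m) (hxv : m ≤ |x.1 - v.1| ∨ m ≤ |x.2 - v.2|) : gr (DN N) x v ≤ 17 := by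
  obtain ⟨vs, h4, hV, hds⟩ := exists_refl N v hv
  refine (gr_le_usup (DN N) v vs hv h4 (fun x hx y h => hV y (DN_nb N hx h)) x hx).trans ?_
  have hm' : (1:ℝ) ≤ m := by exact_mod_cast hm
  have hn : (m:ℝ)^2 ≤ dsq x v := by
    unfold dsq
    rcases hxv with h | h
    · have : (m:ℝ) ≤ |(x.1:ℝ)-v.1| := by exact_mod_cast h
      have : (m:ℝ)^2 ≤ |(x.1:ℝ)-v.1|^2 := by gcongr
      rw [sq_abs] at this; nlinarith [sq_nonneg ((x.2:ℝ)-v.2)]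
    · have : (m:ℝ) ≤ |(x.2:ℝ)-v.2| := by exact_mod_cast h
      have : (m:ℝ)^2 ≤ |(x.2:ℝ)-v.2|^2 := by gcongr
      rw [sq_abs] at this; nlinarith [sq_nonneg ((x.1:ℝ)-v.1)]
  have hn0 : 0 < dsq x v := by nlinarith
  have hd0 : (0:ℝ) ≤ dep N v := by
    rw [mem_DN] at hv
    have : 0 ≤ dep N v := by unfold dep; omega
    exact_mod_cast this
  have hd1 : (dep N v:ℝ) ≤ 8*m := by exact_mod_cast hd.le
  have hds2 : dsq v vs ≤ 256 * m^2 := by rw [hds]; nlinarith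
  have htri : dsq x vs ≤ 2 * dsq x v + 2 * dsq v vs := by
    unfold dsq
    nlinarith [sq_nonneg ((x.1:ℝ)-v.1-(v.1-vs.1)), sq_nonneg ((x.2:ℝ)-v.2-(v.2-vs.2))]
  have hns : dsq x vs ≤ 514 * dsq x v := by linarith
  have hp := h4 x hx
  unfold usup
  have h1 : Real.log (dsq x vs) ≤ Real.log 514 + Real.log (dsq x v) := by
    rw [← Real.log_mul (by norm_num) hn0.ne']
    exact Real.log_le_log (by linarith) hns
  have h2 : Real.log (dsq x v) ≤ Real.log (dsq x v + 1/2) := Real.log_le_log hn0 (by linarith)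
  have h3 : Real.log 514 ≤ 7 := by
    have : Real.log 514 ≤ Real.log (2^10) := Real.log_le_log (by norm_num) (by norm_num)
    rw [Real.log_pow] at this
    have := Real.log_two_lt_d9
    push_cast at *; linarith
  have h5 : 0 < 1/dsq x vs := by positivity
  linarith

lemma gr_diff_le (N : ℕ) (v : Vtx) (m : ℤ) (hm : 1 ≤ m)
    (hd : dep N v < 8 * m) (T : Finset Vtx) (hT : T ⊆ DN N)
    (hfar : ∀ x ∈ DN N, x ∉ T → m ≤ |x.1 - v.1| ∨ m ≤ |x.2 - v.2|) :
    gr (DN N) v v - gr T v v ≤ 17 := by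
  by_cases hv : v ∈ DN N
  swap
  · rw [gr_zero_l _ _ hv, gr_zero_l _ _ (fun h => hv (hT h))]; norm_num
  have hvT : v ∈ T := by
    by_contra hc
    have := hfar v hv hc
    simp at this; omega
  refine maxp T (fun z => gr (DN N) z v - gr T z v) 17 ?_ ?_ v hvT
  · intro x hx
    rw [lap_sub, gr_lap _ hv (hT hx), gr_lap _ hvT hx, sub_self]
  · intro x hx y hy hyT
    rw [gr_zero_l T _ hyT, sub_zero]
    by_cases hyD : y ∈ DN N
    · exact gr_far_le N v y hv hyD m hm hd (hfar y hyD hyT)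
    · rw [gr_zero_l _ _ hyD]; norm_num

lemma gr_nonneg (S : Finset Vtx) (x y : Vtx) : 0 ≤ gr S x y := by
  by_cases hy : y ∈ S
  swap
  · rw [gr_zero_r _ _ hy]
  by_cases hx : x ∈ S
  swap
  · rw [gr_zero_l _ _ hx]
  have := maxp S (fun z => 0 - gr S z y) 0 ?_ ?_ x hx
  · linarith
  · intro x hx
    rw [lap_sub, gr_lap _ hy hx]
    have := Real.pi_pos
    have : lap (fun _ => (0:ℝ)) x = 0 := by simp [lap]
    rw [this]
    split_ifs <;> linarith
  · intro x hx z hz hzS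
    rw [gr_zero_l _ _ hzS]; norm_num

lemma gr_mono (S T : Finset Vtx) (h : S ⊆ T) (x y : Vtx) : gr S x y ≤ gr T x y := by
  by_cases hy : y ∈ S
  swap
  · rw [gr_zero_r _ _ hy]; exact gr_nonneg _ _ _
  by_cases hx : x ∈ S
  swap
  · rw [gr_zero_l _ _ hx]; exact gr_nonneg _ _ _
  have := maxp S (fun z => gr S z y - gr T z y) 0 ?_ ?_ x hx
  · linarith
  · intro x hx
    rw [lap_sub, gr_lap _ hy hx, gr_lap _ (h hy) (h hx), sub_self]
  · intro x hx z hz hzS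
    rw [gr_zero_l _ _ hzS]
    linarith [gr_nonneg T z y]

end GreenEst


noncomputable section QForm

/-- covariance form -/
def Qf (N : ℕ) (c d : Vtx → ℝ) : ℝ := ∑ v ∈ VN N, ∑ w ∈ VN N, c v * d w * gr (DN N) v w

lemma Qf_symm (N : ℕ) (c d : Vtx → ℝ) : Qf N c d = Qf N d c := by
  unfold Qf
  rw [Finset.sum_comm]
  refine Finset.sum_congr rfl fun v _ => Finset.sum_congr rfl fun w _ => ?_
  rw [gr_symm]; ring

lemma Qf_add_l (N : ℕ) (c c' d : Vtx → ℝ) : Qf N (c + c') d = Qf N c d + Qf N c' d := by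
  unfold Qf
  rw [← Finset.sum_add_distrib]
  refine Finset.sum_congr rfl fun v _ => ?_
  rw [← Finset.sum_add_distrib]
  exact Finset.sum_congr rfl fun w _ => by simp only [Pi.add_apply]; ring

lemma Qf_smul_l (N : ℕ) (a : ℝ) (c d : Vtx → ℝ) : Qf N (a • c) d = a * Qf N c d := by
  unfold Qf
  rw [Finset.mul_sum]
  refine Finset.sum_congr rfl fun v _ => ?_
  rw [Finset.mul_sum]
  exact Finset.sum_congr rfl fun w _ => by simp only [Pi.smul_apply, smul_eq_mul]; ring

lemma Qf_zero_l (N : ℕ) (d : Vtx → ℝ) : Qf N 0 d = 0 := by simp [Qf]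

lemma Qf_sub_l (N : ℕ) (c c' d : Vtx → ℝ) : Qf N (c - c') d = Qf N c d - Qf N c' d := by
  have : c - c' = c + (-1:ℝ) • c' := by rw [neg_one_smul]; ring
  rw [this, Qf_add_l, Qf_smul_l]; ring

lemma Qf_sum_l {ι : Type*} (N : ℕ) (s : Finset ι) (c : ι → Vtx → ℝ) (d : Vtx → ℝ) :
    Qf N (∑ i ∈ s, c i) d = ∑ i ∈ s, Qf N (c i) d := by
  induction s using Finset.induction_on with
  | empty => simp [Qf_zero_l]
  | insert a s ha ih => rw [Finset.sum_insert ha, Finset.sum_insert ha, Qf_add_l, ih]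

lemma Qf_add_r (N : ℕ) (c d d' : Vtx → ℝ) : Qf N c (d + d') = Qf N c d + Qf N c d' := by
  rw [Qf_symm, Qf_add_l, Qf_symm N d, Qf_symm N d']
lemma Qf_sub_r (N : ℕ) (c d d' : Vtx → ℝ) : Qf N c (d - d') = Qf N c d - Qf N c d' := by
  rw [Qf_symm, Qf_sub_l, Qf_symm N d, Qf_symm N d']
lemma Qf_smul_r (N : ℕ) (a : ℝ) (c d : Vtx → ℝ) : Qf N c (a • d) = a * Qf N c d := by
  rw [Qf_symm, Qf_smul_l, Qf_symm N d]
lemma Qf_sum_r {ι : Type*} (N : ℕ) (s : Finset ι) (c : Vtx → ℝ) (d : ι → Vtx → ℝ) :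
    Qf N c (∑ i ∈ s, d i) = ∑ i ∈ s, Qf N c (d i) := by
  rw [Qf_symm, Qf_sum_l]; exact Finset.sum_congr rfl fun i _ => Qf_symm _ _ _

lemma dirichlet_nonneg (S : Finset Vtx) (f : Vtx → ℝ) (h0 : ∀ x, x ∉ S → f x = 0) :
    0 ≤ ∑ w ∈ S, f w * lap f w := by
  have hq : ∀ x, x ∉ S → (f x)^2 = 0 := fun x hx => by rw [h0 x hx]; norm_num
  have hsh : ∀ a b : ℤ, ∑ w ∈ S, (f (w.1 + a, w.2 + b))^2 ≤ ∑ w ∈ S, (f w)^2 := by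
    intro a b
    have e := sum_shift S (S ∪ S.image (fun x => ((x.1 - a, x.2 - b) : Vtx)))
      (fun x => (f x)^2) (fun _ => 1) hq a b (fun x hx => by
        rw [Finset.mem_union]; right; exact Finset.mem_image_of_mem _ hx)
    simp only [mul_one] at e
    rw [← e]
    exact Finset.sum_le_sum_of_subset_of_nonneg Finset.subset_union_left (fun _ _ _ => sq_nonneg _)
  have h1 := hsh 1 0
  have h2 := hsh (-1) 0
  have h3 := hsh 0 1
  have h4 := hsh 0 (-1)
  simp only [add_zero, ← sub_eq_add_neg] at h1 h2 h3 h4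
  have : ∑ w ∈ S, ((f w)^2 / 2 - ((f (w.1+1, w.2))^2 + (f (w.1-1, w.2))^2 + (f (w.1, w.2+1))^2
      + (f (w.1, w.2-1))^2)/8) ≤ ∑ w ∈ S, f w * lap f w := by
    apply Finset.sum_le_sum
    intro w _
    unfold lap
    nlinarith [sq_nonneg (f w - f (w.1+1, w.2)), sq_nonneg (f w - f (w.1-1, w.2)),
      sq_nonneg (f w - f (w.1, w.2+1)), sq_nonneg (f w - f (w.1, w.2-1))]
  refine le_trans ?_ this
  rw [Finset.sum_sub_distrib, ← Finset.sum_div, ← Finset.sum_div, Finset.sum_add_distrib,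
    Finset.sum_add_distrib, Finset.sum_add_distrib]
  linarith

lemma DN_sub_VN (N : ℕ) : DN N ⊆ VN N := by
  intro x hx; rw [mem_DN] at hx; rw [mem_VN]; omega

lemma lap_sum {ι : Type*} (s : Finset ι) (a : ι → ℝ) (g : ι → Vtx → ℝ) (x : Vtx) :
    lap (fun z => ∑ i ∈ s, a i * g i z) x = ∑ i ∈ s, a i * lap (g i) x := by
  unfold lap
  rw [← Finset.sum_add_distrib, ← Finset.sum_add_distrib, ← Finset.sum_add_distrib,
      Finset.sum_div, ← Finset.sum_sub_distrib]
  exact Finset.sum_congr rfl fun i _ => by ring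

lemma Qf_nonneg (N : ℕ) (c : Vtx → ℝ) : 0 ≤ Qf N c c := by
  let f : Vtx → ℝ := fun x => ∑ w ∈ VN N, c w * gr (DN N) w x
  have h0 : ∀ x, x ∉ DN N → f x = 0 := fun x hx =>
    Finset.sum_eq_zero fun w _ => by rw [gr_zero_r _ _ hx, mul_zero]
  have hl : ∀ x ∈ DN N, lap f x = c x * (Real.pi / 2) := by
    intro x hx
    have := lap_sum (VN N) c (fun w => gr (DN N) w) x
    rw [show f = fun z => ∑ w ∈ VN N, c w * gr (DN N) w z from rfl, this]
    rw [Finset.sum_congr rfl (fun w _ => by rw [gr_lap' _ _ hx])]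
    simp [DN_sub_VN N hx]
  have e : Qf N c c = (2 / Real.pi) * ∑ w ∈ DN N, f w * lap f w := by
    rw [Finset.sum_congr rfl (fun w hw => by rw [hl w hw])]
    have h1 : ∑ w ∈ DN N, f w * (c w * (Real.pi/2)) = ∑ w ∈ VN N, f w * (c w * (Real.pi/2)) :=
      Finset.sum_subset (DN_sub_VN N) (fun x _ hx => by rw [h0 x hx, zero_mul])
    rw [h1, Finset.mul_sum]
    unfold Qf
    rw [Finset.sum_comm]
    refine Finset.sum_congr rfl fun w _ => ?_
    have : (2/Real.pi) * (f w * (c w * (Real.pi/2))) = f w * c w := by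
      have := Real.pi_pos.ne'
      field_simp
    rw [this, Finset.sum_mul]
    exact Finset.sum_congr rfl fun v _ => by ring
  rw [e]
  have := dirichlet_nonneg (DN N) f h0
  positivity

lemma Qf_sum_le {ι : Type*} (N : ℕ) (s : Finset ι) (c : ι → Vtx → ℝ) :
    Qf N (∑ i ∈ s, c i) (∑ i ∈ s, c i) ≤ s.card * ∑ i ∈ s, Qf N (c i) (c i) := by
  rw [Qf_sum_l, Finset.sum_congr rfl (fun i _ => Qf_sum_r N s (c i) c)]
  have : ∀ i k, Qf N (c i) (c k) ≤ (Qf N (c i) (c i) + Qf N (c k) (c k)) / 2 := by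
    intro i k
    have := Qf_nonneg N (c i - c k)
    rw [Qf_sub_l, Qf_sub_r, Qf_sub_r, Qf_symm N (c k) (c i)] at this
    linarith
  calc _ ≤ ∑ i ∈ s, ∑ k ∈ s, (Qf N (c i) (c i) + Qf N (c k) (c k)) / 2 :=
        Finset.sum_le_sum fun i _ => Finset.sum_le_sum fun k _ => this i k
    _ = _ := by
      simp only [add_div, Finset.sum_add_distrib, Finset.sum_const, nsmul_eq_mul, ← Finset.mul_sum,
        ← Finset.sum_div]
      ring

lemma Qf_sub_le (N : ℕ) (c d : Vtx → ℝ) :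
    Qf N (c - d) (c - d) ≤ 2 * Qf N c c + 2 * Qf N d d := by
  have := Qf_nonneg N (c + d)
  rw [Qf_add_l, Qf_add_r, Qf_add_r, Qf_symm N d c] at this
  rw [Qf_sub_l, Qf_sub_r, Qf_sub_r, Qf_symm N d c]
  linarith

/-- coefficients of the local field -/
def ell (S : Finset Vtx) (v : Vtx) : Vtx → ℝ := fun w => 2 / Real.pi * lap (gr S v) w

lemma ell_empty (v : Vtx) : ell ∅ v = 0 := by
  have h1 : gr ∅ v = fun _ => 0 := funext fun z => gr_zero_l _ z (by simp)
  funext w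
  simp [ell, h1, lap]

lemma ell_mem (S : Finset Vtx) (v w : Vtx) (hw : w ∈ S) : ell S v w = if w = v then 1 else 0 := by
  unfold ell
  rw [gr_lap' S v hw]
  have := Real.pi_pos.ne'
  split_ifs
  · field_simp
  · simp

lemma Qf_ell_r (N : ℕ) (c : Vtx → ℝ) (T : Finset Vtx) (hT : T ⊆ DN N) (z : Vtx) :
    Qf N c (ell T z) = ∑ v ∈ VN N, c v * gr T z v := by
  unfold Qf
  refine Finset.sum_congr rfl fun v _ => ?_
  have h1 : ∑ w ∈ VN N, c v * ell T z w * gr (DN N) v w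
      = c v * (2/Real.pi) * ∑ w ∈ VN N, lap (gr T z) w * gr (DN N) v w := by
    rw [Finset.mul_sum]
    exact Finset.sum_congr rfl fun w _ => by unfold ell; ring
  rw [h1, lap_adj T (VN N) (gr T z) (gr (DN N) v) (fun x hx => gr_zero_r _ _ hx)
    (hT.trans (DN_sub_VN N)) (fun x hx y h => DN_nb N (hT hx) h)]
  rw [Finset.sum_congr rfl (fun w hw => by rw [gr_lap' _ v (hT hw)])]
  have := Real.pi_pos.ne'
  by_cases hv : v ∈ T
  · simp [hv]; field_simp
  · simp [hv, gr_zero_r T z hv]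

/-- the covariance of local fields -/
def KK (S : Finset Vtx) (x : Vtx) (T : Finset Vtx) (z : Vtx) : ℝ :=
  ∑ v ∈ T, ell S x v * gr T z v

lemma Qf_ell_ell (N : ℕ) (S : Finset Vtx) (x : Vtx) (T : Finset Vtx) (hT : T ⊆ DN N) (z : Vtx) :
    Qf N (ell S x) (ell T z) = KK S x T z := by
  rw [Qf_ell_r N _ T hT]
  exact (Finset.sum_subset (hT.trans (DN_sub_VN N))
    (fun v _ hv => by rw [gr_zero_r _ _ hv, mul_zero])).symm

lemma KK_sub (S : Finset Vtx) (x : Vtx) (T : Finset Vtx) (h : T ⊆ S) (z : Vtx) :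
    KK S x T z = gr T z x := by
  unfold KK
  rw [Finset.sum_congr rfl (fun v hv => by rw [ell_mem S x v (h hv)])]
  by_cases hx : x ∈ T
  · simp [hx]
  · simp [hx, gr_zero_r T z hx]

/-- separated sets -/
def sep (S T : Finset Vtx) : Prop := ∀ v ∈ T, v ∉ S ∧ ∀ y, nb v y → y ∉ S

lemma KK_sep (S : Finset Vtx) (x : Vtx) (T : Finset Vtx) (h : sep S T) (z : Vtx) :
    KK S x T z = 0 := by
  refine Finset.sum_eq_zero fun v hv => ?_
  obtain ⟨h0, h1⟩ := h v hv
  have : ell S x v = 0 := by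
    unfold ell lap
    rw [gr_zero_r S x h0, gr_zero_r S x (h1 _ (Or.inl rfl)),
      gr_zero_r S x (h1 _ (Or.inr (Or.inl rfl))), gr_zero_r S x (h1 _ (Or.inr (Or.inr (Or.inl rfl)))),
      gr_zero_r S x (h1 _ (Or.inr (Or.inr (Or.inr rfl))))]
    simp
  rw [this, zero_mul]

/-- translate of a point -/
def sh (t x : Vtx) : Vtx := (x.1 + t.1, x.2 + t.2)

lemma ell_tr (t : Vtx) (S : Finset Vtx) (x v : Vtx) : ell (tr t S) (sh t x) (sh t v) = ell S x v := by
  unfold ell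
  congr 1
  unfold lap sh
  have e := fun y => gr_tr t S x y
  rw [← e v, ← e (v.1+1, v.2), ← e (v.1-1, v.2), ← e (v.1, v.2+1), ← e (v.1, v.2-1)]
  simp only
  ring_nf

lemma KK_tr (t : Vtx) (S : Finset Vtx) (x : Vtx) (T : Finset Vtx) (z : Vtx) :
    KK (tr t S) (sh t x) (tr t T) (sh t z) = KK S x T z := by
  unfold KK
  have : tr t T = T.image (sh t) := rfl
  conv_lhs => rw [this]
  rw [Finset.sum_image]
  · refine Finset.sum_congr rfl fun v _ => ?_
    rw [ell_tr, ← this]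
    congr 1
    exact gr_tr t T z v
  · rintro ⟨a, b⟩ _ ⟨c, d⟩ _ h
    simp [sh] at h
    ext <;> simp [h]

lemma Qf_dA (N : ℕ) (A : Finset Vtx) (hA : A ⊆ DN N) (v : Vtx) :
    Qf N (ell (DN N) v - ell A v) (ell (DN N) v - ell A v) = gr (DN N) v v - gr A v v := by
  rw [Qf_sub_l, Qf_sub_r, Qf_sub_r, Qf_symm N (ell A v) (ell (DN N) v),
    Qf_ell_ell N _ _ _ (subset_refl _), Qf_ell_ell N _ _ _ hA, Qf_ell_ell N _ _ _ hA,
    KK_sub _ _ _ (subset_refl _), KK_sub _ _ _ hA, KK_sub _ _ _ (subset_refl _)]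
  ring

lemma Qf_ell_le (N : ℕ) (hN : 1 ≤ N) (A : Finset Vtx) (hA : A ⊆ DN N) (v : Vtx) :
    Qf N (ell A v) (ell A v) ≤ 4 * Real.log N + 8 := by
  rw [Qf_ell_ell N _ _ _ hA, KK_sub _ _ _ (subset_refl _)]
  exact (gr_mono A _ hA v v).trans (gr_diag_le N hN v)

end QForm


noncomputable section GaussPart
open MeasureTheory ProbabilityTheory

/-- linear functional of the field -/
def XX (N : ℕ) (c : Vtx → ℝ) (ω : FieldSp) : ℝ := ∑ v ∈ VN N, c v * ω v

lemma XX_meas (N : ℕ) (c : Vtx → ℝ) : Measurable (XX N c) := by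
  unfold XX; fun_prop

lemma XX_add (N : ℕ) (c d : Vtx → ℝ) (ω : FieldSp) : XX N (c + d) ω = XX N c ω + XX N d ω := by
  unfold XX; rw [← Finset.sum_add_distrib]
  exact Finset.sum_congr rfl fun v _ => by simp only [Pi.add_apply]; ring

lemma XX_smul (N : ℕ) (a : ℝ) (c : Vtx → ℝ) (ω : FieldSp) : XX N (a • c) ω = a * XX N c ω := by
  unfold XX; rw [Finset.mul_sum]
  exact Finset.sum_congr rfl fun v _ => by simp only [Pi.smul_apply, smul_eq_mul]; ring

lemma XX_sub (N : ℕ) (c d : Vtx → ℝ) (ω : FieldSp) : XX N (c - d) ω = XX N c ω - XX N d ω := by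
  unfold XX; rw [← Finset.sum_sub_distrib]
  exact Finset.sum_congr rfl fun v _ => by simp only [Pi.sub_apply]; ring

lemma XX_zero (N : ℕ) (ω : FieldSp) : XX N 0 ω = 0 := by simp [XX]

lemma XX_sum {ι : Type*} (N : ℕ) (s : Finset ι) (c : ι → Vtx → ℝ) (ω : FieldSp) :
    XX N (∑ i ∈ s, c i) ω = ∑ i ∈ s, XX N (c i) ω := by
  induction s using Finset.induction_on with
  | empty => simp [XX_zero]
  | insert a s ha ih => rw [Finset.sum_insert ha, Finset.sum_insert ha, XX_add, ih]

/-- reformulated free field -/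
def GF (N : ℕ) (P : Measure FieldSp) : Prop :=
  IsProbabilityMeasure P ∧ ∀ c, P.map (XX N c) = gaussianReal 0 (Real.toNNReal (Qf N c c))

lemma GF_of (N : ℕ) (P : Measure FieldSp) (h : IsGFF N P) : GF N P := by
  obtain ⟨h1, G, hG, h2⟩ := h
  refine ⟨h1, fun c => ?_⟩
  have e : G = gr (DN N) := by
    refine gr_unique _ _ hG.1 (fun y hy x hx => ?_)
    have := hG.2 y hy x hx
    unfold lap
    split_ifs with hxy
    · rw [if_pos hxy] at this; linarith
    · rw [if_neg hxy] at this; linarith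
  rw [e] at h2
  exact h2 c

lemma cramer_wold {Ω Ω' ι : Type*} [Fintype ι] [MeasurableSpace Ω] [MeasurableSpace Ω']
    (P : Measure Ω) (P' : Measure Ω') [IsFiniteMeasure P] [IsFiniteMeasure P']
    (X : ι → Ω → ℝ) (X' : ι → Ω' → ℝ) (hX : ∀ i, Measurable (X i)) (hX' : ∀ i, Measurable (X' i))
    (h : ∀ a : ι → ℝ, P.map (fun ω => ∑ i, a i * X i ω) = P'.map (fun ω => ∑ i, a i * X' i ω)) :
    P.map (fun ω i => X i ω) = P'.map (fun ω i => X' i ω) := by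
  have m1 : Measurable (fun ω i => X i ω) := measurable_pi_lambda _ hX
  have m2 : Measurable (fun ω i => X' i ω) := measurable_pi_lambda _ hX'
  apply Measure.ext_of_charFunDual
  ext L
  rw [charFunDual_eq_charFun_map_one, charFunDual_eq_charFun_map_one]
  rw [Measure.map_map (by fun_prop) m1, Measure.map_map (by fun_prop) m2]
  have e : ∀ x : ι → ℝ, L x = ∑ i, L (Pi.single i 1) * x i := by
    intro x
    conv_lhs => rw [← Finset.univ_sum_single x]
    rw [map_sum]
    refine Finset.sum_congr rfl fun i _ => ?_
    have : (Pi.single i (x i) : ι → ℝ) = x i • Pi.single i 1 := by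
      rw [← Pi.single_smul]; simp
    rw [this, map_smul, smul_eq_mul, mul_comm]
  have e1 : (⇑L ∘ fun ω i => X i ω) = fun ω => ∑ i, L (Pi.single i 1) * X i ω := by
    funext ω; exact e _
  have e2 : (⇑L ∘ fun ω i => X' i ω) = fun ω => ∑ i, L (Pi.single i 1) * X' i ω := by
    funext ω; exact e _
  rw [e1, e2, h]

lemma int_eq_of_cw {Ω Ω' ι : Type*} [Fintype ι] [MeasurableSpace Ω] [MeasurableSpace Ω']
    (P : Measure Ω) (P' : Measure Ω') [IsFiniteMeasure P] [IsFiniteMeasure P']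
    (X : ι → Ω → ℝ) (X' : ι → Ω' → ℝ) (hX : ∀ i, Measurable (X i)) (hX' : ∀ i, Measurable (X' i))
    (h : ∀ a : ι → ℝ, P.map (fun ω => ∑ i, a i * X i ω) = P'.map (fun ω => ∑ i, a i * X' i ω))
    (F : (ι → ℝ) → ℝ) (hF : Measurable F) :
    ∫ ω, F (fun i => X i ω) ∂P = ∫ ω, F (fun i => X' i ω) ∂P' := by
  have e := cramer_wold P P' X X' hX hX' h
  have m1 : Measurable (fun ω i => X i ω) := measurable_pi_lambda _ hX
  have m2 : Measurable (fun ω i => X' i ω) := measurable_pi_lambda _ hX'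
  rw [← integral_map (φ := fun ω i => X i ω) m1.aemeasurable hF.aestronglyMeasurable, e,
    integral_map (φ := fun ω i => X' i ω) m2.aemeasurable hF.aestronglyMeasurable]

lemma GF_lin {N : ℕ} {P : Measure FieldSp} (h : GF N P) {ι : Type*} [Fintype ι]
    (c : ι → Vtx → ℝ) (a : ι → ℝ) :
    P.map (fun ω => ∑ i, a i * XX N (c i) ω) =
      gaussianReal 0 (Real.toNNReal (∑ i, ∑ k, a i * a k * Qf N (c i) (c k))) := by
  have e : (fun ω => ∑ i, a i * XX N (c i) ω) = XX N (∑ i, a i • c i) := by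
    funext ω; rw [XX_sum]; exact Finset.sum_congr rfl fun i _ => (XX_smul _ _ _ _).symm
  rw [e, h.2]
  congr 2
  rw [Qf_sum_l]
  refine Finset.sum_congr rfl fun i _ => ?_
  rw [Qf_sum_r]
  exact Finset.sum_congr rfl fun k _ => by rw [Qf_smul_l, Qf_smul_r]; ring

lemma GF_int_eq {N : ℕ} {P : Measure FieldSp} (h : GF N P) {ι : Type*} [Fintype ι]
    (c d : ι → Vtx → ℝ) (hcd : ∀ i k, Qf N (c i) (c k) = Qf N (d i) (d k))
    (F : (ι → ℝ) → ℝ) (hF : Measurable F) :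
    ∫ ω, F (fun i => XX N (c i) ω) ∂P = ∫ ω, F (fun i => XX N (d i) ω) ∂P := by
  have := h.1
  refine int_eq_of_cw P P _ _ (fun i => XX_meas N _) (fun i => XX_meas N _) (fun a => ?_) F hF
  rw [GF_lin h, GF_lin h]
  simp only [hcd]

lemma XX_integrable {N : ℕ} {P : Measure FieldSp} (h : GF N P) (c : Vtx → ℝ) :
    Integrable (XX N c) P := by
  have : Integrable id (P.map (XX N c)) := by
    rw [h.2]; exact (memLp_id_gaussianReal 1).integrable le_rfl
  exact this.comp_measurable (XX_meas N c)

lemma XX_exp_integrable {N : ℕ} {P : Measure FieldSp} (h : GF N P) (c : Vtx → ℝ) :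
    Integrable (fun ω => Real.exp (XX N c ω)) P := by
  have : Integrable (fun x => Real.exp (1 * x)) (P.map (XX N c)) := by
    rw [h.2]; exact integrable_exp_mul_gaussianReal 1
  have := this.comp_measurable (XX_meas N c)
  simpa [Function.comp_def] using this

lemma XX_exp {N : ℕ} {P : Measure FieldSp} (h : GF N P) (c : Vtx → ℝ) :
    ∫ ω, Real.exp (XX N c ω) ∂P = Real.exp (Qf N c c / 2) := by
  have := mgf_gaussianReal (h.2 c) 1
  simp only [mgf, one_mul, zero_mul, zero_add, one_pow, mul_one] at this
  rw [this, Real.coe_toNNReal _ (Qf_nonneg N c)]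

lemma XX_sq {N : ℕ} {P : Measure FieldSp} (h : GF N P) (c : Vtx → ℝ) :
    Integrable (fun ω => (XX N c ω)^2) P ∧ ∫ ω, (XX N c ω)^2 ∂P = Qf N c c := by
  have hm : MemLp id 2 (P.map (XX N c)) := by rw [h.2]; exact memLp_id_gaussianReal 2
  constructor
  · exact hm.integrable_sq.comp_measurable (XX_meas N c)
  · have e : ∫ ω, (XX N c ω)^2 ∂P = ∫ x, x^2 ∂(P.map (XX N c)) := by
      rw [integral_map (XX_meas N c).aemeasurable (by fun_prop)]
    have hv := variance_id_gaussianReal (μ := 0) (v := Real.toNNReal (Qf N c c))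
    rw [variance_eq_sub (memLp_id_gaussianReal 2)] at hv
    simp only [Pi.pow_apply, id, integral_id_gaussianReal] at hv
    rw [e, h.2]
    rw [Real.coe_toNNReal _ (Qf_nonneg N c)] at hv
    linarith

lemma XX_abs {N : ℕ} {P : Measure FieldSp} (h : GF N P) (c : Vtx → ℝ) (V : ℝ) (hV : 0 < V)
    (hc : Qf N c c ≤ V) : ∫ ω, |XX N c ω| ∂P ≤ Real.sqrt V := by
  have := h.1
  have hs : 0 < Real.sqrt V := Real.sqrt_pos.2 hV
  obtain ⟨i2, e2⟩ := XX_sq h c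
  calc ∫ ω, |XX N c ω| ∂P ≤ ∫ ω, ((XX N c ω)^2 / (2 * Real.sqrt V) + Real.sqrt V / 2) ∂P := by
        refine integral_mono (XX_integrable h c).abs ((i2.div_const _).add (integrable_const _)) ?_
        intro ω
        have : ((XX N c ω)^2 / (2 * Real.sqrt V) + Real.sqrt V / 2)
          = (|XX N c ω|^2 + (Real.sqrt V)^2) / (2 * Real.sqrt V) := by
          rw [sq_abs]; field_simp
        simp only
        rw [this, le_div_iff₀ (by positivity)]
        nlinarith [sq_nonneg (|XX N c ω| - Real.sqrt V)]
    _ = Qf N c c / (2 * Real.sqrt V) + Real.sqrt V / 2 := by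
        rw [integral_add (i2.div_const _) (integrable_const _), integral_div, e2]
        simp
    _ ≤ V / (2 * Real.sqrt V) + Real.sqrt V / 2 := by gcongr
    _ = Real.sqrt V := by
        have := Real.mul_self_sqrt hV.le
        field_simp
        nlinarith

/-- log-sum-exp -/
def lse {ι : Type*} [Fintype ι] (x : ι → ℝ) : ℝ := Real.log (∑ i, Real.exp (x i))

section LSE
variable {ι : Type*} [Fintype ι] [Nonempty ι]

lemma lse_pos (x : ι → ℝ) : 0 < ∑ i, Real.exp (x i) :=
  Finset.sum_pos (fun i _ => Real.exp_pos _) Finset.univ_nonempty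

lemma lse_meas : Measurable (lse : (ι → ℝ) → ℝ) := by
  unfold lse
  apply Real.measurable_log.comp
  fun_prop

lemma le_lse (x : ι → ℝ) (i : ι) : x i ≤ lse x := by
  unfold lse
  rw [Real.le_log_iff_exp_le (lse_pos x)]
  exact Finset.single_le_sum (f := fun i => Real.exp (x i)) (fun i _ => (Real.exp_pos _).le) (Finset.mem_univ i)

lemma lse_abs_le (x : ι → ℝ) : |lse x| ≤ Real.log (Fintype.card ι) + ∑ i, |x i| := by
  have hc : (1:ℝ) ≤ Fintype.card ι := by exact_mod_cast Fintype.card_pos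
  have hl : 0 ≤ Real.log (Fintype.card ι) := Real.log_nonneg hc
  have hi : ∀ i, |x i| ≤ ∑ i, |x i| := fun i =>
    Finset.single_le_sum (f := fun i => |x i|) (fun i _ => abs_nonneg _) (Finset.mem_univ i)
  rw [abs_le]
  constructor
  · obtain ⟨i⟩ := ‹Nonempty ι›
    have := le_lse x i
    have := neg_abs_le (x i)
    linarith [hi i]
  · unfold lse
    calc Real.log (∑ i, Real.exp (x i)) ≤ Real.log (∑ _i : ι, Real.exp (∑ i, |x i|)) := by
          apply Real.log_le_log (lse_pos x)
          exact Finset.sum_le_sum fun i _ => Real.exp_le_exp.2 ((le_abs_self _).trans (hi i))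
      _ = _ := by
          rw [Finset.sum_const, nsmul_eq_mul, Finset.card_univ,
            Real.log_mul (by positivity) (Real.exp_pos _).ne', Real.log_exp]

lemma lse_grad (x y : ι → ℝ) :
    ∑ i, (Real.exp (x i) / ∑ k, Real.exp (x k)) * (y i - x i) ≤ lse y - lse x := by
  have hx := lse_pos x
  have hy := lse_pos y
  have hsum : ∑ i, Real.exp (x i) / ∑ k, Real.exp (x k) = 1 := by
    rw [← Finset.sum_div]; exact div_self hx.ne'
  have hJ := convexOn_exp.map_sum_le (t := Finset.univ)
    (w := fun i => Real.exp (x i) / ∑ k, Real.exp (x k)) (p := fun i => y i - x i)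
    (fun i _ => by positivity) hsum (fun _ _ => Set.mem_univ _)
  simp only [smul_eq_mul] at hJ
  have e : ∑ i, Real.exp (x i) / (∑ k, Real.exp (x k)) * Real.exp (y i - x i)
      = (∑ i, Real.exp (y i)) / ∑ k, Real.exp (x k) := by
    rw [Finset.sum_div]
    refine Finset.sum_congr rfl fun i _ => ?_
    rw [div_mul_eq_mul_div, ← Real.exp_add]; congr 2; ring
  rw [e] at hJ
  unfold lse
  rw [← Real.log_div hy.ne' hx.ne', Real.le_log_iff_exp_le (by positivity)]
  exact hJ

lemma lse_mid (y r : ι → ℝ) : 2 * lse y ≤ lse (fun i => y i + r i) + lse (fun i => y i - r i) := by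
  have h1 := lse_grad y (fun i => y i + r i)
  have h2 := lse_grad y (fun i => y i - r i)
  have : ∑ i, (Real.exp (y i) / ∑ k, Real.exp (y k)) * (y i + r i - y i)
    + ∑ i, (Real.exp (y i) / ∑ k, Real.exp (y k)) * (y i - r i - y i) = 0 := by
    rw [← Finset.sum_add_distrib]
    exact Finset.sum_eq_zero fun i _ => by ring
  linarith

lemma lse_err (a e : ι → ℝ) (t : ℝ) (ht : 0 < t) :
    lse (fun i => a i + e i) ≤ lse a + (1/t) * lse (fun i => t * e i) := by
  have h : ∀ i, e i ≤ (1/t) * lse (fun i => t * e i) := by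
    intro i
    have := le_lse (fun i => t * e i) i
    rw [one_div, ← div_eq_inv_mul, le_div_iff₀ ht]
    linarith
  generalize (1/t) * lse (fun i => t * e i) = b at h
  unfold lse
  have : Real.log (∑ i, Real.exp (a i)) + b = Real.log (∑ i, Real.exp (a i + b)) := by
    simp only [Real.exp_add, ← Finset.sum_mul]
    rw [Real.log_mul (lse_pos a).ne' (Real.exp_pos _).ne', Real.log_exp]
  rw [this]
  exact Real.log_le_log (lse_pos _) (Finset.sum_le_sum fun i _ => Real.exp_le_exp.2 (by linarith [h i]))

end LSE

section Chain
variable {ι : Type*} [Fintype ι] [Nonempty ι] {N : ℕ} {P : Measure FieldSp}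

lemma lse_integrable {Ω : Type*} [MeasurableSpace Ω] {μ : Measure Ω} [IsProbabilityMeasure μ]
    (X : ι → Ω → ℝ) (hm : ∀ i, Measurable (X i)) (hX : ∀ i, Integrable (X i) μ) :
    Integrable (fun ω => lse (fun i => X i ω)) μ := by
  refine Integrable.mono' (g := fun ω => Real.log (Fintype.card ι) + ∑ i, |X i ω|) ?_ ?_ ?_
  · exact (integrable_const _).add (integrable_finsetSum _ fun i _ => (hX i).abs)
  · exact (lse_meas.comp (measurable_pi_lambda _ hm)).aestronglyMeasurable
  · exact ae_of_all _ fun ω => by rw [Real.norm_eq_abs]; exact lse_abs_le _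

lemma lseX_integrable (h : GF N P) (c : ι → Vtx → ℝ) :
    Integrable (fun ω => lse (fun i => XX N (c i) ω)) P := by
  have := h.1
  exact lse_integrable _ (fun i => XX_meas N _) (fun i => XX_integrable h _)

/-- expected log-sum-exp -/
def EL (N : ℕ) (P : Measure FieldSp) {ι : Type*} [Fintype ι] (c : ι → Vtx → ℝ) : ℝ :=
  ∫ ω, lse (fun i => XX N (c i) ω) ∂P

lemma EL_jensen (h : GF N P) (c : ι → Vtx → ℝ) (V : ℝ) (hV : ∀ i, Qf N (c i) (c i) ≤ V) :
    EL N P c ≤ Real.log (Fintype.card ι) + V / 2 := by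
  have := h.1
  have hcard : (0:ℝ) < Fintype.card ι := by exact_mod_cast Fintype.card_pos
  -- log z ≤ z / A - 1 + log A
  set A : ℝ := Fintype.card ι * Real.exp (V/2) with hA
  have hA0 : 0 < A := by positivity
  have hint : Integrable (fun ω => ∑ i, Real.exp (XX N (c i) ω)) P :=
    integrable_finsetSum _ fun i _ => XX_exp_integrable h _
  have h1 : EL N P c ≤ ∫ ω, ((∑ i, Real.exp (XX N (c i) ω)) / A + (Real.log A - 1)) ∂P := by
    refine integral_mono (lseX_integrable h c) ((hint.div_const _).add (integrable_const _)) ?_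
    intro ω
    have hp := lse_pos (fun i => XX N (c i) ω)
    have := Real.log_le_sub_one_of_pos (div_pos hp hA0)
    rw [Real.log_div hp.ne' hA0.ne'] at this
    simp only [lse]
    linarith
  refine h1.trans ?_
  rw [integral_add (hint.div_const _) (integrable_const _), integral_div,
    integral_finsetSum _ fun i _ => XX_exp_integrable h _]
  simp only [XX_exp h, integral_const, probReal_univ, one_smul]
  have h2 : ∑ i, Real.exp (Qf N (c i) (c i) / 2) ≤ A := by
    calc _ ≤ ∑ _i : ι, Real.exp (V/2) :=
          Finset.sum_le_sum fun i _ => Real.exp_le_exp.2 (by linarith [hV i])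
      _ = A := by rw [Finset.sum_const, nsmul_eq_mul, Finset.card_univ]
  have h3 : (∑ i, Real.exp (Qf N (c i) (c i) / 2)) / A ≤ 1 := by rwa [div_le_one hA0]
  have h4 : Real.log A = Real.log (Fintype.card ι) + V/2 := by
    rw [hA, Real.log_mul hcard.ne' (Real.exp_pos _).ne', Real.log_exp]
  linarith

lemma EL_err (h : GF N P) (c d : ι → Vtx → ℝ) (V t : ℝ) (ht : 0 < t)
    (hV : ∀ i, Qf N (c i - d i) (c i - d i) ≤ V) :
    EL N P c ≤ EL N P d + (1/t) * (Real.log (Fintype.card ι) + t^2 * V / 2) := by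
  have h1 : EL N P c ≤ EL N P d + (1/t) * EL N P (fun i => t • (c i - d i)) := by
    unfold EL
    rw [← integral_const_mul, ← integral_add (lseX_integrable h d)
      ((lseX_integrable h _).const_mul _)]
    refine integral_mono (lseX_integrable h c) ((lseX_integrable h d).add
      ((lseX_integrable h _).const_mul _)) ?_
    intro ω
    have := lse_err (fun i => XX N (d i) ω) (fun i => XX N (c i - d i) ω) t ht
    simp only [XX_smul]
    refine le_trans (le_of_eq ?_) this
    congr 1
    funext i
    rw [XX_sub]; ring
  refine h1.trans ?_
  gcongr
  refine EL_jensen h _ _ (fun i => ?_)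
  rw [Qf_smul_l, Qf_smul_r]
  nlinarith [hV i, sq_nonneg t]

lemma EL_eq (h : GF N P) (c d : ι → Vtx → ℝ)
    (hcd : ∀ i k, Qf N (c i) (c k) = Qf N (d i) (d k)) : EL N P c = EL N P d :=
  GF_int_eq h c d hcd _ lse_meas

lemma EL_orth (h : GF N P) (y r : ι → Vtx → ℝ) (hyr : ∀ i k, Qf N (r i) (y k) = 0) :
    EL N P y ≤ EL N P (fun i => y i + r i) := by
  have h1 : EL N P (fun i => y i + r i) = EL N P (fun i => y i - r i) := by
    refine EL_eq h _ _ (fun i k => ?_)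
    simp only [Qf_add_l, Qf_add_r, Qf_sub_l, Qf_sub_r, hyr, Qf_symm N (y _) (r _)]
    ring
  have h2 : 2 * EL N P y ≤ EL N P (fun i => y i + r i) + EL N P (fun i => y i - r i) := by
    unfold EL
    rw [← integral_const_mul, ← integral_add (lseX_integrable h _) (lseX_integrable h _)]
    refine integral_mono ((lseX_integrable h y).const_mul _)
      ((lseX_integrable h _).add (lseX_integrable h _)) ?_
    intro ω
    have := lse_mid (fun i => XX N (y i) ω) (fun i => XX N (r i) ω)
    simpa only [XX_add, XX_sub] using this
  linarith

end Chain

end GaussPart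


noncomputable section ConcPart
open MeasureTheory ProbabilityTheory

variable {ι : Type*} [Fintype ι] [Nonempty ι] {N : ℕ} {P : Measure FieldSp}

lemma prod_law (h : GF N P) (u w : Vtx → ℝ) :
    (P.prod P).map (fun p => XX N u p.1 + XX N w p.2)
      = gaussianReal 0 (Real.toNNReal (Qf N u u + Qf N w w)) := by
  have := h.1
  have hi := indepFun_prod (μ := P) (ν := P) (XX_meas N u) (XX_meas N w)
  have h1 : (P.prod P).map (fun p => XX N u p.1) = gaussianReal 0 (Real.toNNReal (Qf N u u)) := by
    rw [← h.2 u, ← Function.comp_def (XX N u) Prod.fst, ← Measure.map_map (XX_meas N u) measurable_fst,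
      Measure.map_fst_prod, measure_univ, one_smul]
  have h2 : (P.prod P).map (fun p => XX N w p.2) = gaussianReal 0 (Real.toNNReal (Qf N w w)) := by
    rw [← h.2 w, ← Function.comp_def (XX N w) Prod.snd, ← Measure.map_map (XX_meas N w) measurable_snd,
      Measure.map_snd_prod, measure_univ, one_smul]
  have h3 := gaussianReal_add_gaussianReal_of_indepFun hi h1 h2
  rw [add_zero, ← Real.toNNReal_add (Qf_nonneg N u) (Qf_nonneg N w)] at h3
  exact h3

/-- rotated copy -/
def rot (N : ℕ) (c : Vtx → ℝ) (α : ℝ) (p : FieldSp × FieldSp) : ℝ :=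
  Real.cos α * XX N c p.1 + Real.sin α * XX N c p.2

lemma rot_meas (c : Vtx → ℝ) (α : ℝ) : Measurable (rot N c α) := by
  have := XX_meas N c
  unfold rot; fun_prop

lemma rot_integrable (h : GF N P) (c : Vtx → ℝ) (α : ℝ) : Integrable (rot N c α) (P.prod P) := by
  have := h.1
  exact (((XX_integrable h c).comp_fst P).const_mul _).add (((XX_integrable h c).comp_snd P).const_mul _)

lemma rot_int (h : GF N P) (c : ι → Vtx → ℝ) (α γ θ : ℝ) (F : (ι ⊕ ι → ℝ) → ℝ) (hF : Measurable F) :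
    ∫ p, F (Sum.elim (fun i => rot N (c i) α p) (fun i => rot N (c i) (α + θ) p)) ∂(P.prod P)
    = ∫ p, F (Sum.elim (fun i => rot N (c i) γ p) (fun i => rot N (c i) (γ + θ) p)) ∂(P.prod P) := by
  have := h.1
  have e : ∀ α p, (Sum.elim (fun i => rot N (c i) α p) (fun i => rot N (c i) (α + θ) p) : ι ⊕ ι → ℝ)
      = fun s => (Sum.elim (fun i => rot N (c i) α) (fun i => rot N (c i) (α + θ)) : ι ⊕ ι → _) s p := by
    intro α p; funext s; cases s <;> rfl
  simp only [e]
  have hm : ∀ α s, Measurable ((Sum.elim (fun i => rot N (c i) α) (fun i => rot N (c i) (α + θ)) :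
      ι ⊕ ι → _) s) := by
    intro α s; cases s <;> exact rot_meas _ _
  refine int_eq_of_cw _ _ _ _ (hm α) (hm γ) (fun a => ?_) F hF
  have key : ∀ α, (P.prod P).map (fun p => ∑ s, a s *
      (Sum.elim (fun i => rot N (c i) α) (fun i => rot N (c i) (α + θ)) : ι ⊕ ι → _) s p)
      = gaussianReal 0 (Real.toNNReal (
        Qf N (∑ i, a (Sum.inl i) • c i) (∑ i, a (Sum.inl i) • c i)
        + Qf N (∑ i, a (Sum.inr i) • c i) (∑ i, a (Sum.inr i) • c i)
        + 2 * Real.cos θ * Qf N (∑ i, a (Sum.inl i) • c i) (∑ i, a (Sum.inr i) • c i))) := by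
    intro α
    have e1 : (fun p => ∑ s, a s *
      (Sum.elim (fun i => rot N (c i) α) (fun i => rot N (c i) (α + θ)) : ι ⊕ ι → _) s p)
      = fun p => XX N (Real.cos α • (∑ i, a (Sum.inl i) • c i)
          + Real.cos (α + θ) • (∑ i, a (Sum.inr i) • c i)) p.1
        + XX N (Real.sin α • (∑ i, a (Sum.inl i) • c i)
          + Real.sin (α + θ) • (∑ i, a (Sum.inr i) • c i)) p.2 := by
      funext p
      rw [Fintype.sum_sum_type]
      simp only [Sum.elim_inl, Sum.elim_inr, XX_add, XX_smul, XX_sum, rot, mul_add,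
        Finset.sum_add_distrib, Finset.mul_sum]
      have : ∀ a b c d a' b' c' d' : ℝ, a = a' → b = b' → c = c' → d = d' →
        a + b + (c + d) = a' + c' + (b' + d') := by intros; subst_vars; ring
      apply this <;> exact Finset.sum_congr rfl fun i _ => by ring
    rw [e1, prod_law h]
    congr 2
    generalize (∑ i, a (Sum.inl i) • c i) = A
    generalize (∑ i, a (Sum.inr i) • c i) = B
    simp only [Qf_add_l, Qf_add_r, Qf_smul_l, Qf_smul_r, Qf_symm N B A]
    have t1 := Real.sin_sq_add_cos_sq α
    have t2 := Real.sin_sq_add_cos_sq (α + θ)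
    have t3 : Real.cos θ = Real.cos (α + θ) * Real.cos α + Real.sin (α + θ) * Real.sin α := by
      rw [← Real.cos_sub]; congr 1; ring
    rw [t3]
    linear_combination Qf N A A * t1 + Qf N B B * t2
  rw [key α, key γ]

lemma conc (h : GF N P) (c : ι → Vtx → ℝ) (V : ℝ) (hV0 : 0 < V)
    (hV : ∀ i, Qf N (c i) (c i) ≤ V) :
    ∫ ω, |lse (fun i => XX N (c i) ω) - EL N P c| ∂P ≤ 6 * Real.sqrt V := by
  have := h.1
  set n : ℕ := Fintype.card ι with hn
  have hn1 : 1 ≤ n := Fintype.card_pos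
  have hn1' : (1:ℝ) ≤ n := by exact_mod_cast hn1
  set θ : ℝ := Real.pi / (2 * n) with hθ
  have hθ0 : 0 ≤ θ := by have := Real.pi_pos; positivity
  have hθ1 : θ ≤ Real.pi := by
    rw [hθ, div_le_iff₀ (by positivity)]; nlinarith [Real.pi_pos]
  set μ := P.prod P with hμ
  set f : ℝ → FieldSp × FieldSp → ℝ := fun α p => lse (fun i => rot N (c i) α p) with hf
  have hfi : ∀ α, Integrable (f α) μ := fun α =>
    lse_integrable _ (fun i => rot_meas _ _) (fun i => rot_integrable h _ _)
  have hL0 : Measurable (fun x : ι ⊕ ι → ℝ => lse (fun i => x (Sum.inl i))) :=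
    lse_meas.comp (by fun_prop)
  have hL1 : Measurable (fun x : ι ⊕ ι → ℝ => lse (fun i => x (Sum.inr i))) :=
    lse_meas.comp (by fun_prop)
  -- each step has the same law
  have step : ∀ k : ℕ, ∫ p, |f (k * θ + θ) p - f (k * θ) p| ∂μ = ∫ p, |f (0 + θ) p - f 0 p| ∂μ := by
    intro k
    exact rot_int h c (k * θ) 0 θ
      (fun x => |lse (fun i => x (Sum.inr i)) - lse (fun i => x (Sum.inl i))|) (hL1.sub hL0).norm
  have mean : ∫ p, f (0 + θ) p ∂μ = ∫ p, f 0 p ∂μ :=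
    rot_int h c (0+θ) 0 θ (fun x => lse (fun i => x (Sum.inl i))) hL0
  -- telescoping
  have tele : ∀ k : ℕ, ∫ p, |f (k * θ) p - f 0 p| ∂μ ≤ k * ∫ p, |f (0 + θ) p - f 0 p| ∂μ := by
    intro k
    induction k with
    | zero => simp
    | succ k ih =>
      have e : ((k + 1 : ℕ) : ℝ) * θ = k * θ + θ := by push_cast; ring
      rw [e]
      calc ∫ p, |f (k * θ + θ) p - f 0 p| ∂μ
          ≤ ∫ p, (|f (k * θ + θ) p - f (k * θ) p| + |f (k * θ) p - f 0 p|) ∂μ := by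
            refine integral_mono ((hfi _).sub (hfi _)).abs
              (((hfi _).sub (hfi _)).abs.add ((hfi _).sub (hfi _)).abs) ?_
            intro p
            exact abs_sub_le _ _ _
        _ = _ := integral_add ((hfi _).sub (hfi _)).abs ((hfi _).sub (hfi _)).abs
        _ ≤ _ := by rw [step]; push_cast; linarith
  -- one step
  set X : ι → FieldSp → ℝ := fun i => XX N (c i) with hX
  set p0 : ι → FieldSp → ℝ := fun i ω => Real.exp (X i ω) / ∑ k, Real.exp (X k ω) with hp0
  have p0nn : ∀ i ω, 0 ≤ p0 i ω := fun i ω => by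
    have := lse_pos (fun i => X i ω); simp only [hp0]; positivity
  have p0sum : ∀ ω, ∑ i, p0 i ω = 1 := fun ω => by
    simp only [hp0]; rw [← Finset.sum_div]; exact div_self (lse_pos (fun i => X i ω)).ne'
  have p0le : ∀ i ω, p0 i ω ≤ 1 := fun i ω => by
    rw [← p0sum ω]; exact Finset.single_le_sum (f := fun i => p0 i ω) (fun i _ => p0nn i ω) (Finset.mem_univ i)
  have Xm : ∀ i, Measurable (X i) := fun i => XX_meas N _
  have p0m : ∀ i, Measurable (p0 i) := fun i => by simp only [hp0]; fun_prop
  have p0i : ∀ i, Integrable (p0 i) P := fun i =>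
    Integrable.mono' (integrable_const 1) (p0m i).aestronglyMeasurable
      (ae_of_all _ fun ω => by rw [Real.norm_eq_abs, abs_of_nonneg (p0nn i ω)]; exact p0le i ω)
  have Xi : ∀ i, Integrable (fun ω => |X i ω|) P := fun i => (XX_integrable h _).abs
  set H : FieldSp × FieldSp → ℝ := fun p => (1 - Real.cos θ) * ∑ i, |X i p.1|
    + Real.sin θ * ∑ i, p0 i p.1 * |X i p.2| with hH
  have hs0 : 0 ≤ Real.sin θ := Real.sin_nonneg_of_nonneg_of_le_pi hθ0 hθ1
  have hc0 : 0 ≤ 1 - Real.cos θ := by linarith [Real.cos_le_one θ]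
  have H0 : ∀ p, 0 ≤ H p := fun p => by
    have : 0 ≤ ∑ i, p0 i p.1 * |X i p.2| :=
      Finset.sum_nonneg fun i _ => mul_nonneg (p0nn i _) (abs_nonneg _)
    have : 0 ≤ ∑ i, |X i p.1| := Finset.sum_nonneg fun i _ => abs_nonneg _
    simp only [hH]; positivity
  have Hi1 : Integrable (fun p : FieldSp × FieldSp => ∑ i, |X i p.1|) μ :=
    integrable_finsetSum _ fun i _ => (Xi i).comp_fst P
  have Hi2 : ∀ i, Integrable (fun p : FieldSp × FieldSp => p0 i p.1 * |X i p.2|) μ :=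
    fun i => (p0i i).mul_prod (Xi i)
  have Hi : Integrable H μ :=
    (Hi1.const_mul _).add ((integrable_finsetSum _ fun i _ => Hi2 i).const_mul _)
  have EX : ∀ i, ∫ ω, |X i ω| ∂P ≤ Real.sqrt V := fun i => XX_abs h (c i) V hV0 (hV i)
  have HI : ∫ p, H p ∂μ ≤ (1 - Real.cos θ) * (n * Real.sqrt V) + Real.sin θ * Real.sqrt V := by
    simp only [hH]
    rw [integral_add (Hi1.const_mul _) ((integrable_finsetSum _ fun i _ => Hi2 i).const_mul _),
      integral_const_mul, integral_const_mul, integral_finsetSum _ fun i _ => (Xi i).comp_fst P,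
      integral_finsetSum _ fun i _ => Hi2 i]
    have a1 : ∀ i, ∫ p : FieldSp × FieldSp, |X i p.1| ∂μ = ∫ ω, |X i ω| ∂P := fun i => by
      have := integral_fun_fst (μ := P) (ν := P) (fun ω => |X i ω|)
      simpa using this
    have a2 : ∀ i, ∫ p : FieldSp × FieldSp, p0 i p.1 * |X i p.2| ∂μ
        = (∫ ω, p0 i ω ∂P) * ∫ ω, |X i ω| ∂P := fun i =>
      integral_prod_mul (p0 i) (fun ω => |X i ω|)
    simp only [a2]
    have b1 : ∑ i, ∫ ω, |X i ω| ∂P ≤ n * Real.sqrt V := by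
      calc _ ≤ ∑ _i : ι, Real.sqrt V := Finset.sum_le_sum fun i _ => EX i
        _ = _ := by rw [Finset.sum_const, nsmul_eq_mul, Finset.card_univ]
    have b2 : ∑ i, (∫ ω, p0 i ω ∂P) * ∫ ω, |X i ω| ∂P ≤ Real.sqrt V := by
      calc _ ≤ ∑ i, (∫ ω, p0 i ω ∂P) * Real.sqrt V :=
            Finset.sum_le_sum fun i _ => mul_le_mul_of_nonneg_left (EX i) (integral_nonneg (p0nn i))
        _ = Real.sqrt V := by
            rw [← Finset.sum_mul, ← integral_finsetSum _ fun i _ => p0i i]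
            simp only [p0sum]; simp
    exact add_le_add (mul_le_mul_of_nonneg_left (by rw [Finset.sum_congr rfl fun i _ => a1 i]; exact b1) hc0)
      (mul_le_mul_of_nonneg_left b2 hs0)
  have hf0 : ∀ p, f 0 p = lse (fun i => X i p.1) := fun p => by
    simp only [hf, rot, Real.cos_zero, Real.sin_zero, one_mul, zero_mul, add_zero, hX]
  have D0 : ∀ p, - H p ≤ f (0 + θ) p - f 0 p := by
    intro p
    rw [hf0, zero_add]
    refine le_trans ?_ (lse_grad (fun i => X i p.1) (fun i => rot N (c i) θ p))
    simp only [hH]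
    rw [Finset.mul_sum, Finset.mul_sum, ← Finset.sum_add_distrib, ← Finset.sum_neg_distrib]
    refine Finset.sum_le_sum fun i _ => ?_
    change _ ≤ p0 i p.1 * (rot N (c i) θ p - X i p.1)
    have e : rot N (c i) θ p - X i p.1 = -(1 - Real.cos θ) * X i p.1 + Real.sin θ * X i p.2 := by
      simp only [rot, hX]; ring
    rw [e]
    have q1 : (1 - Real.cos θ) * (p0 i p.1 * X i p.1) ≤ (1 - Real.cos θ) * |X i p.1| := by
      refine mul_le_mul_of_nonneg_left ?_ hc0
      calc p0 i p.1 * X i p.1 ≤ p0 i p.1 * |X i p.1| :=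
            mul_le_mul_of_nonneg_left (le_abs_self _) (p0nn i _)
        _ ≤ 1 * |X i p.1| := mul_le_mul_of_nonneg_right (p0le i _) (abs_nonneg _)
        _ = _ := one_mul _
    have q2 : - (Real.sin θ * (p0 i p.1 * |X i p.2|)) ≤ Real.sin θ * (p0 i p.1 * X i p.2) := by
      rw [← mul_neg, ← mul_neg]
      exact mul_le_mul_of_nonneg_left (mul_le_mul_of_nonneg_left (neg_abs_le _) (p0nn i _)) hs0
    linarith
  have one : ∫ p, |f (0 + θ) p - f 0 p| ∂μ ≤ 2 * ∫ p, H p ∂μ := by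
    calc ∫ p, |f (0 + θ) p - f 0 p| ∂μ ≤ ∫ p, ((f (0 + θ) p - f 0 p) + 2 * H p) ∂μ := by
          refine integral_mono ((hfi _).sub (hfi _)).abs (((hfi _).sub (hfi _)).add (Hi.const_mul _)) ?_
          intro p
          have h1 := D0 p
          have h2 := H0 p
          simp only
          rw [abs_le]; constructor <;> linarith
      _ = _ := by
          have hd : Integrable (fun p => f (0 + θ) p - f 0 p) μ := (hfi _).sub (hfi _)
          rw [integral_add hd (Hi.const_mul _), integral_sub (hfi _) (hfi _), mean,
            integral_const_mul]; ring
  have tot : ∫ p, |f (n * θ) p - f 0 p| ∂μ ≤ 6 * Real.sqrt V := by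
    refine (tele n).trans ?_
    have hsq := Real.sqrt_nonneg V
    have c1 : 1 - Real.cos θ ≤ θ^2/2 := by linarith [Real.one_sub_sq_div_two_le_cos (x := θ)]
    have c2 : Real.sin θ ≤ θ := Real.sin_le hθ0
    have hnθ : n * θ = Real.pi / 2 := by rw [hθ]; field_simp
    calc (n:ℝ) * ∫ p, |f (0 + θ) p - f 0 p| ∂μ
        ≤ n * (2 * ((θ^2/2) * (n * Real.sqrt V) + θ * Real.sqrt V)) := by
          refine mul_le_mul_of_nonneg_left (one.trans ?_) (by positivity)
          refine mul_le_mul_of_nonneg_left (HI.trans ?_) (by norm_num)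
          gcongr
      _ = ((n * θ)^2 + 2 * (n * θ)) * Real.sqrt V := by ring
      _ ≤ 6 * Real.sqrt V := by
          rw [hnθ]
          refine mul_le_mul_of_nonneg_right ?_ hsq
          have := Real.pi_lt_d2
          have := Real.pi_pos
          nlinarith
  have hfn : ∀ p, f (n * θ) p = lse (fun i => X i p.2) := fun p => by
    have hnθ : n * θ = Real.pi / 2 := by rw [hθ]; field_simp
    simp only [hf, rot, hnθ, Real.cos_pi_div_two, Real.sin_pi_div_two, one_mul, zero_mul, zero_add, hX]
  have hint : Integrable (fun p => |f (n * θ) p - f 0 p|) μ := ((hfi _).sub (hfi _)).abs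
  refine le_trans ?_ tot
  rw [hμ, integral_prod _ hint]
  refine integral_mono_ae ((lseX_integrable h c).sub (integrable_const _)).abs hint.integral_prod_left ?_
  refine ae_of_all _ fun ω => ?_
  simp only [hfn, hf0]
  have e : lse (fun i => XX N (c i) ω) - EL N P c
      = ∫ ω', (lse (fun i => X i ω) - lse (fun i => X i ω')) ∂P := by
    rw [integral_sub (integrable_const _) (lseX_integrable h c)]
    simp [EL, hX]
  rw [e]
  refine (abs_integral_le_integral_abs).trans (le_of_eq ?_)
  exact integral_congr_ae (ae_of_all _ fun ω' => abs_sub_comm _ _)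

end ConcPart


noncomputable section CondPart
open MeasureTheory ProbabilityTheory

lemma XX_single (N : ℕ) (v : Vtx) (hv : v ∈ VN N) (ω : FieldSp) :
    XX N (Pi.single v 1) ω = ω v := by
  unfold XX
  rw [Finset.sum_eq_single v]
  · simp
  · intro b _ hb; simp [Pi.single_apply, hb]
  · intro h; exact absurd hv h

lemma ell_out (S : Finset Vtx) (v : Vtx) (hv : v ∉ S) : ell S v = 0 := by
  funext w
  have : gr S v = fun _ => 0 := by funext y; exact gr_zero_l S y hv
  simp [ell, this, lap]

lemma Qf_single_ell (N : ℕ) (S : Finset Vtx) (hS : S ⊆ DN N) (v w : Vtx) (hw : w ∈ VN N) :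
    Qf N (Pi.single w 1) (ell S v) = gr S v w := by
  rw [Qf_ell_r N _ S hS, Finset.sum_eq_single w]
  · simp
  · intro b _ hb; simp [Pi.single_apply, hb]
  · intro h; exact absurd hw h

def alg (N : ℕ) (S : Finset Vtx) : MeasurableSpace FieldSp :=
  ⨆ w ∈ {w : Vtx | w ∈ VN N ∧ w ∉ S},
    MeasurableSpace.comap (fun ω : FieldSp => ω w) inferInstance

lemma alg_le (N : ℕ) (S : Finset Vtx) : alg N S ≤ (inferInstance : MeasurableSpace FieldSp) := by
  refine iSup₂_le fun w _ => ?_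
  exact (measurable_pi_apply w).comap_le

lemma alg_eval (N : ℕ) (S : Finset Vtx) (w : Vtx) (h1 : w ∈ VN N) (h2 : w ∉ S) :
    Measurable[alg N S] (fun ω : FieldSp => ω w) := by
  rw [measurable_iff_comap_le]
  exact le_iSup₂ (f := fun (w : Vtx) (_ : w ∈ {w : Vtx | w ∈ VN N ∧ w ∉ S}) =>
    MeasurableSpace.comap (fun ω : FieldSp => ω w) inferInstance) w ⟨h1, h2⟩

lemma set_int_zero {N : ℕ} {P : Measure FieldSp} (h : GF N P) (S : Finset Vtx) (hS : S ⊆ DN N)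
    (v : Vtx) (s : Set FieldSp) (hs : MeasurableSet[alg N S] s) :
    ∫ ω in s, XX N (ell S v) ω ∂P = 0 := by
  set W := {w // w ∈ VN N \ S} with hW
  let Φ : FieldSp → (W → ℝ) := fun ω w => ω w.1
  have hle : alg N S ≤ MeasurableSpace.comap Φ inferInstance := by
    refine iSup₂_le fun w hw => ?_
    have hw' : w ∈ VN N \ S := Finset.mem_sdiff.2 hw
    have : (fun ω : FieldSp => ω w) = (fun x : W → ℝ => x ⟨w, hw'⟩) ∘ Φ := rfl
    rw [this, ← MeasurableSpace.comap_comp]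
    exact MeasurableSpace.comap_mono (measurable_pi_apply _).comap_le
  obtain ⟨B, hB, rfl⟩ := hle s hs
  have hms : MeasurableSet (Φ ⁻¹' B) := alg_le N S _ hs
  let F : (Option W → ℝ) → ℝ := fun x => (B.indicator (fun _ => (1:ℝ)) (fun i => x (some i))) * x none
  have hF : Measurable F := by
    refine Measurable.mul ?_ (measurable_pi_apply _)
    exact (measurable_const.indicator hB).comp (measurable_pi_lambda _ fun i => measurable_pi_apply _)
  let c : ℝ → Option W → Vtx → ℝ := fun a i => i.elim (a • ell S v) (fun w => Pi.single w.1 1)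
  have key : ∀ a, ∫ ω, F (fun i => XX N (c a i) ω) ∂P = a * ∫ ω in Φ ⁻¹' B, XX N (ell S v) ω ∂P := by
    intro a
    rw [← integral_indicator hms, ← integral_const_mul]
    refine integral_congr_ae (ae_of_all _ fun ω => ?_)
    have e : (fun i : W => XX N (c a (some i)) ω) = Φ ω := by
      funext i
      exact XX_single N i.1 (Finset.mem_sdiff.1 i.2).1 ω
    simp only [F]
    rw [e]
    simp only [c, Option.elim, XX_smul]
    by_cases hb : Φ ω ∈ B
    · rw [Set.indicator_of_mem hb, Set.indicator_of_mem (show ω ∈ Φ ⁻¹' B from hb)]; ring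
    · rw [Set.indicator_of_notMem hb, Set.indicator_of_notMem (show ω ∉ Φ ⁻¹' B from hb)]; ring
  have z : ∀ w : W, Qf N (Pi.single w.1 1) (ell S v) = 0 := fun w => by
    rw [Qf_single_ell N S hS v _ (Finset.mem_sdiff.1 w.2).1]
    exact gr_zero_r S v (Finset.mem_sdiff.1 w.2).2
  have := GF_int_eq h (c 1) (c (-1)) (by
    intro i k
    rcases i with _ | i <;> rcases k with _ | k <;>
      simp only [c, Option.elim, Qf_smul_l, Qf_smul_r, Qf_symm N (ell S v) (Pi.single _ _), z] <;> ring) F hF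
  rw [key, key] at this
  linarith

lemma condExp_eq {N : ℕ} {P : Measure FieldSp} (h : GF N P) (S : Finset Vtx) (hS : S ⊆ DN N)
    (v : Vtx) (hv : v ∈ VN N) :
    P[fun ω : FieldSp => ω v | alg N S] =ᵐ[P] fun ω => ω v - XX N (ell S v) ω := by
  haveI := h.1
  have hvi : Integrable (fun ω : FieldSp => ω v) P := by
    have := XX_integrable h (Pi.single v 1)
    have e : XX N (Pi.single v 1) = fun ω : FieldSp => ω v := by
      funext ω; exact XX_single N v hv ω
    rwa [e] at this
  have hgi : Integrable (fun ω : FieldSp => ω v - XX N (ell S v) ω) P := hvi.sub (XX_integrable h _)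
  symm
  refine ae_eq_condExp_of_forall_setIntegral_eq (alg_le N S) hvi (fun s _ _ => hgi.integrableOn) ?_ ?_
  · intro s hs _
    rw [integral_sub hvi.integrableOn (XX_integrable h _).integrableOn, set_int_zero h S hS v s hs, sub_zero]
  · refine Measurable.aestronglyMeasurable ?_
    have e : (fun ω : FieldSp => ω v - XX N (ell S v) ω)
        = fun ω => ∑ w ∈ VN N \ S, (Pi.single v (1:ℝ) - ell S v : Vtx → ℝ) w * ω w := by
      funext ω
      rw [← XX_single N v hv ω, ← XX_sub]
      unfold XX
      symm
      refine Finset.sum_subset Finset.sdiff_subset ?_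
      intro w hw hw'
      have hwS : w ∈ S := by
        by_contra hc; exact hw' (Finset.mem_sdiff.2 ⟨hw, hc⟩)
      rw [Pi.sub_apply, ell_mem S v w hwS, Pi.single_apply]; simp
    rw [e]
    refine Finset.measurable_sum _ fun w hw => ?_
    exact Measurable.const_mul (alg_eval N S w (Finset.mem_sdiff.1 hw).1 (Finset.mem_sdiff.1 hw).2) _

/-- the box interior -/
def bx (N : ℕ) (r : ℤ) (v : Vtx) : Finset Vtx :=
  (DN N).filter fun x => |x.1 - v.1| < r ∧ |x.2 - v.2| < r

lemma mem_bx (N : ℕ) (r : ℤ) (v x : Vtx) :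
    x ∈ bx N r v ↔ x ∈ DN N ∧ |x.1 - v.1| < r ∧ |x.2 - v.2| < r := by
  simp [bx]

lemma bx_sub (N : ℕ) (r : ℤ) (v : Vtx) : bx N r v ⊆ DN N := Finset.filter_subset _ _

def rad (N : ℕ) (lam : ℝ) : ℤ :=
  if lam = 0 then N + 1 else if lam = 1 then 0 else ⌊(N:ℝ)^((1:ℝ)-lam)/2⌋

lemma abs_le_floor (a b : ℤ) (x : ℝ) : |(a:ℝ) - b| ≤ x ↔ |a - b| ≤ ⌊x⌋ := by
  rw [Int.le_floor]; push_cast; rfl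

lemma mem_intr (B : Finset Vtx) (x : Vtx) : x ∈ intr B ↔ x ∈ B ∧ 
    ((x.1 + 1, x.2) ∈ B ∧ (x.1 - 1, x.2) ∈ B ∧ (x.1, x.2 + 1) ∈ B ∧ (x.1, x.2 - 1) ∈ B) := by
  simp only [intr, bdry, Finset.mem_sdiff, Finset.mem_filter]
  tauto

lemma intr_nbhd (N : ℕ) (lam : ℝ) (v : Vtx) (hv : v ∈ VN N) :
    intr (nbhd N lam v) = bx N (rad N lam) v := by
  rw [mem_VN] at hv
  ext x
  rw [mem_bx, mem_DN]
  unfold nbhd rad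
  split_ifs with h0 h1
  · change x ∈ DN N ↔ _
    rw [mem_DN, abs_lt, abs_lt]
    constructor
    · intro hx; refine ⟨hx, ?_, ?_⟩ <;> constructor <;> omega
    · intro hx; exact hx.1
  · rw [mem_intr]
    simp only [Finset.mem_singleton, Prod.ext_iff]
    constructor
    · rintro ⟨⟨ha, hb⟩, ⟨hc, hd⟩, _⟩; exfalso; omega
    · rintro ⟨_, h, _⟩
      exact absurd h (not_lt.2 (abs_nonneg _))
  · rw [mem_intr]
    simp only [Finset.mem_filter, abs_le_floor, mem_VN]
    generalize ⌊(N:ℝ)^((1:ℝ)-lam)/2⌋ = r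
    simp only [abs_le, abs_lt]
    constructor
    · rintro ⟨⟨h1, h2, h3⟩, ⟨a1, a2, a3⟩, ⟨b1, b2, b3⟩, ⟨c1, c2, c3⟩, ⟨d1, d2, d3⟩⟩
      omega
    · rintro ⟨h1, h2, h3⟩
      omega

lemma phi_eq {N : ℕ} {P : Measure FieldSp} (h : GF N P) (lam : ℝ) (v : Vtx) (hv : v ∈ VN N) :
    phiScale N P v lam =ᵐ[P] fun ω => ω v - XX N (ell (bx N (rad N lam) v) v) ω := by
  have := condExp_eq h (bx N (rad N lam) v) (bx_sub _ _ _) v hv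
  rw [← intr_nbhd N lam v hv] at this ⊢
  exact this

/-- jump coefficients -/
def kap (sigv : ℕ → ℝ) (i : ℕ) : ℝ := sigv (i+1) - (if i = 0 then 0 else sigv i)

lemma kap_sum (sigv : ℕ → ℝ) (j : ℕ) : ∑ i ∈ Finset.range (j+1), kap sigv i = sigv (j+1) := by
  induction j with
  | zero => simp [kap]
  | succ j ih => rw [Finset.sum_range_succ, ih]; simp [kap]

/-- coefficients of the field -/
def cof (N M : ℕ) (sigv lamv : ℕ → ℝ) (v : Vtx) : Vtx → ℝ :=
  ∑ i ∈ Finset.range M, kap sigv i • ell (bx N (rad N (lamv i)) v) v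

lemma abel (sigv : ℕ → ℝ) (M : ℕ) (g : ℕ → ℝ) :
    ∑ i ∈ Finset.Icc 1 M, sigv i * (g (i-1) - g i)
      = ∑ i ∈ Finset.range M, kap sigv i * g i - (if M = 0 then 0 else sigv M * g M) := by
  induction M with
  | zero => simp
  | succ M ih =>
    rw [Finset.sum_Icc_succ_top (by omega), ih, Finset.sum_range_succ]
    by_cases hM : M = 0
    · subst hM; simp [kap]; ring
    · simp [kap, hM]; ring

lemma psi_eq {N M : ℕ} {sigv lamv : ℕ → ℝ} (hp : ScaleParams M sigv lamv) {P : Measure FieldSp}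
    (h : GF N P) (v : Vtx) (hv : v ∈ VN N) :
    psiFld N M sigv lamv P v =ᵐ[P] XX N (cof N M sigv lamv v) := by
  have hall : ∀ᵐ ω ∂P, ∀ i : ℕ, phiScale N P v (lamv i) ω
      = ω v - XX N (ell (bx N (rad N (lamv i)) v) v) ω :=
    ae_all_iff.2 fun i => phi_eq h (lamv i) v hv
  filter_upwards [hall] with ω hω
  unfold psiFld cof
  simp only [hω]
  have := abel sigv M (fun i => XX N (ell (bx N (rad N (lamv i)) v) v) ω)
  have hM : XX N (ell (bx N (rad N (lamv M)) v) v) ω = 0 := by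
    have e : bx N (rad N (lamv M)) v = ∅ := by
      rw [Finset.eq_empty_iff_forall_notMem]
      intro x hx
      rw [mem_bx, hp.2.2.2.1] at hx
      have := abs_nonneg (x.1 - v.1)
      simp [rad] at hx
      omega
    rw [e, ell_empty, XX_zero]
  rw [XX_sum]
  simp only [XX_smul]
  rw [hM] at this
  simp only [mul_zero, ite_self, sub_zero] at this
  rw [← this]
  refine Finset.sum_congr rfl fun i _ => ?_
  ring

end CondPart


noncomputable section GeoPart
open MeasureTheory ProbabilityTheory

def cofr (N M : ℕ) (sigv : ℕ → ℝ) (r : ℕ → ℤ) (v : Vtx) : Vtx → ℝ :=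
  ∑ i ∈ Finset.range M, kap sigv i • ell (bx N (r i) v) v

def cell (m : ℤ) (v : Vtx) : Vtx := (v.1 / m, v.2 / m)

def Dp (N : ℕ) (m : ℤ) (p : Vtx) : Finset Vtx :=
  (DN N).filter fun x => (m * (p.1 - 1) ≤ x.1 ∧ x.1 < m * (p.1 + 2)) ∧
    (m * (p.2 - 1) ≤ x.2 ∧ x.2 < m * (p.2 + 2))

def SS (N : ℕ) (r : ℕ → ℤ) (j : ℕ) (D : Finset Vtx) (i : ℕ) (v : Vtx) : Finset Vtx :=
  if i = j then D else bx N (r i) v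

def ee (sigv : ℕ → ℝ) (j i : ℕ) : ℝ := if i = j then sigv (j+1) else kap sigv i

def yg (N M : ℕ) (sigv : ℕ → ℝ) (r : ℕ → ℤ) (j : ℕ) (D : Finset Vtx) (v : Vtx) : Vtx → ℝ :=
  ∑ i ∈ Finset.Ico j M, ee sigv j i • ell (SS N r j D i v) v

lemma cof_sub (N M : ℕ) (sigv : ℕ → ℝ) (r : ℕ → ℤ) (j : ℕ) (hj : j < M) (D : Finset Vtx) (v : Vtx) :
    cofr N M sigv r v = yg N M sigv r j D v
      + ∑ i ∈ Finset.range (j+1), kap sigv i • (ell (bx N (r i) v) v - ell D v) := by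
  have h1 : yg N M sigv r j D v = sigv (j+1) • ell D v
      + ∑ i ∈ Finset.Ico (j+1) M, kap sigv i • ell (bx N (r i) v) v := by
    unfold yg
    rw [Finset.sum_eq_sum_Ico_succ_bot hj]
    congr 1
    · simp [ee, SS]
    · refine Finset.sum_congr rfl fun i hi => ?_
      have : i ≠ j := by have := Finset.mem_Ico.1 hi; omega
      simp [ee, SS, this]
  rw [h1]
  simp only [smul_sub, Finset.sum_sub_distrib, ← Finset.sum_smul, kap_sum]
  unfold cofr
  rw [Finset.range_eq_Ico, Finset.range_eq_Ico, ← Finset.sum_Ico_consecutive _ (Nat.zero_le (j+1)) (by omega : j+1 ≤ M)]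
  abel

lemma sep_mono {S S' T T' : Finset Vtx} (h : sep S T) (hS : S' ⊆ S) (hT : T' ⊆ T) : sep S' T' :=
  fun v hv => ⟨fun hc => (h v (hT hv)).1 (hS hc), fun y hy hc => (h v (hT hv)).2 y hy (hS hc)⟩

lemma tr_mono {t : Vtx} {S T : Finset Vtx} (h : S ⊆ T) : tr t S ⊆ tr t T :=
  Finset.image_subset_image h

structure Geo (N M : ℕ) (r : ℕ → ℤ) (j : ℕ) (m : ℤ) (B A : Finset Vtx) : Prop where
  hj : j < M
  hm : 2 ≤ m
  r0 : r 0 = N + 1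
  big : ∀ i, i ≤ j → 4 * m ≤ r i
  small : ∀ i, j < i → i < M → r i ≤ m
  depB : ∀ v ∈ B, ∀ i, j < i → i < M → r i ≤ dep N v
  BV : B ⊆ VN N
  dep8 : ∀ v ∈ B, dep N v < 8 * m
  col : ∀ v ∈ B, ∀ w ∈ B, 4 ∣ (cell m v).1 - (cell m w).1 ∧ 4 ∣ (cell m v).2 - (cell m w).2
  A1 : ∀ a ∈ A, m + 1 ≤ a.1 ∧ a.1 + 2 * m ≤ N ∧ m + 1 ≤ a.2 ∧ a.2 + 2 * m ≤ N
  A2 : ∀ a ∈ A, ∀ b ∈ A, a ≠ b → 4 * m ≤ |a.1 - b.1| ∨ 4 * m ≤ |a.2 - b.2|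
  A3 : ∀ a ∈ A, ∀ b ∈ A, ∀ i, 1 ≤ i → i ≤ j →
    (|a.1 - b.1| + 2 * m ≤ r i ∧ |a.2 - b.2| + 2 * m ≤ r i) ∨
    (r i + 4 * m ≤ |a.1 - b.1| ∨ r i + 4 * m ≤ |a.2 - b.2|)

lemma mem_Dp (N : ℕ) (m : ℤ) (p x : Vtx) : x ∈ Dp N m p ↔ x ∈ DN N ∧
    (m * p.1 - m ≤ x.1 ∧ x.1 < m * p.1 + 2 * m) ∧ (m * p.2 - m ≤ x.2 ∧ x.2 < m * p.2 + 2 * m) := by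
  have e1 : ∀ q : ℤ, m * (q - 1) = m * q - m := fun q => by ring
  have e2 : ∀ q : ℤ, m * (q + 2) = m * q + 2 * m := fun q => by ring
  simp only [Dp, Finset.mem_filter, e1, e2]

lemma cell_spec (m : ℤ) (hm : 2 ≤ m) (v : Vtx) :
    (m * (cell m v).1 ≤ v.1 ∧ v.1 < m * (cell m v).1 + m) ∧
    (m * (cell m v).2 ≤ v.2 ∧ v.2 < m * (cell m v).2 + m) := by
  have h1 := Int.mul_ediv_add_emod v.1 m
  have h2 := Int.mul_ediv_add_emod v.2 m
  have a1 := Int.emod_nonneg v.1 (show m ≠ 0 by omega)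
  have a2 := Int.emod_nonneg v.2 (show m ≠ 0 by omega)
  have b1 := Int.emod_lt_of_pos v.1 (show 0 < m by omega)
  have b2 := Int.emod_lt_of_pos v.2 (show 0 < m by omega)
  simp only [cell]
  omega

lemma nb_iff (x y : Vtx) (h : nb x y) : |y.1 - x.1| ≤ 1 ∧ |y.2 - x.2| ≤ 1 := by
  rcases h with h | h | h | h <;> subst h <;> simp

/-- translation vector -/
def tv (m : ℤ) (p a : Vtx) : Vtx := (a.1 - m * p.1, a.2 - m * p.2)

section G
variable {N M : ℕ} {r : ℕ → ℤ} {j : ℕ} {m : ℤ} {B A : Finset Vtx}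

lemma Geo.Dsub (_g : Geo N M r j m B A) (p : Vtx) : Dp N m p ⊆ DN N := Finset.filter_subset _ _

lemma Geo.mem_D' (_g : Geo N M r j m B A) {p a x : Vtx} (hx : x ∈ tr (tv m p a) (Dp N m p)) :
    (a.1 - m ≤ x.1 ∧ x.1 < a.1 + 2 * m) ∧ (a.2 - m ≤ x.2 ∧ x.2 < a.2 + 2 * m) := by
  rw [mem_tr, mem_Dp] at hx
  simp only [tv] at hx
  omega

lemma Geo.D'sub (g : Geo N M r j m B A) (p : Vtx) {a : Vtx} (ha : a ∈ A) :
    tr (tv m p a) (Dp N m p) ⊆ DN N := by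
  intro x hx
  have := g.mem_D' hx
  have := g.A1 a ha
  rw [mem_DN]; omega

lemma Geo.v' (g : Geo N M r j m B A) (v a : Vtx) :
    (a.1 ≤ (sh (tv m (cell m v) a) v).1 ∧ (sh (tv m (cell m v) a) v).1 < a.1 + m) ∧
    (a.2 ≤ (sh (tv m (cell m v) a) v).2 ∧ (sh (tv m (cell m v) a) v).2 < a.2 + m) := by
  have := cell_spec m g.hm v
  simp only [sh, tv]
  omega

lemma Geo.sepD (g : Geo N M r j m B A) {v w : Vtx} (hv : v ∈ B) (hw : w ∈ B)
    (h : cell m v ≠ cell m w) : sep (Dp N m (cell m v)) (Dp N m (cell m w)) := by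
  have hm := g.hm
  have hc := g.col v hv w hw
  obtain ⟨⟨k, hk⟩, ⟨l, hl⟩⟩ := hc
  have e1 : m * (cell m v).1 = m * (cell m w).1 + 4 * (m * k) := by
    rw [show (cell m v).1 = (cell m w).1 + 4 * k by omega]; ring
  have e2 : m * (cell m v).2 = m * (cell m w).2 + 4 * (m * l) := by
    rw [show (cell m v).2 = (cell m w).2 + 4 * l by omega]; ring
  have hkl : k ≠ 0 ∨ l ≠ 0 := by
    by_contra hcon
    push Not at hcon
    apply h
    rw [Prod.ext_iff]; omega
  have key : ∀ k : ℤ, k ≠ 0 → m ≤ m * k ∨ m * k ≤ - m := by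
    intro k hk0
    rcases lt_or_gt_of_ne hk0 with hh | hh
    · right; nlinarith
    · left; nlinarith
  have gap : ∀ x ∈ Dp N m (cell m v), ∀ y ∈ Dp N m (cell m w), 2 ≤ |y.1 - x.1| ∨ 2 ≤ |y.2 - x.2| := by
    intro x hx y hy
    rw [mem_Dp] at hx hy
    simp only [le_abs]
    rcases hkl with h0 | h0 <;> rcases key _ h0 with h1 | h1 <;> omega
  intro y hy
  constructor
  · intro hc; have := gap y hc y hy; simp at this
  · intro z hz hc
    have := gap z hc y hy
    have := nb_iff y z hz
    rw [abs_sub_comm, abs_sub_comm z.2] at this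
    omega

lemma Geo.sepD' (g : Geo N M r j m B A) (p q : Vtx) {a b : Vtx} (ha : a ∈ A) (hb : b ∈ A)
    (h : a ≠ b) : sep (tr (tv m p a) (Dp N m p)) (tr (tv m q b) (Dp N m q)) := by
  have hm := g.hm
  have gap : ∀ x ∈ tr (tv m p a) (Dp N m p), ∀ y ∈ tr (tv m q b) (Dp N m q),
      2 ≤ |y.1 - x.1| ∨ 2 ≤ |y.2 - x.2| := by
    intro x hx y hy
    have h1 := g.mem_D' hx
    have h2 := g.mem_D' hy
    have h3 := g.A2 a ha b hb h
    simp only [le_abs] at h3 ⊢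
    omega
  intro y hy
  constructor
  · intro hc; have := gap y hc y hy; simp at this
  · intro z hz hc
    have := gap z hc y hy
    have := nb_iff y z hz
    rw [abs_sub_comm, abs_sub_comm z.2] at this
    omega

lemma Geo.bxD (g : Geo N M r j m B A) (v : Vtx) {i : ℕ} (hi : j < i) (hi' : i < M) :
    bx N (r i) v ⊆ Dp N m (cell m v) := by
  intro x hx
  have h1 := cell_spec m g.hm v
  have h2 := g.small i hi hi'
  rw [mem_bx, abs_lt, abs_lt] at hx
  rw [mem_Dp]
  refine ⟨hx.1, ?_⟩
  omega

lemma dep_le (N : ℕ) (v : Vtx) (k : ℤ) : k ≤ dep N v ↔ (k ≤ v.1 ∧ k ≤ N - v.1) ∧ (k ≤ v.2 ∧ k ≤ N - v.2) := by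
  unfold dep; simp only [le_min_iff]

lemma Geo.bx_tr (g : Geo N M r j m B A) {v a : Vtx} (hv : v ∈ B) (ha : a ∈ A) {i : ℕ}
    (hi : j < i) (hi' : i < M) :
    bx N (r i) (sh (tv m (cell m v) a) v) = tr (tv m (cell m v) a) (bx N (r i) v) := by
  have h1 := g.v' v a
  have h2 := g.small i hi hi'
  have h3 := g.A1 a ha
  have h4 := g.depB v hv i hi hi'
  rw [dep_le] at h4
  ext x
  rw [mem_tr, mem_bx, mem_bx, mem_DN, mem_DN]
  simp only [sh] at h1 ⊢
  generalize tv m (cell m v) a = t at *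
  simp only [abs_lt]
  constructor
  · intro hx; omega
  · intro hx; omega

lemma Geo.SS_tr (g : Geo N M r j m B A) {v a : Vtx} (hv : v ∈ B) (ha : a ∈ A) {i : ℕ}
    (hi : i ∈ Finset.Ico j M) :
    SS N r j (tr (tv m (cell m v) a) (Dp N m (cell m v))) i (sh (tv m (cell m v) a) v)
      = tr (tv m (cell m v) a) (SS N r j (Dp N m (cell m v)) i v) := by
  rw [Finset.mem_Ico] at hi
  unfold SS
  split_ifs with h
  · rfl
  · exact g.bx_tr hv ha (by omega) hi.2

lemma Geo.SS_sub (g : Geo N M r j m B A) (v : Vtx) {i : ℕ} (hi : i ∈ Finset.Ico j M) :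
    SS N r j (Dp N m (cell m v)) i v ⊆ Dp N m (cell m v) := by
  rw [Finset.mem_Ico] at hi
  unfold SS
  split_ifs with h
  · exact subset_rfl
  · exact g.bxD v (by omega) hi.2

/-- the modified coefficients, translated -/
def yt (N M : ℕ) (sigv : ℕ → ℝ) (r : ℕ → ℤ) (j : ℕ) (m : ℤ) (a v : Vtx) : Vtx → ℝ :=
  yg N M sigv r j (tr (tv m (cell m v) a) (Dp N m (cell m v))) (sh (tv m (cell m v) a) v)

lemma Qf_yg (N M : ℕ) (sigv : ℕ → ℝ) (r : ℕ → ℤ) (j : ℕ) (D E : Finset Vtx) (v w : Vtx)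
    (hE : ∀ k ∈ Finset.Ico j M, SS N r j E k w ⊆ DN N) :
    Qf N (yg N M sigv r j D v) (yg N M sigv r j E w) =
      ∑ i ∈ Finset.Ico j M, ∑ k ∈ Finset.Ico j M, ee sigv j i * (ee sigv j k *
        KK (SS N r j D i v) v (SS N r j E k w) w) := by
  unfold yg
  rw [Qf_sum_l]
  refine Finset.sum_congr rfl fun i _ => ?_
  rw [Qf_sum_r]
  refine Finset.sum_congr rfl fun k hk => ?_
  rw [Qf_smul_l, Qf_smul_r, Qf_ell_ell _ _ _ _ (hE k hk)]

lemma Geo.cov_eq (g : Geo N M r j m B A) (sigv : ℕ → ℝ) (a : Vtx → Vtx)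
    (ha : ∀ v ∈ B, a (cell m v) ∈ A)
    (hinj : ∀ v ∈ B, ∀ w ∈ B, a (cell m v) = a (cell m w) → cell m v = cell m w)
    {v w : Vtx} (hv : v ∈ B) (hw : w ∈ B) :
    Qf N (yg N M sigv r j (Dp N m (cell m v)) v) (yg N M sigv r j (Dp N m (cell m w)) w)
    = Qf N (yt N M sigv r j m (a (cell m v)) v) (yt N M sigv r j m (a (cell m w)) w) := by
  unfold yt
  rw [Qf_yg, Qf_yg]
  · refine Finset.sum_congr rfl fun i hi => Finset.sum_congr rfl fun k hk => ?_
    congr 2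
    rw [g.SS_tr hv (ha v hv) hi, g.SS_tr hw (ha w hw) hk]
    by_cases h : cell m v = cell m w
    · rw [h, KK_tr]
    · rw [KK_sep _ _ _ (sep_mono (g.sepD hv hw h) (g.SS_sub v hi) (g.SS_sub w hk)),
        KK_sep _ _ _ (sep_mono (g.sepD' (cell m v) (cell m w) (ha v hv) (ha w hw)
          (fun hc => h (hinj v hv w hw hc))) (tr_mono (g.SS_sub v hi)) (tr_mono (g.SS_sub w hk)))]
  · intro k hk
    rw [g.SS_tr hw (ha w hw) hk]
    exact (tr_mono (g.SS_sub w hk)).trans (g.D'sub _ (ha w hw))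
  · intro k hk
    exact (g.SS_sub w hk).trans (g.Dsub _)

lemma KK_gr {S T : Finset Vtx} {x z : Vtx} (h : T ⊆ S ∨ (sep S T ∧ x ∉ T)) :
    KK S x T z = gr T z x := by
  rcases h with h | ⟨h, hx⟩
  · exact KK_sub S x T h z
  · rw [KK_sep S x T h z, gr_zero_r T z hx]

/-- inclusion or separation for the target boxes -/
lemma Geo.tgt (g : Geo N M r j m B A) (v : Vtx) (q : Vtx) {a b : Vtx} (ha : a ∈ A) (hb : b ∈ A) {i : ℕ}
    (hi : i ≤ j) :
    tr (tv m q b) (Dp N m q) ⊆ bx N (r i) (sh (tv m (cell m v) a) v) ∨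
    (sep (bx N (r i) (sh (tv m (cell m v) a) v)) (tr (tv m q b) (Dp N m q)) ∧
      (sh (tv m (cell m v) a) v) ∉ tr (tv m q b) (Dp N m q)) := by
  have hm := g.hm
  have hv' := g.v' v a
  have hA := g.A1 a ha
  generalize sh (tv m (cell m v) a) v = v' at *
  rcases Nat.eq_zero_or_pos i with h0 | h0
  · left
    intro x hx
    have h1 := g.D'sub q hb hx
    rw [mem_bx, h0, g.r0]
    refine ⟨h1, ?_⟩
    rw [mem_DN] at h1
    rw [abs_lt, abs_lt]
    omega
  rcases g.A3 a ha b hb i h0 hi with h | h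
  · left
    intro x hx
    have h1 := g.D'sub q hb hx
    have h2 := g.mem_D' hx
    rw [mem_bx]
    refine ⟨h1, ?_⟩
    have a1 := le_abs_self (a.1 - b.1)
    have a2 := neg_abs_le (a.1 - b.1)
    have a3 := le_abs_self (a.2 - b.2)
    have a4 := neg_abs_le (a.2 - b.2)
    rw [abs_lt, abs_lt]
    omega
  · right
    have hb' := g.big i hi
    constructor
    · intro y hy
      have h2 := g.mem_D' hy
      simp only [le_abs] at h
      constructor
      · rw [mem_bx, abs_lt, abs_lt]; omega
      · intro z hz
        have h3 := nb_iff y z hz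
        rw [abs_le, abs_le] at h3
        rw [mem_bx, abs_lt, abs_lt]; omega
    · intro hc
      have h2 := g.mem_D' hc
      simp only [le_abs] at h
      omega

lemma Geo.orth (g : Geo N M r j m B A) (sigv : ℕ → ℝ) (a : Vtx → Vtx)
    (ha : ∀ v ∈ B, a (cell m v) ∈ A)
    (hinj : ∀ v ∈ B, ∀ w ∈ B, a (cell m v) = a (cell m w) → cell m v = cell m w)
    {v w : Vtx} (hv : v ∈ B) (hw : w ∈ B) :
    Qf N (cofr N M sigv r (sh (tv m (cell m v) (a (cell m v))) v) - yt N M sigv r j m (a (cell m v)) v)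
      (yt N M sigv r j m (a (cell m w)) w) = 0 := by
  unfold yt
  rw [cof_sub N M sigv r j g.hj (tr (tv m (cell m v) (a (cell m v))) (Dp N m (cell m v))), add_sub_cancel_left,
    Qf_sum_l]
  refine Finset.sum_eq_zero fun i hi => ?_
  have hij : i ≤ j := by have := Finset.mem_range.1 hi; omega
  unfold yg
  rw [Qf_smul_l, Qf_sum_r, Finset.sum_eq_zero, mul_zero]
  intro k hk
  have hsub : SS N r j (tr (tv m (cell m w) (a (cell m w))) (Dp N m (cell m w))) k
      (sh (tv m (cell m w) (a (cell m w))) w) ⊆ tr (tv m (cell m w) (a (cell m w))) (Dp N m (cell m w)) := by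
    rw [g.SS_tr hw (ha w hw) hk]
    exact tr_mono (g.SS_sub w hk)
  have hD := g.D'sub (cell m w) (ha w hw)
  rw [Qf_smul_r, Qf_sub_l, Qf_ell_ell _ _ _ _ (hsub.trans hD), Qf_ell_ell _ _ _ _ (hsub.trans hD),
    KK_gr, KK_gr, sub_self, mul_zero]
  · by_cases h : cell m v = cell m w
    · left; rw [h]; exact hsub
    · right
      have hne : a (cell m v) ≠ a (cell m w) := fun hc => h (hinj v hv w hw hc)
      refine ⟨sep_mono (g.sepD' _ _ (ha v hv) (ha w hw) hne) subset_rfl hsub, fun hc => ?_⟩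
      have h1 := g.mem_D' (hsub hc)
      have h2 := g.v' v (a (cell m v))
      have h3 := g.A2 _ (ha v hv) _ (ha w hw) hne
      simp only [le_abs] at h3
      have := g.hm
      omega
  · rcases g.tgt v (cell m w) (ha v hv) (ha w hw) hij with h | ⟨h, h'⟩
    · left; exact hsub.trans h
    · right; exact ⟨sep_mono h subset_rfl hsub, fun hc => h' (hsub hc)⟩

def CR (M : ℕ) (sigv : ℕ → ℝ) : ℝ := M * ∑ i ∈ Finset.range M, (kap sigv i)^2 * 68

lemma Geo.err (g : Geo N M r j m B A) (sigv : ℕ → ℝ) {v : Vtx} (hv : v ∈ B) :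
    Qf N (cofr N M sigv r v - yg N M sigv r j (Dp N m (cell m v)) v)
      (cofr N M sigv r v - yg N M sigv r j (Dp N m (cell m v)) v) ≤ CR M sigv := by
  rw [cof_sub N M sigv r j g.hj (Dp N m (cell m v)), add_sub_cancel_left]
  refine (Qf_sum_le N _ _).trans ?_
  have hm := g.hm
  have key : ∀ T : Finset Vtx, T ⊆ DN N → (∀ x ∈ DN N, x ∉ T → m ≤ |x.1-v.1| ∨ m ≤ |x.2-v.2|) →
      Qf N (ell (DN N) v - ell T v) (ell (DN N) v - ell T v) ≤ 17 := by
    intro T hT hf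
    rw [Qf_dA N T hT]
    exact gr_diff_le N v m (by omega) (g.dep8 v hv) T hT hf
  have kD := key _ (g.Dsub (cell m v)) (by
    intro x hx hx'
    have := cell_spec m hm v
    rw [mem_Dp] at hx'
    simp only [le_abs]
    by_contra hc
    apply hx'
    refine ⟨hx, ?_⟩
    omega)
  have kA : ∀ i, i ≤ j → Qf N (ell (DN N) v - ell (bx N (r i) v) v)
      (ell (DN N) v - ell (bx N (r i) v) v) ≤ 17 := fun i hi => key _ (bx_sub _ _ _) (by
    intro x hx hx'
    rw [mem_bx] at hx'
    have := g.big i hi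
    by_contra hc
    apply hx'
    refine ⟨hx, ?_⟩
    omega)
  have each : ∀ i ∈ Finset.range (j+1), Qf N (kap sigv i • (ell (bx N (r i) v) v - ell (Dp N m (cell m v)) v))
      (kap sigv i • (ell (bx N (r i) v) v - ell (Dp N m (cell m v)) v)) ≤ (kap sigv i)^2 * 68 := by
    intro i hi
    have hij : i ≤ j := by have := Finset.mem_range.1 hi; omega
    rw [Qf_smul_l, Qf_smul_r, ← mul_assoc, ← pow_two]
    refine mul_le_mul_of_nonneg_left ?_ (sq_nonneg _)
    have e : ell (bx N (r i) v) v - ell (Dp N m (cell m v)) v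
        = (ell (DN N) v - ell (Dp N m (cell m v)) v) - (ell (DN N) v - ell (bx N (r i) v) v) := by abel
    rw [e]
    refine (Qf_sub_le _ _ _).trans ?_
    linarith [kA i hij]
  unfold CR
  have hjM : j + 1 ≤ M := g.hj
  refine mul_le_mul ?_ ((Finset.sum_le_sum each).trans ?_) ?_ (by positivity)
  · rw [Finset.card_range]; exact_mod_cast hjM
  · refine Finset.sum_le_sum_of_subset_of_nonneg (Finset.range_subset_range.2 hjM) ?_
    intro i _ _; positivity
  · exact Finset.sum_nonneg fun i _ => Qf_nonneg _ _

lemma cof_var (N M : ℕ) (hN : 1 ≤ N) (sigv : ℕ → ℝ) (r : ℕ → ℤ) (v : Vtx) :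
    Qf N (cofr N M sigv r v) (cofr N M sigv r v)
      ≤ (M * ∑ i ∈ Finset.range M, (kap sigv i)^2) * (4 * Real.log N + 8) := by
  refine (Qf_sum_le N _ _).trans ?_
  rw [Finset.card_range, mul_assoc]
  refine mul_le_mul_of_nonneg_left ?_ (by positivity)
  rw [Finset.sum_mul]
  refine Finset.sum_le_sum fun i _ => ?_
  rw [Qf_smul_l, Qf_smul_r, ← mul_assoc, ← pow_two]
  exact mul_le_mul_of_nonneg_left (Qf_ell_le N hN _ (bx_sub _ _ _) v) (sq_nonneg _)

end G
end GeoPart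


noncomputable section ComparePart
open MeasureTheory ProbabilityTheory

lemma lse_split {ι κ : Type*} [Fintype ι] [Nonempty ι] [Fintype κ] (K : ℕ) (hK : 1 ≤ K)
    (τ : Fin K → ι → κ) (hτ : ∀ k l v w, τ k v = τ l w → k = l ∧ v = w) (x : κ → ℝ) :
    Real.log K + (1/K) * ∑ k, lse (fun v => x (τ k v)) ≤ lse x := by
  have hK0 : (0:ℝ) < K := by exact_mod_cast hK
  set s := (1/(K:ℝ)) * ∑ k, lse (fun v => x (τ k v)) with hs
  have h1 : ∑ k : Fin K, ∑ v, Real.exp (x (τ k v)) ≤ ∑ u, Real.exp (x u) := by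
    rw [← Finset.sum_product']
    have hinj : Function.Injective (fun p : Fin K × ι => τ p.1 p.2) := by
      intro p q hpq
      have := hτ _ _ _ _ hpq
      exact Prod.ext this.1 this.2
    calc _ = ∑ u ∈ (Finset.univ ×ˢ Finset.univ).image (fun p : Fin K × ι => τ p.1 p.2), Real.exp (x u) := by
          rw [Finset.sum_image (fun p _ q _ h => hinj h)]
      _ ≤ _ := Finset.sum_le_sum_of_subset_of_nonneg (Finset.subset_univ _) fun _ _ _ => (Real.exp_pos _).le
  have h2 : (K:ℝ) * Real.exp s ≤ ∑ k : Fin K, ∑ v, Real.exp (x (τ k v)) := by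
    have : ∀ k : Fin K, Real.exp s * (1 + (lse (fun v => x (τ k v)) - s)) ≤ ∑ v, Real.exp (x (τ k v)) := by
      intro k
      have e : ∑ v, Real.exp (x (τ k v)) = Real.exp (lse (fun v => x (τ k v))) := by
        unfold lse; rw [Real.exp_log (lse_pos (fun v => x (τ k v)))]
      rw [e]
      calc _ ≤ Real.exp s * Real.exp (lse (fun v => x (τ k v)) - s) := by
            refine mul_le_mul_of_nonneg_left ?_ (Real.exp_pos _).le
            have := Real.add_one_le_exp (lse (fun v => x (τ k v)) - s); linarith
        _ = _ := by rw [← Real.exp_add]; congr 1; ring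
    refine le_trans (le_of_eq ?_) (Finset.sum_le_sum fun k _ => this k)
    rw [← Finset.mul_sum, Finset.sum_add_distrib, Finset.sum_sub_distrib]
    have : ∑ k, lse (fun v => x (τ k v)) = K * s := by rw [hs]; field_simp
    rw [this]; simp
    ring
  have h3 := Real.log_le_log (by positivity) (h2.trans h1)
  rw [Real.log_mul hK0.ne' (Real.exp_pos _).ne', Real.log_exp] at h3
  exact h3

lemma EL_congr {ι : Type*} [Fintype ι] (N : ℕ) (P : Measure FieldSp) (c d : ι → Vtx → ℝ) (h : ∀ i, c i = d i) :
    EL N P c = EL N P d := by rw [funext h]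

lemma compare {N M : ℕ} {P : Measure FieldSp} (h : GF N P) {r : ℕ → ℤ} {j : ℕ} {m : ℤ} {B A : Finset Vtx}
    (g : Geo N M r j m B A) (sigv : ℕ → ℝ) (β t : ℝ) (ht : 0 < t) (hB : B.Nonempty)
    (K : ℕ) (hK : 1 ≤ K) (hcard : K * (B.image (cell m)).card ≤ A.card) :
    EL N P (fun v : {v // v ∈ B} => β • cofr N M sigv r v.1) + Real.log K ≤
      EL N P (fun v : {v // v ∈ VN N} => β • cofr N M sigv r v.1)
      + (1/t) * (Real.log B.card + t^2 * (β^2 * CR M sigv) / 2) := by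
  have hm := g.hm
  haveI : Nonempty {v // v ∈ B} := hB.to_subtype
  haveI : Nonempty {v // v ∈ VN N} := (hB.mono g.BV).to_subtype
  obtain ⟨e⟩ : Nonempty ((Fin K × {p // p ∈ B.image (cell m)}) ↪ {a // a ∈ A}) := by
    refine Function.Embedding.nonempty_of_card_le ?_
    simpa using hcard
  let a : Fin K → Vtx → Vtx := fun k p => if hp : p ∈ B.image (cell m) then (e (k, ⟨p, hp⟩)).1 else 0
  have hcell : ∀ v ∈ B, cell m v ∈ B.image (cell m) := fun v hv => Finset.mem_image_of_mem _ hv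
  have ae : ∀ k, ∀ v (hv : v ∈ B), a k (cell m v) = (e (k, ⟨cell m v, hcell v hv⟩)).1 := by
    intro k v hv; simp only [a]; rw [dif_pos (hcell v hv)]
  have haA : ∀ k, ∀ v ∈ B, a k (cell m v) ∈ A := fun k v hv => by rw [ae k v hv]; exact (e _).2
  have hinj : ∀ k l, ∀ v ∈ B, ∀ w ∈ B, a k (cell m v) = a l (cell m w) → k = l ∧ cell m v = cell m w := by
    intro k l v hv w hw hh
    rw [ae k v hv, ae l w hw] at hh
    have := e.injective (Subtype.ext hh)
    simp only [Prod.mk.injEq, Subtype.mk.injEq] at this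
    exact this
  have hVmem : ∀ k, ∀ v ∈ B, sh (tv m (cell m v) (a k (cell m v))) v ∈ VN N := by
    intro k v hv
    have h1 := g.v' v (a k (cell m v))
    have h2 := g.A1 _ (haA k v hv)
    rw [mem_VN]; omega
  let τ : Fin K → {v // v ∈ B} → {v // v ∈ VN N} := fun k v =>
    ⟨sh (tv m (cell m v.1) (a k (cell m v.1))) v.1, hVmem k v.1 v.2⟩
  have hτ : ∀ k l v w, τ k v = τ l w → k = l ∧ v = w := by
    rintro k l ⟨v, hv⟩ ⟨w, hw⟩ hh
    have hh' : sh (tv m (cell m v) (a k (cell m v))) v = sh (tv m (cell m w) (a l (cell m w))) w :=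
      congrArg Subtype.val hh
    have h1 := g.v' v (a k (cell m v))
    have h2 := g.v' w (a l (cell m w))
    have haa : a k (cell m v) = a l (cell m w) := by
      by_contra hne
      have h3 := g.A2 _ (haA k v hv) _ (haA l w hw) hne
      rw [hh'] at h1
      simp only [le_abs] at h3
      omega
    obtain ⟨hk, hc⟩ := hinj k l v hv w hw haa
    refine ⟨hk, Subtype.ext ?_⟩
    rw [haa, hc] at hh'
    simp only [sh, Prod.mk.injEq] at hh'
    rw [Prod.ext_iff]; constructor
    · exact add_right_cancel hh'.1
    · exact add_right_cancel hh'.2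
  set y : {v // v ∈ B} → Vtx → ℝ := fun v => β • yg N M sigv r j (Dp N m (cell m v.1)) v.1 with hy
  set c : {v // v ∈ VN N} → Vtx → ℝ := fun v => β • cofr N M sigv r v.1 with hc
  have s1 : EL N P (fun v : {v // v ∈ B} => β • cofr N M sigv r v.1) ≤ EL N P y
      + (1/t) * (Real.log B.card + t^2 * (β^2 * CR M sigv) / 2) := by
    have := EL_err h (fun v : {v // v ∈ B} => β • cofr N M sigv r v.1) y (β^2 * CR M sigv) t ht (by
      intro v
      simp only [hy]
      rw [← smul_sub, Qf_smul_l, Qf_smul_r, ← mul_assoc, ← pow_two]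
      exact mul_le_mul_of_nonneg_left (g.err sigv v.2) (sq_nonneg _))
    rwa [Fintype.card_coe] at this
  have s2 : ∀ k, EL N P y ≤ EL N P (fun v => c (τ k v)) := by
    intro k
    set y' : {v // v ∈ B} → Vtx → ℝ := fun v => β • yt N M sigv r j m (a k (cell m v.1)) v.1 with hy'
    have hi : ∀ v ∈ B, ∀ w ∈ B, a k (cell m v) = a k (cell m w) → cell m v = cell m w :=
      fun v hv w hw hh => (hinj k k v hv w hw hh).2
    have e1 : EL N P y = EL N P y' := EL_eq h y y' (by
      intro v w
      simp only [hy, hy', Qf_smul_l, Qf_smul_r]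
      rw [g.cov_eq sigv (a k) (haA k) hi v.2 w.2])
    have e2 := EL_orth h y' (fun v => c (τ k v) - y' v) (by
      intro v w
      simp only [hc, hy', τ]
      rw [← smul_sub, Qf_smul_l, Qf_smul_r, g.orth sigv (a k) (haA k) hi v.2 w.2]
      ring)
    rw [e1]
    refine e2.trans (le_of_eq (EL_congr _ _ _ _ fun v => ?_))
    simp
  have s3 : Real.log K + EL N P y ≤ EL N P c := by
    have hK0 : (0:ℝ) < K := by exact_mod_cast hK
    haveI := h.1
    have i1 : ∀ k, Integrable (fun ω => lse (fun v => XX N (c (τ k v)) ω)) P := fun k => lseX_integrable h _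
    calc Real.log K + EL N P y = Real.log K + (1/K) * ∑ _k : Fin K, EL N P y := by
          simp; field_simp
      _ ≤ Real.log K + (1/K) * ∑ k : Fin K, EL N P (fun v => c (τ k v)) := by
          gcongr with k _; exact s2 k
      _ = ∫ ω, (Real.log K + (1/K) * ∑ k, lse (fun v => XX N (c (τ k v)) ω)) ∂P := by
          rw [integral_add (integrable_const _) ((integrable_finsetSum _ fun k _ => i1 k).const_mul _),
            integral_const_mul, integral_finsetSum _ fun k _ => i1 k]
          simp [EL]
      _ ≤ EL N P c := by
          refine integral_mono ((integrable_const _).add ((integrable_finsetSum _ fun k _ => i1 k).const_mul _))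
            (lseX_integrable h c) fun ω => ?_
          exact lse_split K hK τ hτ (fun u => XX N (c u) ω)
  linarith

end ComparePart


noncomputable section AnchorPart
open MeasureTheory ProbabilityTheory

lemma pigeon {α γ : Type*} (A : Finset α) (f : α → γ) (T : Finset γ) (hf : ∀ a ∈ A, f a ∈ T) (n : ℕ)
    (hT : T.card ≤ n) (hn : 1 ≤ n) : ∃ A' ⊆ A, A.card ≤ n * A'.card ∧ ∀ a ∈ A', ∀ b ∈ A', f a = f b := by
  rcases A.eq_empty_or_nonempty with rfl | hA
  · exact ⟨∅, subset_rfl, by simp, by simp⟩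
  obtain ⟨a0, ha0⟩ := hA
  obtain ⟨y, hy, hmax⟩ := Finset.exists_max_image T (fun y => (A.filter (fun a => f a = y)).card) ⟨_, hf a0 ha0⟩
  refine ⟨A.filter (fun a => f a = y), Finset.filter_subset _ _, ?_, ?_⟩
  · rw [Finset.card_eq_sum_card_fiberwise hf]
    calc _ ≤ ∑ _b ∈ T, (A.filter (fun a => f a = y)).card := Finset.sum_le_sum fun b hb => hmax b hb
      _ = T.card * _ := by rw [Finset.sum_const, smul_eq_mul]
      _ ≤ _ := Nat.mul_le_mul_right _ hT
  · intro a ha b hb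
    rw [(Finset.mem_filter.1 ha).2, (Finset.mem_filter.1 hb).2]

lemma col8 (w x y : ℤ) (hw : 1 ≤ w) (h : (x / w) % 8 = (y / w) % 8) :
    |x - y| < w ∨ 7 * w ≤ |x - y| := by
  have h1 := Int.mul_ediv_add_emod x w
  have h2 := Int.mul_ediv_add_emod y w
  have a1 := Int.emod_nonneg x (show w ≠ 0 by omega)
  have a2 := Int.emod_nonneg y (show w ≠ 0 by omega)
  have b1 := Int.emod_lt_of_pos x (show 0 < w by omega)
  have b2 := Int.emod_lt_of_pos y (show 0 < w by omega)
  obtain ⟨k, hk⟩ : ∃ k, x / w = y / w + 8 * k := ⟨x / w / 8 - y / w / 8, by omega⟩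
  rw [hk, mul_add] at h1
  have e : w * (8 * k) = 8 * (w * k) := by ring
  rw [e] at h1
  rw [abs_lt, le_abs]
  rcases lt_trichotomy k 0 with hh | hh | hh
  · right
    have : w * k ≤ -w := by nlinarith
    omega
  · left
    subst hh
    simp at h1
    omega
  · right
    have : w ≤ w * k := by nlinarith
    omega

lemma pig_all (A0 : Finset Vtx) (m : ℤ) (hm : 2 ≤ m) (r : ℕ → ℤ) (j : ℕ)
    (hbig : ∀ i, 1 ≤ i → i ≤ j → 4 * m ≤ r i) :
    ∃ A ⊆ A0, A0.card ≤ 64^j * A.card ∧ ∀ a ∈ A, ∀ b ∈ A, ∀ i, 1 ≤ i → i ≤ j →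
    (|a.1 - b.1| + 2 * m ≤ r i ∧ |a.2 - b.2| + 2 * m ≤ r i) ∨
    (r i + 4 * m ≤ |a.1 - b.1| ∨ r i + 4 * m ≤ |a.2 - b.2|) := by
  induction j with
  | zero => exact ⟨A0, subset_rfl, by simp, by intro a _ b _ i h1 h2; omega⟩
  | succ j ih =>
    obtain ⟨A, hA, hc, hs⟩ := ih (fun i h1 h2 => hbig i h1 (by omega))
    obtain ⟨A', hA', hc', hs'⟩ := pigeon A
      (fun x => ((x.1 / (r (j+1) / 2)) % 8, (x.2 / (r (j+1) / 2)) % 8))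
      (Finset.Ico (0:ℤ) 8 ×ˢ Finset.Ico (0:ℤ) 8) (by
        intro a _
        rw [Finset.mem_product, Finset.mem_Ico, Finset.mem_Ico]
        simp only
        omega) 64 (by simp) (by norm_num)
    refine ⟨A', hA'.trans hA, ?_, ?_⟩
    · calc _ ≤ 64^j * A.card := hc
        _ ≤ 64^j * (64 * A'.card) := Nat.mul_le_mul_left _ hc'
        _ = _ := by ring
    · intro a ha b hb i h1 h2
      rcases Nat.lt_or_ge i (j+1) with h3 | h3
      · exact hs a (hA' ha) b (hA' hb) i h1 (by omega)
      · have hi : i = j + 1 := by omega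
        subst hi
        have h4 := hbig (j+1) h1 h2
        have h5 := hs' a ha b hb
        simp only [Prod.mk.injEq] at h5
        have c1 := col8 _ _ _ (by omega) h5.1
        have c2 := col8 _ _ _ (by omega) h5.2
        omega

lemma anchors0 (N : ℕ) (m : ℤ) (hm : 2 ≤ m) (L' : ℕ) (hL : 4 * m * L' ≤ N) :
    ∃ A : Finset Vtx, A.card = L' * L' ∧
    (∀ a ∈ A, m + 1 ≤ a.1 ∧ a.1 + 2 * m ≤ N ∧ m + 1 ≤ a.2 ∧ a.2 + 2 * m ≤ N) ∧
    (∀ a ∈ A, ∀ b ∈ A, a ≠ b → 4 * m ≤ |a.1 - b.1| ∨ 4 * m ≤ |a.2 - b.2|) := by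
  let f : ℕ × ℕ → Vtx := fun p => (4 * (m * p.1) + m + 1, 4 * (m * p.2) + m + 1)
  have gap : ∀ x y : ℕ, x ≠ y → 4 * m ≤ |(4 * (m * x) + m + 1) - (4 * (m * y) + m + 1)| := by
    intro x y hxy
    rw [le_abs]
    rcases lt_or_gt_of_ne hxy with hh | hh
    · right
      have : (x:ℤ) + 1 ≤ y := by omega
      nlinarith
    · left
      have : (y:ℤ) + 1 ≤ x := by omega
      nlinarith
  have sepf : ∀ p q, p ≠ q → 4 * m ≤ |(f p).1 - (f q).1| ∨ 4 * m ≤ |(f p).2 - (f q).2| := by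
    intro p q hpq
    have : p.1 ≠ q.1 ∨ p.2 ≠ q.2 := by
      by_contra hc; push Not at hc; exact hpq (Prod.ext hc.1 hc.2)
    rcases this with hh | hh
    · left; exact gap _ _ hh
    · right; exact gap _ _ hh
  have finj : Function.Injective f := by
    intro p q hpq
    by_contra hne
    have := sepf p q hne
    rw [hpq] at this
    simp at this
    omega
  refine ⟨(Finset.range L' ×ˢ Finset.range L').image f, ?_, ?_, ?_⟩
  · rw [Finset.card_image_of_injective _ finj]; simp
  · intro a ha
    obtain ⟨p, hp, rfl⟩ := Finset.mem_image.1 ha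
    rw [Finset.mem_product, Finset.mem_range, Finset.mem_range] at hp
    have bd : ∀ x : ℕ, x < L' → 0 ≤ m * x ∧ 4 * (m * x) + 4 * m ≤ N := by
      intro x hx
      have : (x:ℤ) + 1 ≤ L' := by omega
      constructor
      · positivity
      · nlinarith
    have := bd _ hp.1
    have := bd _ hp.2
    simp only [f]
    omega
  · intro a ha b hb hab
    obtain ⟨p, hp, rfl⟩ := Finset.mem_image.1 ha
    obtain ⟨q, hq, rfl⟩ := Finset.mem_image.1 hb
    exact sepf p q (fun h => hab (by rw [h]))

lemma pieces (N : ℕ) (m : ℤ) (hm : 2 ≤ m) (L : ℕ) (hL : (N:ℤ) / m = L) (B : Finset Vtx) (hB : B ⊆ VN N)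
    (hd : ∀ v ∈ B, dep N v < 8 * m) : (B.image (cell m)).card ≤ 34 * (L + 1) := by
  obtain ⟨E, hE⟩ : ∃ E : Finset ℤ, E = Finset.Icc 0 7 ∪ Finset.Icc ((L:ℤ) - 8) L := ⟨_, rfl⟩
  obtain ⟨F, hF⟩ : ∃ F : Finset ℤ, F = Finset.Icc 0 (L:ℤ) := ⟨_, rfl⟩
  have hEc : E.card ≤ 17 := by
    rw [hE]
    refine (Finset.card_union_le _ _).trans ?_
    simp
  have hFc : F.card = L + 1 := by simp [hF]
  have hsub : B.image (cell m) ⊆ (E ×ˢ F) ∪ (F ×ˢ E) := by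
    rw [Finset.subset_iff]
    intro p hp
    rw [Finset.mem_image] at hp
    obtain ⟨v, hv, hpv⟩ := hp
    subst hpv
    have h1 := hB hv
    rw [mem_VN] at h1
    have h2 := hd v hv
    have h3 : ¬ (8 * m ≤ dep N v) := not_le.2 h2
    rw [dep_le] at h3
    have inF : ∀ x : ℤ, 0 ≤ x → x ≤ N → x / m ∈ F := by
      intro x h0 hN
      rw [hF, Finset.mem_Icc, ← hL]
      exact ⟨Int.ediv_nonneg h0 (by omega), Int.ediv_le_ediv (by omega) hN⟩
    have inE : ∀ x : ℤ, 0 ≤ x → x ≤ N → (x < 8 * m ∨ N - x < 8 * m) → x / m ∈ E := by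
      intro x h0 hN hx
      have hf := inF x h0 hN
      rw [hF, Finset.mem_Icc] at hf
      rw [hE, Finset.mem_union, Finset.mem_Icc, Finset.mem_Icc]
      rcases hx with hx | hx
      · left
        refine ⟨hf.1, ?_⟩
        have : x / m < 8 := Int.ediv_lt_of_lt_mul (by omega) hx
        omega
      · right
        refine ⟨?_, hf.2⟩
        have : ((N:ℤ) + (-8) * m) / m ≤ x / m := Int.ediv_le_ediv (by omega) (by omega)
        rw [Int.add_mul_ediv_right _ _ (by omega), hL] at this
        omega
    simp only [cell, Finset.mem_union, Finset.mem_product]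
    by_cases hx : v.1 < 8 * m ∨ N - v.1 < 8 * m
    · left; exact ⟨inE _ h1.1 h1.2.1 hx, inF _ h1.2.2.1 h1.2.2.2⟩
    · right; exact ⟨inF _ h1.1 h1.2.1, inE _ h1.2.2.1 h1.2.2.2 (by omega)⟩
  calc _ ≤ _ := Finset.card_le_card hsub
    _ ≤ _ := Finset.card_union_le _ _
    _ = 2 * (E.card * F.card) := by rw [Finset.card_product, Finset.card_product]; ring
    _ ≤ 2 * (17 * (L+1)) := by rw [hFc]; gcongr
    _ = _ := by ring

lemma exists_A (N : ℕ) (m : ℤ) (hm : 2 ≤ m) (r : ℕ → ℤ) (j K : ℕ) (hK : 1 ≤ K)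
    (hbig : ∀ i, 1 ≤ i → i ≤ j → 4 * m ≤ r i) (hKN : 1088 * 64^j * K * m ≤ N) :
    ∃ A : Finset Vtx, 
    (∀ a ∈ A, m + 1 ≤ a.1 ∧ a.1 + 2 * m ≤ N ∧ m + 1 ≤ a.2 ∧ a.2 + 2 * m ≤ N) ∧
    (∀ a ∈ A, ∀ b ∈ A, a ≠ b → 4 * m ≤ |a.1 - b.1| ∨ 4 * m ≤ |a.2 - b.2|) ∧
    (∀ a ∈ A, ∀ b ∈ A, ∀ i, 1 ≤ i → i ≤ j →
    (|a.1 - b.1| + 2 * m ≤ r i ∧ |a.2 - b.2| + 2 * m ≤ r i) ∨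
    (r i + 4 * m ≤ |a.1 - b.1| ∨ r i + 4 * m ≤ |a.2 - b.2|)) ∧
    ∀ B : Finset Vtx, B ⊆ VN N → (∀ v ∈ B, dep N v < 8 * m) → K * (B.image (cell m)).card ≤ A.card := by
  obtain ⟨L', hL'⟩ : ∃ L' : ℕ, (N:ℤ) / (4 * m) = L' :=
    ⟨((N:ℤ) / (4*m)).toNat, by rw [Int.toNat_of_nonneg (Int.ediv_nonneg (by omega) (by omega))]⟩
  obtain ⟨L, hL⟩ : ∃ L : ℕ, (N:ℤ) / m = L :=
    ⟨((N:ℤ) / m).toNat, by rw [Int.toNat_of_nonneg (Int.ediv_nonneg (by omega) (by omega))]⟩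
  have e1 : 4 * m * L' ≤ N := by rw [← hL']; exact Int.mul_ediv_self_le (by omega)
  have e2 : (N:ℤ) < 4 * m * L' + 4 * m := by
    rw [← hL']; have := Int.lt_mul_ediv_self_add (x := N) (show 0 < 4 * m by omega); linarith
  have e3 : m * L ≤ N := by rw [← hL]; exact Int.mul_ediv_self_le (by omega)
  have hLL : L ≤ 4 * L' + 3 := by
    have : (L:ℤ) < 4 * L' + 4 := by
      by_contra hc
      push Not at hc
      nlinarith
    omega
  have hKL : 272 * 64^j * K ≤ L' := by
    have : (272 * 64^j * K : ℤ) ≤ L' := by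
      rw [← hL', Int.le_ediv_iff_mul_le (by omega)]
      linarith
    exact_mod_cast this
  obtain ⟨A0, hc0, h1, h2⟩ := anchors0 N m hm L' e1
  obtain ⟨A, hA, hc, h3⟩ := pig_all A0 m hm r j hbig
  refine ⟨A, fun a ha => h1 a (hA ha), fun a ha b hb => h2 a (hA ha) b (hA hb), h3, ?_⟩
  intro B hB hd
  have hp := pieces N m hm L hL B hB hd
  have hpos : 0 < 64^j := by positivity
  have hL1 : 1 ≤ L' := le_trans (by nlinarith) hKL
  refine Nat.le_of_mul_le_mul_left ?_ hpos
  calc 64^j * (K * (B.image (cell m)).card) ≤ 64^j * (K * (34 * (L+1))) := by gcongr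
    _ ≤ 64^j * (K * (34 * (8 * L'))) := by gcongr; omega
    _ = (272 * 64^j * K) * L' := by ring
    _ ≤ L' * L' := by gcongr
    _ = A0.card := hc0.symm
    _ ≤ _ := hc

end AnchorPart


noncomputable section LayerPart
open MeasureTheory ProbabilityTheory

def Rl (N : ℕ) (lamv : ℕ → ℝ) (ρ : ℝ) (j : ℕ) : ℤ :=
  if j = 0 then ⌊(N:ℝ)^((1:ℝ)-ρ)⌋ else rad N (lamv j)

def Bc (N : ℕ) (lamv : ℕ → ℝ) (ρ : ℝ) (j : ℕ) (p : Vtx) : Finset Vtx :=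
  (VN N).filter fun v => (rad N (lamv (j+1)) ≤ dep N v ∧ dep N v < Rl N lamv ρ j) ∧
    (cell (Rl N lamv ρ j / 4) v).1 % 4 = p.1 ∧ (cell (Rl N lamv ρ j / 4) v).2 % 4 = p.2

lemma lam_le {M : ℕ} {sigv lamv : ℕ → ℝ} (hp : ScaleParams M sigv lamv) {i k : ℕ} (hik : i ≤ k)
    (hk : k ≤ M) : lamv i ≤ lamv k := by
  induction k with
  | zero => have : i = 0 := by omega
            rw [this]
  | succ k ih =>
    rcases Nat.lt_or_ge k i with h | h
    · have : i = k + 1 := by omega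
      rw [this]
    · exact (ih h (by omega)).trans (hp.2.2.2.2 k (by omega)).le

lemma lam_lt {M : ℕ} {sigv lamv : ℕ → ℝ} (hp : ScaleParams M sigv lamv) {i k : ℕ} (hik : i < k)
    (hk : k ≤ M) : lamv i < lamv k :=
  lt_of_lt_of_le (hp.2.2.2.2 i (by omega)) (lam_le hp hik hk)

lemma rad_mid {M : ℕ} {sigv lamv : ℕ → ℝ} (hp : ScaleParams M sigv lamv) (N : ℕ) {i : ℕ} (h1 : 1 ≤ i)
    (h2 : i < M) : rad N (lamv i) = ⌊(N:ℝ)^((1:ℝ)-lamv i)/2⌋ := by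
  have a := lam_lt hp (show 0 < i by omega) h2.le
  have b := lam_lt hp h2 le_rfl
  rw [hp.2.2.1] at a
  rw [hp.2.2.2.1] at b
  unfold rad
  rw [if_neg a.ne', if_neg b.ne]

lemma rad_anti {M : ℕ} {sigv lamv : ℕ → ℝ} (hp : ScaleParams M sigv lamv) (N : ℕ) (hN : 1 ≤ N) {i k : ℕ}
    (h1 : 1 ≤ i) (hik : i ≤ k) (h2 : k < M) : rad N (lamv k) ≤ rad N (lamv i) := by
  rw [rad_mid hp N h1 (by omega), rad_mid hp N (by omega) h2]
  refine Int.floor_le_floor ?_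
  have hN' : (1:ℝ) ≤ N := by exact_mod_cast hN
  have := Real.rpow_le_rpow_of_exponent_le hN' (show (1:ℝ) - lamv k ≤ 1 - lamv i by
    linarith [lam_le hp hik h2.le])
  linarith

def mu (lamv : ℕ → ℝ) (ρ : ℝ) (j : ℕ) : ℝ := if j = 0 then ρ else lamv j

structure Big (N M : ℕ) (lamv : ℕ → ℝ) (ρ : ℝ) : Prop where
  hN : 1 ≤ N
  a : ∀ j, j < M → 16 ≤ (N:ℝ)^((1:ℝ) - mu lamv ρ j)
  c : ∀ j, j < M → 4 ≤ (N:ℝ)^(lamv (j+1) - mu lamv ρ j)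
  e : 544 * 64^M ≤ (N:ℝ)^(ρ/2)

lemma big_ev {M : ℕ} {sigv lamv : ℕ → ℝ} (hp : ScaleParams M sigv lamv) {ρ : ℝ} (hρ0 : 0 < ρ)
    (hρ1 : ρ < lamv 1) : ∀ᶠ N : ℕ in atTop, Big N M lamv ρ := by
  have tend : ∀ x : ℝ, 0 < x → ∀ C : ℝ, ∀ᶠ N : ℕ in atTop, C ≤ (N:ℝ)^x := fun x hx C =>
    ((tendsto_rpow_atTop hx).comp tendsto_natCast_atTop_atTop).eventually_ge_atTop C
  have m1 : ∀ j, j < M → mu lamv ρ j < lamv (j+1) := by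
    intro j hj
    unfold mu
    split_ifs with h
    · subst h; exact hρ1
    · exact lam_lt hp (by omega) hj
  have m2 : ∀ j, j < M → mu lamv ρ j < 1 := fun j hj => by
    refine (m1 j hj).trans_le ?_
    rw [← hp.2.2.2.1]; exact lam_le hp hj le_rfl
  have h1 : ∀ᶠ N : ℕ in atTop, ∀ j ∈ Finset.range M, 16 ≤ (N:ℝ)^((1:ℝ) - mu lamv ρ j) := by
    rw [Finset.eventually_all]
    intro j hj
    exact tend _ (by linarith [m2 j (Finset.mem_range.1 hj)]) _
  have h2 : ∀ᶠ N : ℕ in atTop, ∀ j ∈ Finset.range M, 4 ≤ (N:ℝ)^(lamv (j+1) - mu lamv ρ j) := by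
    rw [Finset.eventually_all]
    intro j hj
    exact tend _ (by linarith [m1 j (Finset.mem_range.1 hj)]) _
  filter_upwards [h1, h2, tend (ρ/2) (by linarith) (544 * 64^M), eventually_ge_atTop 1] with N a c e hN
  exact ⟨hN, fun j hj => a j (Finset.mem_range.2 hj), fun j hj => c j (Finset.mem_range.2 hj), e⟩

lemma Rl_le {N M : ℕ} {sigv lamv : ℕ → ℝ} (hp : ScaleParams M sigv lamv) {ρ : ℝ}
    {j : ℕ} (hj : j < M) (x : ℤ) (hx : (x:ℝ) ≤ (N:ℝ)^((1:ℝ) - mu lamv ρ j) / 2) : x ≤ Rl N lamv ρ j := by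
  unfold Rl
  unfold mu at hx
  split_ifs at hx ⊢ with h
  · rw [Int.le_floor]
    have : 0 ≤ (N:ℝ)^((1:ℝ) - ρ) := by positivity
    linarith
  · rw [rad_mid hp N (by omega) hj, Int.le_floor]; exact hx

lemma Rl_ub {N M : ℕ} {sigv lamv : ℕ → ℝ} (hp : ScaleParams M sigv lamv) {ρ : ℝ} (hN : 1 ≤ N)
    (hρ1 : ρ < lamv 1) {j : ℕ} (hj : j < M) : (Rl N lamv ρ j : ℝ) ≤ (N:ℝ)^((1:ℝ) - ρ) := by
  have hN' : (1:ℝ) ≤ N := by exact_mod_cast hN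
  unfold Rl
  split_ifs with h
  · exact Int.floor_le _
  · rw [rad_mid hp N (by omega) hj]
    refine (Int.floor_le _).trans ?_
    have l := lam_le hp (show 1 ≤ j by omega) hj.le
    have := Real.rpow_le_rpow_of_exponent_le hN' (show (1:ℝ) - lamv j ≤ 1 - ρ by linarith)
    have : 0 ≤ (N:ℝ)^((1:ℝ) - lamv j) := by positivity
    linarith

lemma class_geo {N M : ℕ} {sigv lamv : ℕ → ℝ} (hp : ScaleParams M sigv lamv) {ρ : ℝ} (hρ0 : 0 < ρ)
    (hρ1 : ρ < lamv 1) (hb : Big N M lamv ρ) {j : ℕ} (hj : j < M) (p : Vtx) :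
    ∃ A, Geo N M (fun i => rad N (lamv i)) j (Rl N lamv ρ j / 4) (Bc N lamv ρ j p) A ∧
      ⌈(N:ℝ)^(ρ/2)⌉₊ * ((Bc N lamv ρ j p).image (cell (Rl N lamv ρ j / 4))).card ≤ A.card := by
  have hN := hb.hN
  have hN' : (1:ℝ) ≤ N := by exact_mod_cast hN
  have hR8 : 8 ≤ Rl N lamv ρ j := Rl_le hp hj 8 (by have := hb.a j hj; push_cast; linarith)
  have hRu := Rl_ub hp hN hρ1 hj
  have hRN : Rl N lamv ρ j ≤ N := by
    have : (N:ℝ)^((1:ℝ) - ρ) ≤ (N:ℝ)^(1:ℝ) := Real.rpow_le_rpow_of_exponent_le hN' (by linarith)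
    rw [Real.rpow_one] at this
    exact_mod_cast hRu.trans this
  have r0 : rad N (lamv 0) = N + 1 := by rw [hp.2.2.1]; simp [rad]
  have hsmall : ∀ i, j < i → i < M → 4 * rad N (lamv i) ≤ Rl N lamv ρ j := by
    intro i h1 h2
    refine le_trans (b := 4 * rad N (lamv (j+1))) ?_ ?_
    · have := rad_anti hp N hN (show 1 ≤ j + 1 by omega) h1 h2; omega
    · refine Rl_le hp hj _ ?_
      rw [rad_mid hp N (by omega) (by omega)]
      push_cast
      have f1 := Int.floor_le ((N:ℝ)^((1:ℝ) - lamv (j+1)) / 2)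
      have f2 := hb.c j hj
      have f3 : (N:ℝ)^((1:ℝ) - mu lamv ρ j)
          = (N:ℝ)^((1:ℝ) - lamv (j+1)) * (N:ℝ)^(lamv (j+1) - mu lamv ρ j) := by
        rw [← Real.rpow_add (by linarith)]; congr 1; ring
      have f4 : 0 ≤ (N:ℝ)^((1:ℝ) - lamv (j+1)) := by positivity
      rw [f3]
      nlinarith
  have hbig : ∀ i, i ≤ j → Rl N lamv ρ j ≤ rad N (lamv i) := by
    intro i hi
    rcases Nat.eq_zero_or_pos i with h0 | h0
    · rw [h0, r0]; omega
    · have : Rl N lamv ρ j = rad N (lamv j) := by unfold Rl; rw [if_neg (by omega)]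
      rw [this]; exact rad_anti hp N hN h0 hi hj
  obtain ⟨A, A1, A2, A3, hA⟩ := exists_A N (Rl N lamv ρ j / 4) (by omega) (fun i => rad N (lamv i)) j
    ⌈(N:ℝ)^(ρ/2)⌉₊ (Nat.one_le_ceil_iff.2 (by positivity)) (fun i _ h2 => by have := hbig i h2; omega) (by
      have c1 : (⌈(N:ℝ)^(ρ/2)⌉₊ : ℝ) ≤ 2 * (N:ℝ)^(ρ/2) := by
        have := Nat.ceil_lt_add_one (show 0 ≤ (N:ℝ)^(ρ/2) by positivity)
        have := Real.one_le_rpow hN' (show 0 ≤ ρ/2 by linarith)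
        linarith
      have c2 : ((Rl N lamv ρ j / 4 : ℤ) : ℝ) ≤ (N:ℝ)^((1:ℝ)-ρ) / 4 := by
        have : 4 * (Rl N lamv ρ j / 4) ≤ Rl N lamv ρ j := by omega
        have : (4:ℝ) * ((Rl N lamv ρ j / 4 : ℤ) : ℝ) ≤ Rl N lamv ρ j := by exact_mod_cast this
        linarith
      have c3 : ((64:ℝ))^j ≤ 64^M := pow_le_pow_right₀ (by norm_num) hj.le
      have c0 : (0:ℝ) ≤ ((Rl N lamv ρ j / 4 : ℤ) : ℝ) := by
        have : 0 ≤ Rl N lamv ρ j / 4 := by omega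
        exact_mod_cast this
      have c4 : (N:ℝ) = (N:ℝ)^((1:ℝ)-ρ) * ((N:ℝ)^(ρ/2) * (N:ℝ)^(ρ/2)) := by
        rw [← Real.rpow_add (by linarith), ← Real.rpow_add (by linarith)]
        conv_lhs => rw [← Real.rpow_one (N:ℝ)]
        congr 1; ring
      have goal : (1088:ℝ) * 64^j * (⌈(N:ℝ)^(ρ/2)⌉₊ : ℝ) * ((Rl N lamv ρ j / 4 : ℤ) : ℝ) ≤ N := by
        calc _ ≤ (1088:ℝ) * 64^M * (2 * (N:ℝ)^(ρ/2)) * ((N:ℝ)^((1:ℝ)-ρ) / 4) := by gcongr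
          _ = (544 * 64^M) * ((N:ℝ)^(ρ/2) * (N:ℝ)^((1:ℝ)-ρ)) := by ring
          _ ≤ (N:ℝ)^(ρ/2) * ((N:ℝ)^(ρ/2) * (N:ℝ)^((1:ℝ)-ρ)) :=
              mul_le_mul_of_nonneg_right hb.e (by positivity)
          _ = (N:ℝ)^((1:ℝ)-ρ) * ((N:ℝ)^(ρ/2) * (N:ℝ)^(ρ/2)) := by ring
          _ = N := c4.symm
      exact_mod_cast goal)
  have hBV : Bc N lamv ρ j p ⊆ VN N := Finset.filter_subset _ _
  have mB : ∀ v ∈ Bc N lamv ρ j p, (rad N (lamv (j+1)) ≤ dep N v ∧ dep N v < Rl N lamv ρ j) ∧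
    (cell (Rl N lamv ρ j / 4) v).1 % 4 = p.1 ∧ (cell (Rl N lamv ρ j / 4) v).2 % 4 = p.2 :=
    fun v hv => (Finset.mem_filter.1 hv).2
  have hd8 : ∀ v ∈ Bc N lamv ρ j p, dep N v < 8 * (Rl N lamv ρ j / 4) := by
    intro v hv; have := mB v hv; omega
  refine ⟨A, ⟨hj, by omega, r0, ?_, ?_, ?_, hBV, hd8, ?_, A1, A2, A3⟩, hA _ hBV hd8⟩
  · intro i hi; have := hbig i hi; omega
  · intro i h1 h2; have := hsmall i h1 h2; omega
  · intro v hv i h1 h2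
    exact (rad_anti hp N hN (show 1 ≤ j + 1 by omega) h1 h2).trans (mB v hv).1.1
  · intro v hv w hw
    have := mB v hv
    have := mB w hw
    omega

lemma cover {N M : ℕ} {sigv lamv : ℕ → ℝ} (hp : ScaleParams M sigv lamv) {ρ : ℝ} 
    (v : Vtx) (hv : v ∈ VN N) (hvA : v ∉ AN N ρ) :
    ∃ j ∈ Finset.range M, ∃ p ∈ Finset.Ico (0:ℤ) 4 ×ˢ Finset.Ico (0:ℤ) 4, v ∈ Bc N lamv ρ j p := by
  have hd0 : 0 ≤ dep N v := by rw [dep_le]; rw [mem_VN] at hv; omega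
  have hR0 : dep N v < Rl N lamv ρ 0 := by
    simp only [AN, Finset.mem_filter, hv, true_and] at hvA
    push Not at hvA
    obtain ⟨z, hz, hlt⟩ := hvA
    have h1 : dep N v + 1 ≤ |v.1 - z.1| ∨ dep N v + 1 ≤ |v.2 - z.2| := by
      have := (dep_le N v (dep N v)).1 le_rfl
      rw [mem_VN] at hz
      simp only [le_abs]
      omega
    have h2 : (dep N v : ℝ) + 1 ≤ Real.sqrt (((v.1 : ℝ) - (z.1 : ℝ)) ^ 2 + ((v.2 : ℝ) - (z.2 : ℝ)) ^ 2) := by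
      have hd0' : (0:ℝ) ≤ dep N v := by exact_mod_cast hd0
      refine Real.le_sqrt_of_sq_le ?_
      rcases h1 with h1 | h1
      · have : (dep N v : ℝ) + 1 ≤ |(v.1:ℝ) - z.1| := by exact_mod_cast h1
        have := pow_le_pow_left₀ (by linarith) this 2
        rw [sq_abs] at this
        nlinarith [sq_nonneg ((v.2 : ℝ) - (z.2 : ℝ))]
      · have : (dep N v : ℝ) + 1 ≤ |(v.2:ℝ) - z.2| := by exact_mod_cast h1
        have := pow_le_pow_left₀ (by linarith) this 2
        rw [sq_abs] at this
        nlinarith [sq_nonneg ((v.1 : ℝ) - (z.1 : ℝ))]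
    have h3 : dep N v + 1 ≤ ⌊(N:ℝ)^((1:ℝ)-ρ)⌋ := by
      rw [Int.le_floor]; push_cast; linarith
    simp only [Rl, if_true]
    omega
  have hex : ∃ j, j < M ∧ dep N v < Rl N lamv ρ j ∧ rad N (lamv (j+1)) ≤ dep N v := by
    by_contra hc
    push Not at hc
    have hall : ∀ j, j < M → dep N v < Rl N lamv ρ j := by
      intro j
      induction j with
      | zero => intro _; exact hR0
      | succ j ih =>
        intro hj
        have := hc j (by omega) (ih (by omega))
        simp only [Rl]; rw [if_neg (by omega)]; exact this
    have hM := hp.1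
    have := hc (M-1) (by omega) (hall (M-1) (by omega))
    rw [show M - 1 + 1 = M by omega, hp.2.2.2.1] at this
    simp [rad] at this
    omega
  obtain ⟨j, hj, h1, h2⟩ := hex
  refine ⟨j, Finset.mem_range.2 hj, ((cell (Rl N lamv ρ j / 4) v).1 % 4, (cell (Rl N lamv ρ j / 4) v).2 % 4), ?_, ?_⟩
  · rw [Finset.mem_product, Finset.mem_Ico, Finset.mem_Ico]; simp only; omega
  · unfold Bc; rw [Finset.mem_filter]; exact ⟨hv, ⟨h2, h1⟩, rfl, rfl⟩

lemma gap_ev {M : ℕ} {sigv lamv : ℕ → ℝ} (hp : ScaleParams M sigv lamv) {ρ : ℝ} (hρ0 : 0 < ρ)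
    (hρ1 : ρ < lamv 1) (β : ℝ) : ∀ᶠ N : ℕ in atTop, ∀ P, GF N P → ∀ j, j < M → ∀ p : Vtx,
    (Bc N lamv ρ j p).Nonempty →
    EL N P (fun v : {v // v ∈ Bc N lamv ρ j p} => β • cof N M sigv lamv v.1) + ρ/4 * Real.log N
      ≤ EL N P (fun v : {v // v ∈ VN N} => β • cof N M sigv lamv v.1) := by
  set t : ℝ := 16 / ρ with ht
  have ht0 : 0 < t := by positivity
  set C1 : ℝ := (1/t) * (2 + t^2 * (β^2 * CR M sigv) / 2) with hC1
  have hlog : ∀ᶠ N : ℕ in atTop, 8 / ρ * C1 ≤ Real.log N :=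
    (Real.tendsto_log_atTop.comp tendsto_natCast_atTop_atTop).eventually_ge_atTop _
  filter_upwards [big_ev hp hρ0 hρ1, hlog] with N hb hl P hP j hj p hne
  obtain ⟨A, g, hA⟩ := class_geo hp hρ0 hρ1 hb hj p
  have hN := hb.hN
  have hN' : (1:ℝ) ≤ N := by exact_mod_cast hN
  have key := compare hP g sigv β t ht0 hne _ (Nat.one_le_ceil_iff.2 (by positivity)) hA
  change EL N P (fun v : {v // v ∈ Bc N lamv ρ j p} => β • cof N M sigv lamv v.1) + _
    ≤ EL N P (fun v : {v // v ∈ VN N} => β • cof N M sigv lamv v.1) + _ at key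
  have k1 : ρ/2 * Real.log N ≤ Real.log (⌈(N:ℝ)^(ρ/2)⌉₊ : ℝ) := by
    rw [← Real.log_rpow (by linarith)]
    exact Real.log_le_log (by positivity) (Nat.le_ceil _)
  have k2 : Real.log ((Bc N lamv ρ j p).card : ℝ) ≤ 2 * Real.log N + 2 := by
    have h1 : (Bc N lamv ρ j p).card ≤ (2 * N)^2 := by
      refine (Finset.card_le_card g.BV).trans ?_
      have : (VN N).card = (N+1) * (N+1) := by
        unfold VN
        rw [Finset.card_Icc_prod]; simp
      rw [this]; nlinarith
    have h2 : ((Bc N lamv ρ j p).card : ℝ) ≤ (2 * N)^2 := by exact_mod_cast h1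
    have h3 : (0:ℝ) < (Bc N lamv ρ j p).card := by exact_mod_cast hne.card_pos
    have h4 := Real.log_le_log h3 h2
    rw [Real.log_pow, Real.log_mul (by norm_num) (by linarith)] at h4
    have := Real.log_two_lt_d9
    push_cast at h4
    linarith
  have k3 : (1/t) * (Real.log ((Bc N lamv ρ j p).card : ℝ) + t^2 * (β^2 * CR M sigv) / 2)
      ≤ ρ/8 * Real.log N + C1 := by
    have : ρ/8 * Real.log N = (1/t) * (2 * Real.log N) := by rw [ht]; field_simp; ring
    rw [this, hC1, ← mul_add]
    refine mul_le_mul_of_nonneg_left ?_ (by positivity)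
    linarith
  have k4 : C1 ≤ ρ/8 * Real.log N := by
    have := mul_le_mul_of_nonneg_left hl (show 0 ≤ ρ/8 by positivity)
    have e : ρ/8 * (8/ρ * C1) = C1 := by field_simp
    linarith
  linarith

end LayerPart

noncomputable section FinalPart
open MeasureTheory ProbabilityTheory

/-- Deterministic comparison of product Gibbs averages. -/
lemma det_cmp {α : Type*} [DecidableEq α] (V A : Finset α) (hAV : A ⊆ V) (hV : V.Nonempty) (w : α → ℝ) (hw : ∀ v, 0 < w v)
    (s : ℕ) (h : (Fin s → α) → ℝ) (C : ℝ) (hC : ∀ vv, |h vv| ≤ C) :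
    |(∑ vv ∈ Fintype.piFinset (fun _ : Fin s => V), (∏ i, w (vv i) / ∑ u ∈ V, w u) * h vv)
      - ∑ vv ∈ Fintype.piFinset (fun _ : Fin s => A), (∏ i, w (vv i) / ∑ u ∈ A, w u) * h vv|
      ≤ 2 * C * s * ((∑ v ∈ V \ A, w v) / ∑ u ∈ V, w u) := by
  have hC0 : 0 ≤ C := by
    obtain ⟨v, hv⟩ := hV
    exact (abs_nonneg _).trans (hC (fun _ => v))
  have hZ : 0 < ∑ u ∈ V, w u := Finset.sum_pos (fun v _ => hw v) hV
  set Z := ∑ u ∈ V, w u with hZd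
  set m := (∑ v ∈ V \ A, w v) / Z with hm
  have hsplit : ∑ v ∈ V \ A, w v + ∑ v ∈ A, w v = Z := Finset.sum_sdiff hAV
  have hZA0 : 0 ≤ ∑ u ∈ A, w u := Finset.sum_nonneg (fun v _ => (hw v).le)
  have hm0 : 0 ≤ m := div_nonneg (Finset.sum_nonneg (fun v _ => (hw v).le)) hZ.le
  have hm1 : (∑ u ∈ A, w u) / Z = 1 - m := by
    rw [hm, ← hsplit]; rw [eq_sub_iff_add_eq, ← add_div, add_comm]
    rw [hsplit]; exact div_self hZ.ne'
  have hmle : m ≤ 1 := by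
    have := div_nonneg hZA0 hZ.le
    linarith
  have t1 : ∑ vv ∈ Fintype.piFinset (fun _ : Fin s => V), (∏ i, w (vv i) / Z) = 1 := by
    have := Finset.prod_univ_sum (fun _ : Fin s => V) (fun _ v => w v / Z)
    rw [← this, ← Finset.sum_div, ← hZd, div_self hZ.ne']; simp
  have t2 : ∑ vv ∈ Fintype.piFinset (fun _ : Fin s => A), (∏ i, w (vv i) / Z) = (1 - m)^s := by
    have := Finset.prod_univ_sum (fun _ : Fin s => A) (fun _ v => w v / Z)
    rw [← this, ← Finset.sum_div, hm1]; simp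
  have bern : 1 - (1 - m)^s ≤ s * m := by
    have := one_add_mul_le_pow (show (-2:ℝ) ≤ -m by linarith) s
    rw [← sub_eq_add_neg] at this
    linarith
  have sub : Fintype.piFinset (fun _ : Fin s => A) ⊆ Fintype.piFinset (fun _ : Fin s => V) :=
    Fintype.piFinset_subset _ _ (fun _ => hAV)
  have pn : ∀ vv : Fin s → α, 0 ≤ ∏ i, w (vv i) / Z := fun vv =>
    Finset.prod_nonneg (fun i _ => (div_pos (hw _) hZ).le)
  have hle : ∀ vv ∈ Fintype.piFinset (fun _ : Fin s => A),
      (∏ i, w (vv i) / Z) ≤ ∏ i, w (vv i) / ∑ u ∈ A, w u := by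
    intro vv hvv
    refine Finset.prod_le_prod (fun i _ => (div_pos (hw _) hZ).le) (fun i _ => ?_)
    have hi : vv i ∈ A := Fintype.mem_piFinset.1 hvv i
    refine div_le_div_of_nonneg_left (hw _).le (Finset.sum_pos (fun v _ => hw v) ⟨_, hi⟩) ?_
    exact Finset.sum_le_sum_of_subset_of_nonneg hAV (fun v _ _ => (hw v).le)
  have t3 : ∑ vv ∈ Fintype.piFinset (fun _ : Fin s => A), (∏ i, w (vv i) / ∑ u ∈ A, w u) ≤ 1 := by
    have := Finset.prod_univ_sum (fun _ : Fin s => A) (fun _ v => w v / ∑ u ∈ A, w u)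
    rw [← this, ← Finset.sum_div]
    refine Finset.prod_le_one (fun i _ => div_nonneg hZA0 hZA0) (fun i _ => div_self_le_one _)
  rw [← Finset.sum_sdiff sub, add_sub_assoc, ← Finset.sum_sub_distrib]
  have e1 : |∑ vv ∈ Fintype.piFinset (fun _ : Fin s => V) \ Fintype.piFinset (fun _ : Fin s => A),
      (∏ i, w (vv i) / Z) * h vv| ≤ C * (1 - (1-m)^s) := by
    have : ∑ vv ∈ Fintype.piFinset (fun _ : Fin s => V) \ Fintype.piFinset (fun _ : Fin s => A),
      (∏ i, w (vv i) / Z) = 1 - (1-m)^s := by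
      have := Finset.sum_sdiff sub (f := fun vv => ∏ i, w (vv i) / Z)
      linarith
    rw [← this, Finset.mul_sum]
    refine (Finset.abs_sum_le_sum_abs _ _).trans (Finset.sum_le_sum fun vv _ => ?_)
    rw [abs_mul, abs_of_nonneg (pn vv), mul_comm]
    exact mul_le_mul_of_nonneg_right (hC vv) (pn vv)
  have e2 : |∑ vv ∈ Fintype.piFinset (fun _ : Fin s => A),
      ((∏ i, w (vv i) / Z) * h vv - (∏ i, w (vv i) / ∑ u ∈ A, w u) * h vv)| ≤ C * (1 - (1-m)^s) := by
    have : C * ∑ vv ∈ Fintype.piFinset (fun _ : Fin s => A),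
      ((∏ i, w (vv i) / ∑ u ∈ A, w u) - (∏ i, w (vv i) / Z)) ≤ C * (1 - (1-m)^s) := by
      refine mul_le_mul_of_nonneg_left ?_ hC0
      rw [Finset.sum_sub_distrib, t2]; linarith
    refine le_trans ?_ this
    rw [Finset.mul_sum]
    refine (Finset.abs_sum_le_sum_abs _ _).trans (Finset.sum_le_sum fun vv hvv => ?_)
    rw [← sub_mul, abs_mul, abs_sub_comm, abs_of_nonneg (sub_nonneg.2 (hle vv hvv)), mul_comm]
    exact mul_le_mul_of_nonneg_right (hC vv) (sub_nonneg.2 (hle vv hvv))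
  have := mul_le_mul_of_nonneg_left bern hC0
  refine (abs_add_le _ _).trans ?_
  nlinarith

lemma biU_le {α κ : Type*} [DecidableEq α] (T : Finset κ) (B : κ → Finset α) (f : α → ℝ)
    (hf : ∀ v, 0 ≤ f v) : ∑ v ∈ T.biUnion B, f v ≤ ∑ t ∈ T, ∑ v ∈ B t, f v := by
  induction T using Finset.induction_on with
  | empty => simp
  | insert a T ha ih =>
    rw [Finset.biUnion_insert, Finset.sum_insert ha]
    have h1 := Finset.sum_union_inter (s₁ := B a) (s₂ := T.biUnion B) (f := f)
    have h2 : 0 ≤ ∑ v ∈ B a ∩ T.biUnion B, f v := Finset.sum_nonneg fun v _ => hf v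
    linarith

def wt (N M : ℕ) (sigv lamv : ℕ → ℝ) (β : ℝ) (v : Vtx) (ω : FieldSp) : ℝ :=
  Real.exp (XX N (β • cof N M sigv lamv v) ω)

lemma wt_pos (N M : ℕ) (sigv lamv : ℕ → ℝ) (β : ℝ) (v : Vtx) (ω : FieldSp) :
    0 < wt N M sigv lamv β v ω := Real.exp_pos _

lemma wt_meas (N M : ℕ) (sigv lamv : ℕ → ℝ) (β : ℝ) (v : Vtx) :
    Measurable (wt N M sigv lamv β v) := (XX_meas _ _).exp

lemma VN_ne (N : ℕ) : (VN N).Nonempty := ⟨(0,0), by rw [mem_VN]; simp⟩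

lemma ratio_int {N M : ℕ} {sigv lamv : ℕ → ℝ} {P : Measure FieldSp} (hP : GF N P) (β : ℝ)
    (B : Finset Vtx) (hB : B ⊆ VN N) :
    Integrable (fun ω => (∑ v ∈ B, wt N M sigv lamv β v ω) / ∑ v ∈ VN N, wt N M sigv lamv β v ω) P := by
  have := hP.1
  refine Integrable.of_bound (C := 1) ?_ (Eventually.of_forall fun ω => ?_)
  · exact ((Finset.measurable_fun_sum _ fun v _ => wt_meas N M sigv lamv β v).div
      (Finset.measurable_fun_sum _ fun v _ => wt_meas N M sigv lamv β v)).aestronglyMeasurable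
  · have h1 : 0 ≤ ∑ v ∈ B, wt N M sigv lamv β v ω := Finset.sum_nonneg fun v _ => (wt_pos ..).le
    have h2 : ∑ v ∈ B, wt N M sigv lamv β v ω ≤ ∑ v ∈ VN N, wt N M sigv lamv β v ω :=
      Finset.sum_le_sum_of_subset_of_nonneg hB fun v _ _ => (wt_pos ..).le
    rw [Real.norm_of_nonneg (div_nonneg h1 (h1.trans h2))]
    exact div_le_one_of_le₀ h2 (h1.trans h2)

lemma mass_B {N M : ℕ} {sigv lamv : ℕ → ℝ} {P : Measure FieldSp} (hP : GF N P) (β : ℝ)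
    (B : Finset Vtx) (hB : B ⊆ VN N) (hne : B.Nonempty) (a V : ℝ) (ha : 0 < a) (hV : 0 < V)
    (hVar : ∀ v, Qf N (β • cof N M sigv lamv v) (β • cof N M sigv lamv v) ≤ V)
    (hgap : EL N P (fun v : {v // v ∈ B} => β • cof N M sigv lamv v.1) + 2 * a
      ≤ EL N P (fun v : {v // v ∈ VN N} => β • cof N M sigv lamv v.1)) :
    ∫ ω, (∑ v ∈ B, wt N M sigv lamv β v ω) / ∑ v ∈ VN N, wt N M sigv lamv β v ω ∂P
      ≤ Real.exp (-a) + 12 * Real.sqrt V / a := by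
  have := hP.1
  have : Nonempty {v // v ∈ B} := hne.to_subtype
  have : Nonempty {v // v ∈ VN N} := (VN_ne N).to_subtype
  set cB := (fun v : {v // v ∈ B} => β • cof N M sigv lamv v.1) with hcB
  set cV := (fun v : {v // v ∈ VN N} => β • cof N M sigv lamv v.1) with hcV
  have iB : Integrable (fun ω => |lse (fun i => XX N (cB i) ω) - EL N P cB|) P :=
    ((lseX_integrable hP cB).sub (integrable_const (EL N P cB))).abs
  have iV : Integrable (fun ω => |lse (fun i => XX N (cV i) ω) - EL N P cV|) P :=
    ((lseX_integrable hP cV).sub (integrable_const (EL N P cV))).abs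
  have iBV : Integrable (fun ω => |lse (fun i => XX N (cB i) ω) - EL N P cB|
      + |lse (fun i => XX N (cV i) ω) - EL N P cV|) P := iB.add iV
  have k1 := conc hP cB V hV (fun i => hVar i.1)
  have k2 := conc hP cV V hV (fun i => hVar i.1)
  have pt : ∀ ω, (∑ v ∈ B, wt N M sigv lamv β v ω) / ∑ v ∈ VN N, wt N M sigv lamv β v ω
      ≤ Real.exp (-a) + (|lse (fun i => XX N (cB i) ω) - EL N P cB| + |lse (fun i => XX N (cV i) ω) - EL N P cV|) / a := by
    intro ω
    have h1 : 0 < ∑ v ∈ B, wt N M sigv lamv β v ω := Finset.sum_pos (fun v _ => wt_pos ..) hne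
    have h2 : ∑ v ∈ B, wt N M sigv lamv β v ω ≤ ∑ v ∈ VN N, wt N M sigv lamv β v ω :=
      Finset.sum_le_sum_of_subset_of_nonneg hB fun v _ _ => (wt_pos ..).le
    have lB : lse (fun i => XX N (cB i) ω) = Real.log (∑ v ∈ B, wt N M sigv lamv β v ω) := by
      unfold lse
      rw [← Finset.sum_coe_sort B (fun v => wt N M sigv lamv β v ω)]; rfl
    have lV : lse (fun i => XX N (cV i) ω) = Real.log (∑ v ∈ VN N, wt N M sigv lamv β v ω) := by
      unfold lse
      rw [← Finset.sum_coe_sort (VN N) (fun v => wt N M sigv lamv β v ω)]; rfl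
    have hr : (∑ v ∈ B, wt N M sigv lamv β v ω) / ∑ v ∈ VN N, wt N M sigv lamv β v ω
      = Real.exp (lse (fun i => XX N (cB i) ω) - lse (fun i => XX N (cV i) ω)) := by
      rw [Real.exp_sub, lB, lV, Real.exp_log h1, Real.exp_log (h1.trans_le h2)]
    have hle1 : (∑ v ∈ B, wt N M sigv lamv β v ω) / ∑ v ∈ VN N, wt N M sigv lamv β v ω ≤ 1 :=
      div_le_one_of_le₀ h2 (h1.le.trans h2)
    set x := lse (fun i => XX N (cB i) ω)
    set y := lse (fun i => XX N (cV i) ω)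
    have n1 := abs_nonneg (x - EL N P cB)
    have n2 := abs_nonneg (y - EL N P cV)
    by_cases hx : x - y ≤ -a
    · rw [hr]
      have := Real.exp_le_exp.2 hx
      have : 0 ≤ (|x - EL N P cB| + |y - EL N P cV|) / a := by positivity
      linarith
    · push Not at hx
      have q1 := le_abs_self (x - EL N P cB)
      have q2 := neg_abs_le (y - EL N P cV)
      have : 1 ≤ (|x - EL N P cB| + |y - EL N P cV|) / a := by
        rw [le_div_iff₀ ha]; linarith
      have := Real.exp_pos (-a)
      linarith
  have ii : Integrable (fun ω => Real.exp (-a) + (|lse (fun i => XX N (cB i) ω) - EL N P cB| + |lse (fun i => XX N (cV i) ω) - EL N P cV|) / a) P :=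
    (integrable_const _).add (iBV.div_const a)
  refine (integral_mono (ratio_int hP β B hB) ii pt).trans ?_
  rw [integral_add (integrable_const _) (iBV.div_const a), integral_div]
  have : ∫ ω, (|lse (fun i => XX N (cB i) ω) - EL N P cB| + |lse (fun i => XX N (cV i) ω) - EL N P cV|) ∂P ≤ 12 * Real.sqrt V := by
    have e := integral_add iB iV
    linarith [e.le]
  simp only [integral_const, probReal_univ, one_smul]
  gcongr

lemma mass_ev {M : ℕ} {sigv lamv : ℕ → ℝ} (hp : ScaleParams M sigv lamv) {ρ : ℝ} (hρ0 : 0 < ρ)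
    (hρ1 : ρ < lamv 1) (β : ℝ) : ∃ b : ℕ → ℝ, Tendsto b atTop (nhds 0) ∧
    ∀ᶠ N : ℕ in atTop, ∀ P, GF N P →
    ∫ ω, (∑ v ∈ VN N \ AN N ρ, wt N M sigv lamv β v ω) / ∑ v ∈ VN N, wt N M sigv lamv β v ω ∂P ≤ b N := by
  set K : ℝ := β^2 * (M * ∑ i ∈ Finset.range M, (kap sigv i)^2) with hK
  have hK0 : 0 ≤ K := by
    have : 0 ≤ ∑ i ∈ Finset.range M, (kap sigv i)^2 := Finset.sum_nonneg fun i _ => sq_nonneg _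
    positivity
  let Vf : ℝ → ℝ := fun l => K * (4 * l + 8) + 1
  let bb : ℝ → ℝ := fun l => (M * 16) * (Real.exp (-(ρ/8*l)) + 12 * Real.sqrt (Vf l) / (ρ/8*l))
  have hlog : Tendsto (fun N : ℕ => Real.log (N:ℝ)) atTop atTop :=
    Real.tendsto_log_atTop.comp tendsto_natCast_atTop_atTop
  refine ⟨fun N => bb (Real.log N), ?_, ?_⟩
  · refine Tendsto.comp (g := bb) (y := atTop) ?_ hlog
    have e1 : Tendsto (fun l : ℝ => Real.exp (-(ρ/8*l))) atTop (nhds 0) :=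
      Real.tendsto_exp_neg_atTop_nhds_zero.comp (tendsto_id.const_mul_atTop (by positivity))
    have e2 : Tendsto (fun l : ℝ => 12 * Real.sqrt (Vf l) / (ρ/8*l)) atTop (nhds 0) := by
      have u : Tendsto (fun l : ℝ => 12 * Real.sqrt (12 * K + 1) * (8/ρ) * (Real.sqrt l)⁻¹) atTop (nhds 0) := by
        have := (tendsto_inv_atTop_zero.comp Real.tendsto_sqrt_atTop).const_mul (12 * Real.sqrt (12 * K + 1) * (8/ρ))
        simpa using this
      refine squeeze_zero' ?_ ?_ u
      · filter_upwards [eventually_ge_atTop (1:ℝ)] with l hl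
        positivity
      · filter_upwards [eventually_ge_atTop (1:ℝ)] with l hl
        have : Real.sqrt (Vf l) ≤ Real.sqrt (12 * K + 1) * Real.sqrt l := by
          rw [← Real.sqrt_mul (by positivity)]
          refine Real.sqrt_le_sqrt ?_
          show K * (4 * l + 8) + 1 ≤ _
          nlinarith
        have hs : 0 < Real.sqrt l := Real.sqrt_pos.2 (by linarith)
        have hl2 : l = Real.sqrt l * Real.sqrt l := (Real.mul_self_sqrt (by linarith)).symm
        rw [div_le_iff₀ (by positivity)]
        have : 12 * Real.sqrt (12 * K + 1) * (8/ρ) * (Real.sqrt l)⁻¹ * (ρ/8*l) = 12 * (Real.sqrt (12 * K + 1) * Real.sqrt l) := by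
          conv_lhs => rw [hl2]
          have : (√(√l * √l)) = √l := by rw [← hl2]
          rw [this]
          field_simp
        rw [this]; linarith
    have := (e1.add e2).const_mul ((M:ℝ) * 16)
    simpa [bb] using this
  · filter_upwards [gap_ev hp hρ0 hρ1 β, eventually_ge_atTop 1, hlog.eventually_ge_atTop 1] with N hg hN1 hl P hP
    have hVar : ∀ v, Qf N (β • cof N M sigv lamv v) (β • cof N M sigv lamv v) ≤ Vf (Real.log N) := by
      intro v
      rw [Qf_smul_l, Qf_smul_r]
      have := cof_var N M hN1 sigv (fun i => rad N (lamv i)) v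
      have := mul_le_mul_of_nonneg_left this (sq_nonneg β)
      show _ ≤ K * (4 * Real.log N + 8) + 1
      rw [hK]
      change β^2 * Qf N (cof N M sigv lamv v) (cof N M sigv lamv v) ≤ _ at this
      nlinarith
    have hV0 : 0 < Vf (Real.log N) := by
      show 0 < K * (4 * Real.log N + 8) + 1
      positivity
    set T := Finset.range M ×ˢ (Finset.Ico (0:ℤ) 4 ×ˢ Finset.Ico (0:ℤ) 4) with hT
    have hBV : ∀ j p, Bc N lamv ρ j p ⊆ VN N := fun j p => Finset.filter_subset _ _
    have pt : ∀ ω, (∑ v ∈ VN N \ AN N ρ, wt N M sigv lamv β v ω) / ∑ v ∈ VN N, wt N M sigv lamv β v ω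
       ≤ ∑ t ∈ T, (∑ v ∈ Bc N lamv ρ t.1 t.2, wt N M sigv lamv β v ω) / ∑ v ∈ VN N, wt N M sigv lamv β v ω := by
      intro ω
      rw [← Finset.sum_div]
      refine div_le_div_of_nonneg_right ?_ (Finset.sum_nonneg fun v _ => (wt_pos ..).le)
      have hs : VN N \ AN N ρ ⊆ T.biUnion (fun t => Bc N lamv ρ t.1 t.2) := by
        intro v hv
        rw [Finset.mem_sdiff] at hv
        obtain ⟨j, hj, p, hpp, hv⟩ := cover hp v hv.1 hv.2
        exact Finset.mem_biUnion.2 ⟨(j, p), Finset.mk_mem_product hj hpp, hv⟩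
      refine (Finset.sum_le_sum_of_subset_of_nonneg hs fun v _ _ => (wt_pos ..).le).trans ?_
      exact biU_le T _ _ fun v => (wt_pos ..).le
    refine (integral_mono (ratio_int hP β _ Finset.sdiff_subset)
      (integrable_finsetSum _ fun t _ => ratio_int hP β _ (hBV t.1 t.2)) pt).trans ?_
    rw [integral_finsetSum _ fun t _ => ratio_int hP β _ (hBV t.1 t.2)]
    have : ∀ t ∈ T, ∫ ω, (∑ v ∈ Bc N lamv ρ t.1 t.2, wt N M sigv lamv β v ω) / ∑ v ∈ VN N, wt N M sigv lamv β v ω ∂P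
       ≤ (Real.exp (-(ρ/8*Real.log N)) + 12 * Real.sqrt (Vf (Real.log N)) / (ρ/8*Real.log N)) := by
      intro t ht
      rcases (Bc N lamv ρ t.1 t.2).eq_empty_or_nonempty with he | hne
      · rw [he]; simp; positivity
      · refine mass_B hP β _ (hBV _ _) hne _ _ (by positivity) hV0 hVar ?_
        have := hg P hP t.1 (Finset.mem_range.1 (Finset.mem_product.1 ht).1) t.2 hne
        linarith
    refine (Finset.sum_le_card_nsmul _ _ _ this).trans ?_
    have hc : T.card = M * 16 := by rw [hT]; simp
    rw [hc, nsmul_eq_mul]; push_cast; exact le_rfl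

lemma gibbs_int {N M : ℕ} {sigv lamv : ℕ → ℝ} {P : Measure FieldSp} (hP : GF N P) (β : ℝ)
    (B : Finset Vtx) (s : ℕ) (h : (Fin s → Vtx) → ℝ) :
    Integrable (fun ω => ∑ vv ∈ Fintype.piFinset (fun _ : Fin s => B),
      (∏ i, wt N M sigv lamv β (vv i) ω / ∑ u ∈ B, wt N M sigv lamv β u ω) * h vv) P := by
  have := hP.1
  refine integrable_finsetSum _ fun vv hvv => ?_
  refine Integrable.mul_const ?_ _
  refine Integrable.of_bound (C := 1) ?_ (Eventually.of_forall fun ω => ?_)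
  · refine (Finset.measurable_fun_prod _ fun i _ => ?_).aestronglyMeasurable
    exact (wt_meas ..).div (Finset.measurable_fun_sum _ fun v _ => wt_meas N M sigv lamv β v)
  · have h0 : ∀ i, 0 ≤ wt N M sigv lamv β (vv i) ω / ∑ u ∈ B, wt N M sigv lamv β u ω := fun i =>
      div_nonneg (wt_pos ..).le (Finset.sum_nonneg fun v _ => (wt_pos ..).le)
    rw [Real.norm_of_nonneg (Finset.prod_nonneg fun i _ => h0 i)]
    refine Finset.prod_le_one (fun i _ => h0 i) fun i _ => ?_
    refine div_le_one_of_le₀ ?_ (Finset.sum_nonneg fun v _ => (wt_pos ..).le)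
    exact Finset.single_le_sum (f := fun u => wt N M sigv lamv β u ω) (fun v _ => (wt_pos ..).le)
      (Fintype.mem_piFinset.1 hvv i)

lemma exp_eq {N M : ℕ} {sigv lamv : ℕ → ℝ} (hp : ScaleParams M sigv lamv) {P : Measure FieldSp}
    (hP : GF N P) (β : ℝ) : ∀ᵐ ω ∂P, ∀ v ∈ VN N,
      Real.exp (β * psiFld N M sigv lamv P v ω) = wt N M sigv lamv β v ω := by
  refine (Finset.eventually_all (VN N)).2 fun v hv => ?_
  filter_upwards [psi_eq hp hP v hv] with ω hω
  rw [hω, wt, XX_smul]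

lemma final {M : ℕ} {sigv lamv : ℕ → ℝ} (hp : ScaleParams M sigv lamv)
    (P : ℕ → Measure FieldSp) (hGFF : ∀ N, IsGFF N (P N))
    (β ρ : ℝ) (hρ0 : 0 < ρ) (hρ1 : ρ < lamv 1)
    (s : ℕ) (h : ℕ → (Fin s → Vtx) → ℝ) (C : ℝ) (hC : ∀ N vv, |h N vv| ≤ C) :
    Filter.Tendsto (fun N =>
        |gibbsExp N M sigv lamv (P N) β s (h N) -
          gibbsExpRes N M sigv lamv (P N) β ρ s (fun vv _ => h N vv)|)
      Filter.atTop (nhds 0) := by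
  obtain ⟨b, hb, hev⟩ := mass_ev hp hρ0 hρ1 β
  have hb2 : Tendsto (fun N => 2 * C * s * b N) atTop (nhds 0) := by
    simpa using hb.const_mul (2 * C * s)
  refine squeeze_zero' (Eventually.of_forall fun N => abs_nonneg _) ?_ hb2
  filter_upwards [hev] with N hN
  have hP := GF_of N (P N) (hGFF N)
  have hC0 : 0 ≤ C := (abs_nonneg _).trans (hC N (fun _ => 0))
  have hAV : AN N ρ ⊆ VN N := Finset.filter_subset _ _
  have g1 : gibbsExp N M sigv lamv (P N) β s (h N) =
      ∫ ω, ∑ vv ∈ Fintype.piFinset (fun _ : Fin s => VN N),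
      (∏ i, wt N M sigv lamv β (vv i) ω / ∑ u ∈ VN N, wt N M sigv lamv β u ω) * h N vv ∂(P N) := by
    unfold gibbsExp
    refine integral_congr_ae ?_
    filter_upwards [exp_eq hp hP β] with ω hω
    refine Finset.sum_congr rfl fun vv hvv => ?_
    congr 1
    refine Finset.prod_congr rfl fun i _ => ?_
    unfold gibbsW ZN
    rw [hω _ (Fintype.mem_piFinset.1 hvv i), Finset.sum_congr rfl hω]
  have g2 : gibbsExpRes N M sigv lamv (P N) β ρ s (fun vv _ => h N vv) =
      ∫ ω, ∑ vv ∈ Fintype.piFinset (fun _ : Fin s => AN N ρ),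
      (∏ i, wt N M sigv lamv β (vv i) ω / ∑ u ∈ AN N ρ, wt N M sigv lamv β u ω) * h N vv ∂(P N) := by
    unfold gibbsExpRes
    refine integral_congr_ae ?_
    filter_upwards [exp_eq hp hP β] with ω hω
    refine Finset.sum_congr rfl fun vv hvv => ?_
    congr 1
    refine Finset.prod_congr rfl fun i _ => ?_
    unfold gibbsWres ZNres
    rw [hω _ (hAV (Fintype.mem_piFinset.1 hvv i)), Finset.sum_congr rfl fun v hv => hω v (hAV hv)]
  rw [g1, g2, ← integral_sub (gibbs_int hP β _ s _) (gibbs_int hP β _ s _)]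
  refine abs_integral_le_integral_abs.trans ?_
  refine (integral_mono ((gibbs_int hP β _ s _).sub (gibbs_int hP β _ s _)).abs
    ((ratio_int hP β _ Finset.sdiff_subset).const_mul (2 * C * s))
    (fun ω => det_cmp (VN N) (AN N ρ) hAV (VN_ne N) (fun v => wt N M sigv lamv β v ω)
      (fun v => wt_pos ..) s (h N) C (hC N))).trans ?_
  rw [integral_const_mul]
  exact mul_le_mul_of_nonneg_left (hN _ hP) (by positivity)

end FinalPart


/-- **Proposition (Full and restricted Gibbs averages agree in the limit).**
Let `β > 0` and `ρ ∈ (0,λ_1)`. For every `s ∈ ℕ` and every uniformly bounded family of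
functions `h : V_N^s → ℝ`,
`lim_{N→∞} |E𝒢_{β,N}^{×s}[h(v)] − E𝒢_{β,N,ρ}^{×s}[h(v)]| = 0`. -/
theorem product_gibbs_near_boundary
    (M : ℕ) (sigv lamv : ℕ → ℝ) (hparams : ScaleParams M sigv lamv)
    (P : ℕ → MeasureTheory.Measure FieldSp) (hGFF : ∀ N, IsGFF N (P N))
    (β ρ : ℝ) (hβ : 0 < β) (hρ0 : 0 < ρ) (hρ1 : ρ < lamv 1)
    (s : ℕ) (h : ℕ → (Fin s → Vtx) → ℝ) (C : ℝ) (hC : ∀ N vv, |h N vv| ≤ C) :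
    Filter.Tendsto (fun N =>
        |gibbsExp N M sigv lamv (P N) β s (h N) -
          gibbsExpRes N M sigv lamv (P N) β ρ s (fun vv _ => h N vv)|)
      Filter.atTop (nhds 0) := by
  exact final hparams P hGFF β ρ hρ0 hρ1 s h C hC
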